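/- Proposition 5.1 (confluence of critical kernels as ν_{m+1},…,ν_r → ∞). Fix 0 ≤ m < r, ν₀,…,ν_m ∈ ℕ, τ ∈ ℝ and x, y > 0. For n ∈ ℕ let ν_{m+1}(n),…,ν_r(n) be positive integers each tending to ∞ as n → ∞, and set c_n := ∏_{l=m+1}^r ν_l(n). Then c_n · 𝒦^{[ν₀,…,ν_m,ν_{m+1}(n),…,ν_r(n)]}(c_n x, c_n y; τ) → 𝒦^{[ν₀,…,ν_m]}(x, y; τ) as n → ∞. -/

import Mathlib

open MeasureTheory Filter Topology

noncomputable section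


/-- Pochhammer symbol `(a)_j` over `ℝ`. -/
def poch (a : ℝ) (j : ℕ) : ℝ := ∏ i ∈ Finset.range j, (a + i)

/-- The hypergeometric function `₀F₁(b; z)` for complex argument `z`. -/
def hyp0F1 (b : ℝ) (z : ℂ) : ℂ :=
  ∑' k : ℕ, (Real.Gamma b : ℂ) * z ^ k /
    ((Nat.factorial k : ℂ) * (Real.Gamma (b + k) : ℂ))

/-- The hypergeometric function `₀F₁(b; z)` for real argument `z`. -/
def hyp0F1R (b z : ℝ) : ℝ :=
  ∑' k : ℕ, Real.Gamma b * z ^ k / (Nat.factorial k * Real.Gamma (b + k))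

/-- The terminating hypergeometric sum `₁F₁(-k; b; u)`. -/
def hyp1F1T (k : ℕ) (b u : ℝ) : ℝ :=
  ∑ j ∈ Finset.range (k + 1),
    poch (-(k : ℝ)) j / (poch b j * Nat.factorial j) * u ^ j

/-- The function `Ψ(u;x)` of the paper. -/
def Psi (r ν0 : ℕ) (ν : Fin r → ℕ) (u x : ℝ) : ℝ :=
  (1 / Real.Gamma ((ν0 : ℝ) + 1)) *
    ∑' k : ℕ, x ^ k / Nat.factorial k * hyp1F1T k ((ν0 : ℝ) + 1) u *
      ∏ l, 1 / Real.Gamma ((ν l : ℝ) + 1 + k)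

/-- The positive orthant in `ℝ^r`. -/
def posOrth (r : ℕ) : Set (Fin r → ℝ) := {t | ∀ i, 0 < t i}

/-- The function `Φ(v;y)` of the paper, complex `v`. -/
def Phi (r ν0 : ℕ) (ν : Fin r → ℕ) (v : ℂ) (y : ℝ) : ℂ :=
  ((1 / Real.Gamma ((ν0 : ℝ) + 1) : ℝ) : ℂ) *
    ∫ t in posOrth r,
      (((∏ i, (t i) ^ ((ν i : ℝ) - 1) * Real.exp (-t i)) *
          (y / ∏ i, t i) ^ ν0 * Real.exp (-(y / ∏ i, t i)) : ℝ) : ℂ) *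
        hyp0F1 ((ν0 : ℝ) + 1) (-(v * ((y / ∏ i, t i : ℝ) : ℂ)))

/-- The function `Φ(v;y)` of the paper, real `v`. -/
def PhiR (r ν0 : ℕ) (ν : Fin r → ℕ) (v y : ℝ) : ℝ :=
  (1 / Real.Gamma ((ν0 : ℝ) + 1)) *
    ∫ t in posOrth r,
      ((∏ i, (t i) ^ ((ν i : ℝ) - 1) * Real.exp (-t i)) *
          (y / ∏ i, t i) ^ ν0 * Real.exp (-(y / ∏ i, t i))) *
        hyp0F1R ((ν0 : ℝ) + 1) (-(v * (y / ∏ i, t i)))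

/-- The double-contour-integral correlation kernel `K_N(x,y)` of Proposition 2.1,
with `C` the counterclockwise circle of center `c` and radius `R`. -/
def KN (r ν0 N : ℕ) (ν : Fin r → ℕ) (a : Fin N → ℝ) (c : ℂ) (R : ℝ) (x y : ℝ) : ℂ :=
  ∫ u in Set.Ioi (0 : ℝ),
    (2 * Real.pi * Complex.I)⁻¹ *
      ∮ v in C(c, R),
        (u : ℂ) ^ ν0 * Complex.exp (-(u : ℂ) + v) * ((Psi r ν0 ν u x : ℝ) : ℂ) *
          Phi r ν0 ν v y * ((u : ℂ) - v)⁻¹ * ∏ l, ((u : ℂ) + (a l : ℂ)) / (v + (a l : ℂ))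

/-- An admissible contour for `K_N`: a counterclockwise circle contained in the left
half-plane which encloses all the points `-a l`. -/
def AdmCircle (N : ℕ) (a : Fin N → ℝ) (c : ℂ) (R : ℝ) : Prop :=
  0 < R ∧ c.re + R < 0 ∧ ∀ l, ‖-(a l : ℂ) - c‖ < R

/-- The Meijer G-function `G^{1,0}_{0,r+2}(—;0,-ν₀,…,-ν_r | z)`, complex argument. -/
def G1 (r ν0 : ℕ) (ν : Fin r → ℕ) (z : ℂ) : ℂ :=
  ∑' k : ℕ, (-z) ^ k /
    ((Nat.factorial k : ℂ) * (Real.Gamma ((ν0 : ℝ) + 1 + k) : ℂ) *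
      ∏ l, (Real.Gamma ((ν l : ℝ) + 1 + k) : ℂ))

/-- The Meijer G-function `G^{1,0}_{0,r+2}(—;0,-ν₀,…,-ν_r | z)`, real argument. -/
def G1R (r ν0 : ℕ) (ν : Fin r → ℕ) (z : ℝ) : ℝ :=
  ∑' k : ℕ, (-z) ^ k /
    (Nat.factorial k * Real.Gamma ((ν0 : ℝ) + 1 + k) *
      ∏ l, Real.Gamma ((ν l : ℝ) + 1 + k))

/-- `g₀(w) = ∑ (-1)^k w^{ν₀+k}/(k! Γ(ν₀+k+1))`, complex argument. -/
def g0C (ν0 : ℕ) (w : ℂ) : ℂ :=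
  ∑' k : ℕ, (-1 : ℂ) ^ k * w ^ (ν0 + k) /
    ((Nat.factorial k : ℂ) * (Real.Gamma ((ν0 : ℝ) + k + 1) : ℂ))

/-- `g₀(w)`, real argument. -/
def g0R (ν0 : ℕ) (w : ℝ) : ℝ :=
  ∑' k : ℕ, (-1 : ℝ) ^ k * w ^ (ν0 + k) /
    (Nat.factorial k * Real.Gamma ((ν0 : ℝ) + k + 1))

/-- The Meijer G-function `G^{r+1,0}_{0,r+2}(—;ν₀,…,ν_r,0 | z)` for `z > 0`, real form. -/
def G2R (r ν0 : ℕ) (ν : Fin r → ℕ) (z : ℝ) : ℝ :=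
  ∫ t in posOrth r,
    (∏ l, (t l) ^ ((ν l : ℝ) - 1) * Real.exp (-t l)) * g0R ν0 (z / ∏ l, t l)

/-- The critical hard-edge kernel `𝒦^{h,r}(ξ,η;τ)` of Theorem 1.2, the inner integral
running up the imaginary axis `v = i t`. -/
def Kcrit (r ν0 : ℕ) (ν : Fin r → ℕ) (G2 : ℂ → ℂ) (τ ξ η : ℝ) : ℂ :=
  (2 * Real.pi * Complex.I)⁻¹ *
    ∫ u in Set.Ioi (0 : ℝ), ∫ t : ℝ,
      ((u : ℂ) / (Complex.I * t)) ^ ν0 *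
        Complex.exp (-(τ : ℂ) * u - (u : ℂ) ^ 2 / 2 + (τ : ℂ) * (Complex.I * t) +
          (Complex.I * t) ^ 2 / 2) *
        ((u : ℂ) - Complex.I * t)⁻¹ * G1 r ν0 ν ((u * ξ : ℝ) : ℂ) *
        G2 (Complex.I * t * (η : ℂ)) * Complex.I

/-- The deformed critical kernel `𝒦^{h,r}_m(ξ,η;τ,σ)` of Theorem 1.3, the inner integral
running up the vertical line `Re v = -c`. -/
def KcritLine (r ν0 m : ℕ) (ν : Fin r → ℕ) (σ : ℕ → ℝ) (G2 : ℂ → ℂ) (c τ ξ η : ℝ) : ℂ :=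
  (2 * Real.pi * Complex.I)⁻¹ *
    ∫ u in Set.Ioi (0 : ℝ), ∫ t : ℝ,
      ((u : ℂ) / (-(c : ℂ) + Complex.I * t)) ^ ν0 *
        Complex.exp (-(τ : ℂ) * u - (u : ℂ) ^ 2 / 2 +
          (τ : ℂ) * (-(c : ℂ) + Complex.I * t) + (-(c : ℂ) + Complex.I * t) ^ 2 / 2) *
        ((u : ℂ) - (-(c : ℂ) + Complex.I * t))⁻¹ *
        (∏ j ∈ Finset.range m,
          ((u : ℂ) + (σ j : ℂ)) / ((-(c : ℂ) + Complex.I * t) + (σ j : ℂ))) *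
        G1 r ν0 ν ((u * ξ : ℝ) : ℂ) * G2 ((-(c : ℂ) + Complex.I * t) * (η : ℂ)) * Complex.I




/-- `Ψ(u;x)` in the case `r = 0`. -/
def Psi0 (ν0 : ℕ) (u x : ℝ) : ℝ :=
  Real.exp x * hyp0F1R ((ν0 : ℝ) + 1) (-(u * x)) / Real.Gamma ((ν0 : ℝ) + 1)

/-- `Φ(v;y)` in the case `r = 0`, complex `v`. -/
def Phi0 (ν0 : ℕ) (v : ℂ) (y : ℝ) : ℂ :=
  ((y ^ ν0 * Real.exp (-y) / Real.Gamma ((ν0 : ℝ) + 1) : ℝ) : ℂ) *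
    hyp0F1 ((ν0 : ℝ) + 1) (-(v * (y : ℂ)))

/-- The kernel `K_N` in the case `r = 0`. -/
def KN0 (ν0 N : ℕ) (a : Fin N → ℝ) (c : ℂ) (R : ℝ) (x y : ℝ) : ℂ :=
  ∫ u in Set.Ioi (0 : ℝ),
    (2 * Real.pi * Complex.I)⁻¹ *
      ∮ v in C(c, R),
        (u : ℂ) ^ ν0 * Complex.exp (-(u : ℂ) + v) * ((Psi0 ν0 u x : ℝ) : ℂ) *
          Phi0 ν0 v y * ((u : ℂ) - v)⁻¹ * ∏ l, ((u : ℂ) + (a l : ℂ)) / (v + (a l : ℂ))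

/-- Laguerre polynomial `L_n^{ν}(x)`. -/
def laguerreL (n νp : ℕ) (x : ℝ) : ℝ :=
  ∑ k ∈ Finset.range (n + 1),
    (-1 : ℝ) ^ k * (Nat.choose (n + νp) (n - k)) * x ^ k / Nat.factorial k

/-- The function `Ψ^{(μ)}(u;x)` of Section 4. -/
def PsiMu (r ν0 : ℕ) (μ ν : Fin r → ℕ) (u x : ℝ) : ℝ :=
  (1 / Real.Gamma ((ν0 : ℝ) + 1)) *
    ∑' k : ℕ, x ^ k / Nat.factorial k * hyp1F1T k ((ν0 : ℝ) + 1) u *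
      ∏ l, Real.Gamma ((μ l : ℝ) + 1 + k) / Real.Gamma ((ν l : ℝ) + 1 + k)

/-- The open unit cube in `ℝ^r`. -/
def unitCube (r : ℕ) : Set (Fin r → ℝ) := {t | ∀ i, 0 < t i ∧ t i < 1}

/-- The function `Φ^{(μ)}(v;y)` of Section 4, complex `v`. -/
def PhiMu (r ν0 : ℕ) (μ ν : Fin r → ℕ) (v : ℂ) (y : ℝ) : ℂ :=
  ((1 / (Real.Gamma ((ν0 : ℝ) + 1) * ∏ l, Real.Gamma ((μ l : ℝ) - (ν l : ℝ))) : ℝ) : ℂ) *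
    ∫ t in unitCube r,
      (((∏ l, (t l) ^ ((ν l : ℝ) - 1) * (1 - t l) ^ ((μ l : ℝ) - (ν l : ℝ) - 1)) *
          (y / ∏ l, t l) ^ ν0 * Real.exp (-(y / ∏ l, t l)) : ℝ) : ℂ) *
        hyp0F1 ((ν0 : ℝ) + 1) (-(v * ((y / ∏ l, t l : ℝ) : ℂ)))

/-- The function `Φ^{(μ)}(v;y)` of Section 4, real `v`. -/
def PhiMuR (r ν0 : ℕ) (μ ν : Fin r → ℕ) (v y : ℝ) : ℝ :=
  (1 / (Real.Gamma ((ν0 : ℝ) + 1) * ∏ l, Real.Gamma ((μ l : ℝ) - (ν l : ℝ)))) *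
    ∫ t in unitCube r,
      ((∏ l, (t l) ^ ((ν l : ℝ) - 1) * (1 - t l) ^ ((μ l : ℝ) - (ν l : ℝ) - 1)) *
          (y / ∏ l, t l) ^ ν0 * Real.exp (-(y / ∏ l, t l))) *
        hyp0F1R ((ν0 : ℝ) + 1) (-(v * (y / ∏ l, t l)))

/-- The kernel `K_N` for the truncated-unitary product of Section 4. -/
def KNmu (r ν0 N : ℕ) (μ ν : Fin r → ℕ) (a : Fin N → ℝ) (c : ℂ) (R : ℝ) (x y : ℝ) : ℂ :=
  ∫ u in Set.Ioi (0 : ℝ),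
    (2 * Real.pi * Complex.I)⁻¹ *
      ∮ v in C(c, R),
        (u : ℂ) ^ ν0 * Complex.exp (-(u : ℂ) + v) * ((PsiMu r ν0 μ ν u x : ℝ) : ℂ) *
          PhiMu r ν0 μ ν v y * ((u : ℂ) - v)⁻¹ * ∏ l, ((u : ℂ) + (a l : ℂ)) / (v + (a l : ℂ))

/-- Mixed domain `(0,1)^q × (0,∞)^{r-q}`. -/
def mixedSet (r q : ℕ) : Set (Fin r → ℝ) := {t | ∀ l, 0 < t l ∧ ((l : ℕ) < q → t l < 1)}

/-- The Meijer G-function `G^{1,q}_{q,r+2}(-μ₁,…,-μ_q; 0,-ν₀,…,-ν_r | z)`, real form. -/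
def G1qR (r ν0 q : ℕ) (μ ν : Fin r → ℕ) (z : ℝ) : ℝ :=
  ∑' k : ℕ, (-z) ^ k *
    (∏ l ∈ Finset.univ.filter fun l : Fin r => (l : ℕ) < q, Real.Gamma ((μ l : ℝ) + 1 + k)) /
    (Nat.factorial k * Real.Gamma ((ν0 : ℝ) + 1 + k) *
      ∏ l, Real.Gamma ((ν l : ℝ) + 1 + k))

/-- The Meijer G-function `G^{1,q}_{q,r+2}(-μ₁,…,-μ_q; 0,-ν₀,…,-ν_r | z)`, complex form. -/
def G1q (r ν0 q : ℕ) (μ ν : Fin r → ℕ) (z : ℂ) : ℂ :=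
  ∑' k : ℕ, (-z) ^ k *
    ((∏ l ∈ Finset.univ.filter fun l : Fin r => (l : ℕ) < q,
      Real.Gamma ((μ l : ℝ) + 1 + k) : ℝ) : ℂ) /
    ((Nat.factorial k : ℂ) * (Real.Gamma ((ν0 : ℝ) + 1 + k) : ℂ) *
      ∏ l, (Real.Gamma ((ν l : ℝ) + 1 + k) : ℂ))

/-- The Meijer G-function `G^{r+1,0}_{q,r+2}(μ₁,…,μ_q; ν₀,…,ν_r,0 | z)` for `z > 0`. -/
def G2qR (r ν0 q : ℕ) (μ ν : Fin r → ℕ) (z : ℝ) : ℝ :=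
  ∫ t in mixedSet r q,
    (∏ l : Fin r, if l.val < q then
        (t l) ^ ((ν l : ℝ) - 1) * (1 - t l) ^ ((μ l : ℝ) - (ν l : ℝ) - 1) /
          Real.Gamma ((μ l : ℝ) - (ν l : ℝ))
      else (t l) ^ ((ν l : ℝ) - 1) * Real.exp (-t l)) *
      g0R ν0 (z / ∏ l, t l)



/-- The open strip of half-width `π`. -/
def strip : Set ℂ := {w | |w.im| < Real.pi}

lemma isOpen_strip : IsOpen strip :=
  isOpen_lt (continuous_abs.comp Complex.continuous_im) continuous_const

/-- Holomorphic dependence of an integral on a parameter. -/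
lemma param_diffAt {α : Type*} [MeasurableSpace α] (μ : Measure α) (H : ℂ → α → ℂ) (z0 : ℂ)
    (ρ : ℝ) (hρ : 0 < ρ) (bound : α → ℝ)
    (hmeas : ∀ z ∈ Metric.ball z0 ρ, AEStronglyMeasurable (H z) μ)
    (hdiff : ∀ᵐ a ∂μ, ∀ z ∈ Metric.ball z0 ρ, DifferentiableAt ℂ (fun z => H z a) z)
    (hb : ∀ᵐ a ∂μ, ∀ z ∈ Metric.ball z0 ρ, ‖H z a‖ ≤ bound a)
    (hbi : Integrable bound μ) :
    DifferentiableAt ℂ (fun z => ∫ a, H z a ∂μ) z0 := by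
  have hz0 : z0 ∈ Metric.ball z0 ρ := Metric.mem_ball_self hρ
  have key := hasDerivAt_integral_of_dominated_loc_of_deriv_le (μ := μ) (F := H)
    (F' := fun z a => deriv (fun z => H z a) z) (x₀ := z0) (s := Metric.ball z0 (ρ/2))
    (bound := fun a => bound a / (ρ/4)) (Metric.ball_mem_nhds _ (by positivity)) ?_ ?_ ?_ ?_ ?_ ?_
  · exact key.2.differentiableAt
  · filter_upwards [Metric.ball_mem_nhds z0 hρ] with z hz using hmeas z hz
  · refine hbi.mono' (hmeas _ hz0) ?_
    filter_upwards [hb] with a ha using ha _ hz0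
  · -- measurability of derivative as limit of difference quotients
    have hlim : ∀ᵐ a ∂μ, Tendsto (fun n : ℕ => ((ρ / (2 * ((n:ℝ) + 1)) : ℝ) : ℂ)⁻¹ *
        (H (z0 + ((ρ / (2 * ((n:ℝ) + 1)) : ℝ) : ℂ)) a - H z0 a)) atTop
        (𝓝 (deriv (fun z => H z a) z0)) := by
      filter_upwards [hdiff] with a ha
      have h1 := (ha z0 hz0).hasDerivAt.tendsto_slope_zero
      have h2 : Tendsto (fun n : ℕ => ((ρ / (2 * ((n:ℝ) + 1)) : ℝ) : ℂ)) atTop (𝓝[≠] 0) := by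
        rw [tendsto_nhdsWithin_iff]
        constructor
        · have : Tendsto (fun n : ℕ => (ρ / 2) * (1 / ((n:ℝ) + 1))) atTop (𝓝 ((ρ/2) * 0)) :=
            tendsto_one_div_add_atTop_nhds_zero_nat.const_mul _
          rw [mul_zero] at this
          have h3 := (Complex.continuous_ofReal.tendsto 0).comp this
          simp only [Complex.ofReal_zero] at h3
          refine h3.congr (fun n => ?_)
          simp only [Function.comp]
          congr 1
          field_simp
        · refine Eventually.of_forall (fun n => ?_)
          simp only [Set.mem_compl_iff, Set.mem_singleton_iff, Complex.ofReal_eq_zero]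
          positivity
      exact (h1.comp h2).congr (fun n => by simp [Function.comp, smul_eq_mul])
    refine aestronglyMeasurable_of_tendsto_ae atTop (fun n => ?_) hlim
    refine AEStronglyMeasurable.const_mul (AEStronglyMeasurable.sub (hmeas _ ?_) (hmeas _ hz0)) _
    rw [Metric.mem_ball, dist_eq_norm, add_sub_cancel_left, Complex.norm_real, Real.norm_eq_abs,
      abs_of_pos (by positivity)]
    rw [div_lt_iff₀ (by positivity)]
    nlinarith [(Nat.cast_nonneg n : (0:ℝ) ≤ n)]
  · filter_upwards [hb, hdiff] with a ha hd z hz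
    refine Complex.norm_deriv_le_of_forall_mem_sphere_norm_le (by positivity) ?_ ?_
    · refine DifferentiableOn.diffContOnCl (fun w hw => (hd w ?_).differentiableWithinAt)
      have hw' : dist w z ≤ ρ/4 := by
        have := Metric.closure_ball_subset_closedBall hw
        simpa using this
      have := dist_triangle w z z0
      rw [Metric.mem_ball] at hz ⊢
      linarith
    · intro w hw
      apply ha
      have hw' : dist w z = ρ/4 := Metric.mem_sphere.1 hw
      have := dist_triangle w z z0
      rw [Metric.mem_ball] at hz ⊢
      linarith
  · exact hbi.div_const _
  · filter_upwards [hdiff] with a hd z hz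
    refine (hd z ?_).hasDerivAt
    rw [Metric.mem_ball] at hz ⊢
    linarith

lemma rect_cauchy (h : ℂ → ℂ) (hd : DifferentiableOn ℂ h strip) (φ₁ φ₂ a b : ℝ)
    (h1 : |φ₁| < Real.pi) (h2 : |φ₂| < Real.pi) :
    (∫ y in a..b, h (y + φ₁ * Complex.I)) - (∫ y in a..b, h (y + φ₂ * Complex.I))
      + Complex.I * (∫ s in φ₁..φ₂, h (b + s * Complex.I))
      - Complex.I * (∫ s in φ₁..φ₂, h (a + s * Complex.I)) = 0 := by
  have := Complex.integral_boundary_rect_eq_zero_of_differentiableOn h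
    (a + φ₁ * Complex.I) (b + φ₂ * Complex.I) (hd.mono ?_)
  · simpa using this
  · intro w hw
    have hw2 := (Complex.mem_reProdIm.1 hw).2
    simp only [Complex.add_im, Complex.ofReal_im, Complex.mul_im, Complex.ofReal_re,
      Complex.I_im, Complex.I_re, mul_one, mul_zero, add_zero, zero_add] at hw2
    rw [Set.mem_uIcc] at hw2
    show |w.im| < Real.pi
    rw [abs_lt] at *
    rcases hw2 with hw2 | hw2 <;> constructor <;> linarith

lemma strip_mem (y φ : ℝ) (h : |φ| < Real.pi) : (y + φ * Complex.I : ℂ) ∈ strip := by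
  simpa [strip] using h

lemma expIic_integrable (δ : ℝ) (hδ : 0 < δ) (L : ℝ) :
    IntegrableOn (fun y => Real.exp (δ * y)) (Set.Iic L) := by
  exact integrableOn_exp_mul_Iic hδ L

lemma cont_horiz (h : ℂ → ℂ) (hd : DifferentiableOn ℂ h strip) (φ : ℝ) (hφ : |φ| < Real.pi) :
    Continuous (fun y : ℝ => h (y + φ * Complex.I)) := by
  rw [continuous_iff_continuousAt]
  intro y
  have : ContinuousAt h (y + φ * Complex.I) :=
    (hd.differentiableAt (isOpen_strip.mem_nhds (strip_mem y φ hφ))).continuousAt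
  exact ContinuousAt.comp (f := fun y : ℝ => (y + φ * Complex.I : ℂ)) this (by fun_prop)

lemma cont_vert (h : ℂ → ℂ) (hd : DifferentiableOn ℂ h strip) (a : ℝ) :
    ContinuousOn (fun s : ℝ => h (a + s * Complex.I)) {s | |s| < Real.pi} := by
  intro s hs
  have : ContinuousAt h (a + s * Complex.I) :=
    (hd.differentiableAt (isOpen_strip.mem_nhds (strip_mem a s hs))).continuousAt
  exact (ContinuousAt.comp (f := fun s : ℝ => (a + s * Complex.I : ℂ)) this
    (by fun_prop)).continuousWithinAt

lemma halfstrip_integrable (h : ℂ → ℂ) (hd : DifferentiableOn ℂ h strip) (φ L M δ : ℝ)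
    (hφ : |φ| < Real.pi) (hδ : 0 < δ)
    (hb : ∀ y ≤ L, ‖h (y + φ * Complex.I)‖ ≤ M * Real.exp (δ * y)) :
    IntegrableOn (fun y : ℝ => h (y + φ * Complex.I)) (Set.Iic L) := by
  refine Integrable.mono' ((expIic_integrable δ hδ L).const_mul M)
    (cont_horiz h hd φ hφ).aestronglyMeasurable ?_
  filter_upwards [ae_restrict_mem measurableSet_Iic] with y hy using hb y hy

lemma halfstrip_cauchy (h : ℂ → ℂ) (hd : DifferentiableOn ℂ h strip) (φ₁ φ₂ L M δ : ℝ)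
    (h1 : |φ₁| < Real.pi) (h2 : |φ₂| < Real.pi) (hδ : 0 < δ)
    (hb : ∀ y ≤ L, ∀ s ∈ Set.uIcc φ₁ φ₂, ‖h (y + s * Complex.I)‖ ≤ M * Real.exp (δ * y)) :
    (∫ y in Set.Iic L, h (y + φ₁ * Complex.I)) - (∫ y in Set.Iic L, h (y + φ₂ * Complex.I))
      + Complex.I * (∫ s in φ₁..φ₂, h (L + s * Complex.I)) = 0 := by
  have i1 := halfstrip_integrable h hd φ₁ L M δ h1 hδ (fun y hy => hb y hy _ Set.left_mem_uIcc)
  have i2 := halfstrip_integrable h hd φ₂ L M δ h2 hδ (fun y hy => hb y hy _ Set.right_mem_uIcc)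
  have t1 := intervalIntegral_tendsto_integral_Iic L i1 tendsto_id
  have t2 := intervalIntegral_tendsto_integral_Iic L i2 tendsto_id
  have t3 : Tendsto (fun a : ℝ => ∫ s in φ₁..φ₂, h (a + s * Complex.I)) atBot (𝓝 0) := by
    have hz : Tendsto (fun a : ℝ => M * Real.exp (δ * a) * |φ₂ - φ₁|) atBot (𝓝 0) := by
      have : Tendsto (fun a : ℝ => Real.exp (δ * a)) atBot (𝓝 0) :=
        Real.tendsto_exp_atBot.comp (tendsto_id.const_mul_atBot hδ)
      simpa using (this.const_mul M).mul_const |φ₂ - φ₁|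
    refine squeeze_zero_norm' ?_ hz
    filter_upwards [eventually_le_atBot L] with a ha
    refine intervalIntegral.norm_integral_le_of_norm_le_const (fun s hs => hb a ha s ?_)
    exact Set.uIoc_subset_uIcc hs
  have t4 := ((t1.sub t2).add_const (Complex.I * (∫ s in φ₁..φ₂, h (L + s * Complex.I)))).sub
    (t3.const_mul Complex.I)
  rw [mul_zero, sub_zero] at t4
  refine tendsto_nhds_unique t4 ?_
  refine tendsto_const_nhds.congr (fun a => ?_)
  exact (rect_cauchy h hd φ₁ φ₂ a L h1 h2).symm

/-- The gamma kernel in logarithmic coordinates. -/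
def Ker (ν : ℕ) (ζ : ℂ) : ℂ := Complex.exp (ν * ζ - Complex.exp ζ)

lemma norm_Ker (ν : ℕ) (ζ : ℂ) :
    ‖Ker ν ζ‖ = Real.exp (ν * ζ.re - Real.exp ζ.re * Real.cos ζ.im) := by
  rw [Ker, Complex.norm_exp]
  congr 1
  simp [Complex.exp_re]

lemma norm_Ker_le (ν : ℕ) (ζ : ℂ) :
    ‖Ker ν ζ‖ ≤ Real.exp (ν * ζ.re + Real.exp ζ.re) := by
  rw [norm_Ker]
  apply Real.exp_le_exp.2
  nlinarith [Real.exp_pos ζ.re, Real.neg_one_le_cos ζ.im]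

lemma Ker_diff (ν : ℕ) : Differentiable ℂ (Ker ν) := by
  unfold Ker; fun_prop

lemma gumbel_le (p c : ℝ) (hp : 0 < p) (hc : 0 < c) (a : ℝ) :
    Real.exp (p * a - c * Real.exp a) ≤ Real.exp (-p * (1 + Real.log (c / p))) := by
  apply Real.exp_le_exp.2
  have h1 := Real.add_one_le_exp (a + Real.log (c / p))
  rw [Real.exp_add, Real.exp_log (by positivity)] at h1
  have h2 : p * (Real.exp a * (c / p)) = c * Real.exp a := by field_simp
  nlinarith

/-- Change of variables `t = exp u`. -/
lemma integral_Ioi_exp {E : Type*} [NormedAddCommGroup E] [NormedSpace ℝ E] (g : ℝ → E) :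
    ∫ t in Set.Ioi (0:ℝ), g t = ∫ u : ℝ, Real.exp u • g (Real.exp u) := by
  have h := integral_image_eq_integral_abs_deriv_smul (s := Set.univ) (f := Real.exp)
    (f' := Real.exp) MeasurableSet.univ (fun x _ => (Real.hasDerivAt_exp x).hasDerivWithinAt)
    Real.exp_injective.injOn g
  rw [Set.image_univ, Real.range_exp, setIntegral_univ] at h
  simpa [abs_of_pos (Real.exp_pos _)] using h

lemma integrableOn_Ioi_exp {E : Type*} [NormedAddCommGroup E] [NormedSpace ℝ E] (g : ℝ → E) :
    IntegrableOn g (Set.Ioi (0:ℝ)) ↔ Integrable (fun u : ℝ => Real.exp u • g (Real.exp u)) := by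
  have h := integrableOn_image_iff_integrableOn_abs_deriv_smul (s := Set.univ) (f := Real.exp)
    (f' := Real.exp) MeasurableSet.univ (fun x _ => (Real.hasDerivAt_exp x).hasDerivWithinAt)
    Real.exp_injective.injOn g
  rw [Set.image_univ, Real.range_exp, integrableOn_univ] at h
  simpa [abs_of_pos (Real.exp_pos _)] using h

lemma gumbel_aux (p u : ℝ) : Real.exp u • (Real.exp (-Real.exp u) * Real.exp u ^ (p - 1))
    = Real.exp (p * u - Real.exp u) := by
  rw [← Real.exp_mul, smul_eq_mul, ← Real.exp_add, ← Real.exp_add]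
  congr 1; ring

lemma gumbel_integrable (p : ℝ) (hp : 0 < p) :
    Integrable (fun u : ℝ => Real.exp (p * u - Real.exp u)) := by
  have h := (integrableOn_Ioi_exp _).1 (Real.GammaIntegral_convergent hp)
  simpa only [gumbel_aux] using h

lemma gumbel_integral (p : ℝ) (hp : 0 < p) :
    ∫ u : ℝ, Real.exp (p * u - Real.exp u) = Real.Gamma p := by
  rw [Real.Gamma_eq_integral hp, integral_Ioi_exp]
  simp only [gumbel_aux]

/-- The class of functions in logarithmic coordinates. -/
structure Cls (b A B : ℝ) (f : ℂ → ℂ) : Prop where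
  hA : 0 ≤ A
  hB : 0 ≤ B
  diff : DifferentiableOn ℂ f strip
  real : ∀ y : ℝ, ‖f y‖ ≤ A * Real.exp (b * y)
  str : ∀ w ∈ strip, ‖f w‖ ≤ A * Real.exp (b * w.re) * Real.exp (B * Real.exp w.re)

/-- Contour version of the convolution of `f` with the kernel. -/
def Fc (f : ℂ → ℂ) (ν : ℕ) (L φ : ℝ) (ζ : ℂ) : ℂ :=
  (∫ y in Set.Iic L, Ker ν (ζ - (y + φ * Complex.I)) * f (y + φ * Complex.I))
    - Complex.I * (∫ s in (0:ℝ)..φ, Ker ν (ζ - (L + s * Complex.I)) * f (L + s * Complex.I))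
    + ∫ y in Set.Ioi L, Ker ν (ζ - (y : ℝ)) * f (y : ℝ)

/-- The convolution extended to the strip. -/
def Fext (f : ℂ → ℂ) (ν : ℕ) (ζ : ℂ) : ℂ := Fc f ν 0 ζ.im ζ

lemma left_bound {b A B : ℝ} {f : ℂ → ℂ} (hf : Cls b A B f) (ν : ℕ) (hν : b < ν)
    (x0 c0 L : ℝ) (hc0 : 0 < c0) : ∃ M : ℝ, ∀ ζ : ℂ, ∀ s y : ℝ, |ζ.re - x0| ≤ 1 →
      c0 ≤ Real.cos (ζ.im - s) → |s| < Real.pi → y ≤ L →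
      ‖Ker ν (ζ - (y + s * Complex.I)) * f (y + s * Complex.I)‖ ≤ M * Real.exp (1 * y) := by
  set p : ℝ := ν - b + 1 with hp
  have hp0 : 0 < p := by rw [hp]; linarith
  set M0 := Real.exp (-p * (1 + Real.log (c0 / p))) with hM0
  refine ⟨M0 * A * Real.exp ((b - 1) * x0 + |b - 1|) * Real.exp (B * Real.exp L), ?_⟩
  intro ζ s y hx hc hs hy
  rw [norm_mul, norm_Ker]
  have h1 := hf.str _ (strip_mem y s hs)
  simp only [Complex.sub_re, Complex.add_re, Complex.ofReal_re, Complex.mul_re, Complex.I_re,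
    mul_zero, Complex.ofReal_im, Complex.I_im, mul_one, sub_self, add_zero, Complex.sub_im,
    Complex.add_im, Complex.mul_im, zero_add] at h1 ⊢
  set a := ζ.re - y with ha
  have e1 : Real.exp (ν * a - Real.exp a * Real.cos (ζ.im - s))
      ≤ M0 * Real.exp ((b - 1) * a) := by
    have := gumbel_le p c0 hp0 hc0 a
    calc _ ≤ Real.exp (ν * a - c0 * Real.exp a) := by
          apply Real.exp_le_exp.2; nlinarith [Real.exp_pos a]
      _ = Real.exp (p * a - c0 * Real.exp a) * Real.exp ((b-1) * a) := by
          rw [← Real.exp_add]; congr 1; rw [hp]; ring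
      _ ≤ _ := by gcongr
  have e2 : Real.exp (B * Real.exp y) ≤ Real.exp (B * Real.exp L) := by
    have := hf.hB
    gcongr
  have e3 : Real.exp ((b - 1) * ζ.re) ≤ Real.exp ((b - 1) * x0 + |b - 1|) := by
    apply Real.exp_le_exp.2
    have : (b - 1) * (ζ.re - x0) ≤ |b - 1| := by
      refine (le_abs_self _).trans ?_
      rw [abs_mul]
      exact mul_le_of_le_one_right (abs_nonneg _) hx
    linarith
  have hA := hf.hA
  calc _ ≤ (M0 * Real.exp ((b - 1) * a)) *
        (A * Real.exp (b * y) * Real.exp (B * Real.exp L)) := by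
        gcongr
        exact h1.trans (by gcongr)
    _ = M0 * A * Real.exp ((b-1) * ζ.re) * Real.exp (B * Real.exp L) * Real.exp (1 * y) := by
        have : Real.exp ((b - 1) * a) * Real.exp (b * y)
            = Real.exp ((b-1) * ζ.re) * Real.exp (1 * y) := by
          rw [← Real.exp_add, ← Real.exp_add]; congr 1; rw [ha]; ring
        linear_combination (M0 * A * Real.exp (B * Real.exp L)) * this
    _ ≤ _ := by gcongr

lemma right_bound {b A B : ℝ} {f : ℂ → ℂ} (hf : Cls b A B f) (ν : ℕ) (L y : ℝ) (ζ : ℂ)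
    (hy : L ≤ y) : ‖Ker ν (ζ - (y : ℝ)) * f (y : ℝ)‖ ≤
      A * Real.exp (ν * ζ.re) * Real.exp (Real.exp (ζ.re - L)) * Real.exp (-(ν - b) * y) := by
  rw [norm_mul]
  have h1 := hf.real y
  have h2 := norm_Ker_le ν (ζ - (y : ℝ))
  simp only [Complex.sub_re, Complex.ofReal_re] at h2
  have hA := hf.hA
  calc _ ≤ Real.exp (ν * (ζ.re - y) + Real.exp (ζ.re - L)) * (A * Real.exp (b * y)) := by
        gcongr
        refine h2.trans ?_
        gcongr
    _ = _ := by
        have : Real.exp (ν * (ζ.re - y) + Real.exp (ζ.re - L)) * Real.exp (b * y) =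
          Real.exp (ν * ζ.re) * Real.exp (Real.exp (ζ.re - L)) * Real.exp (-(ν - b) * y) := by
          rw [← Real.exp_add, ← Real.exp_add, ← Real.exp_add]; congr 1; ring
        linear_combination A * this

lemma h_diff {b A B : ℝ} {f : ℂ → ℂ} (hf : Cls b A B f) (ν : ℕ) (ζ : ℂ) :
    DifferentiableOn ℂ (fun w => Ker ν (ζ - w) * f w) strip := by
  refine DifferentiableOn.mul ?_ hf.diff
  exact ((Ker_diff ν).comp (differentiable_id.const_sub ζ)).differentiableOn

lemma cont_real {b A B : ℝ} {f : ℂ → ℂ} (hf : Cls b A B f) :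
    Continuous (fun y : ℝ => f (y : ℝ)) := by
  have := cont_horiz f hf.diff 0 (by simpa using Real.pi_pos)
  simpa using this

lemma right_integrable {b A B : ℝ} {f : ℂ → ℂ} (hf : Cls b A B f) (ν : ℕ) (hν : b < ν)
    (ζ : ℂ) (L : ℝ) : IntegrableOn (fun y : ℝ => Ker ν (ζ - (y : ℝ)) * f (y : ℝ)) (Set.Ioi L) := by
  refine Integrable.mono' ((integrableOn_exp_mul_Ioi (a := -(ν - b)) (by linarith) L).const_mul
    (A * Real.exp (ν * ζ.re) * Real.exp (Real.exp (ζ.re - L)))) ?_ ?_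
  · refine Continuous.aestronglyMeasurable ?_
    exact (((Ker_diff ν).continuous.comp (by fun_prop)).mul (cont_real hf))
  · filter_upwards [ae_restrict_mem measurableSet_Ioi] with y hy
    exact right_bound hf ν L y ζ (le_of_lt hy)

lemma cos_lb (θ φ₁ φ₂ s : ℝ) (h1 : |θ - φ₁| < Real.pi / 2) (h2 : |θ - φ₂| < Real.pi / 2)
    (hs : s ∈ Set.uIcc φ₁ φ₂) :
    Real.cos (max |θ - φ₁| |θ - φ₂|) ≤ Real.cos (θ - s) := by
  rw [← Real.cos_abs (θ - s)]
  apply Real.cos_le_cos_of_nonneg_of_le_pi (abs_nonneg _)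
  · have := max_lt h1 h2
    linarith [Real.pi_pos]
  · rw [Set.mem_uIcc] at hs
    have a1 := le_max_left |θ - φ₁| |θ - φ₂|
    have a2 := le_max_right |θ - φ₁| |θ - φ₂|
    have b1 := abs_le.1 a1
    have b2 := abs_le.1 a2
    rw [abs_le]
    rcases hs with hs | hs <;> constructor <;> linarith

lemma vert_intervalIntegrable (h : ℂ → ℂ) (hd : DifferentiableOn ℂ h strip) (a φ₁ φ₂ : ℝ)
    (h1 : |φ₁| < Real.pi) (h2 : |φ₂| < Real.pi) :
    IntervalIntegrable (fun s : ℝ => h (a + s * Complex.I)) volume φ₁ φ₂ := by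
  refine ContinuousOn.intervalIntegrable ((cont_vert h hd a).mono ?_)
  intro s hs
  rw [Set.mem_uIcc] at hs
  show |s| < Real.pi
  rw [abs_lt] at *
  rcases hs with hs | hs <;> constructor <;> linarith

lemma Fc_angle {b A B : ℝ} {f : ℂ → ℂ} (hf : Cls b A B f) (ν : ℕ) (hν : b < ν)
    (ζ : ℂ) (L φ₁ φ₂ : ℝ) (h1 : |φ₁| < Real.pi) (h2 : |φ₂| < Real.pi)
    (h3 : |ζ.im - φ₁| < Real.pi / 2) (h4 : |ζ.im - φ₂| < Real.pi / 2) :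
    Fc f ν L φ₁ ζ = Fc f ν L φ₂ ζ := by
  have hc0 : 0 < Real.cos (max |ζ.im - φ₁| |ζ.im - φ₂|) := by
    apply Real.cos_pos_of_mem_Ioo
    constructor
    · have := (abs_nonneg (ζ.im - φ₁)).trans (le_max_left _ |ζ.im - φ₂|)
      linarith [Real.pi_pos]
    · exact max_lt h3 h4
  obtain ⟨M, hM⟩ := left_bound hf ν hν ζ.re _ L hc0
  have hd := h_diff hf ν ζ
  have key := halfstrip_cauchy _ hd φ₁ φ₂ L M 1 h1 h2 one_pos (fun y hy s hs => by
    refine hM ζ s y (by simp) (cos_lb _ _ _ _ h3 h4 hs) ?_ hy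
    rw [Set.mem_uIcc] at hs
    rw [abs_lt] at *
    rcases hs with hs | hs <;> constructor <;> linarith)
  have v1 := vert_intervalIntegrable _ hd L 0 φ₁ (by simpa using Real.pi_pos) h1
  have v2 := vert_intervalIntegrable _ hd L φ₁ φ₂ h1 h2
  have := intervalIntegral.integral_add_adjacent_intervals v1 v2
  simp only [Fc]
  rw [← this]
  linear_combination key

lemma Fc_shift {b A B : ℝ} {f : ℂ → ℂ} (hf : Cls b A B f) (ν : ℕ) (hν : b < ν)
    (ζ : ℂ) (L₁ L₂ φ : ℝ) (h1 : |φ| < Real.pi) (h3 : |ζ.im - φ| < Real.pi / 2) :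
    Fc f ν L₁ φ ζ = Fc f ν L₂ φ ζ := by
  have hc0 : 0 < Real.cos (ζ.im - φ) := by
    apply Real.cos_pos_of_mem_Ioo
    rw [abs_lt] at h3
    exact ⟨by linarith, h3.2⟩
  have hd := h_diff hf ν ζ
  have hI : ∀ L, IntegrableOn (fun y : ℝ => Ker ν (ζ - (y + φ * Complex.I)) *
      f (y + φ * Complex.I)) (Set.Iic L) := by
    intro L
    obtain ⟨M, hM⟩ := left_bound hf ν hν ζ.re _ L hc0
    exact halfstrip_integrable _ hd φ L M 1 h1 one_pos (fun y hy =>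
      hM ζ φ y (by simp) le_rfl h1 hy)
  have r := rect_cauchy _ hd 0 φ L₁ L₂ (by simpa using Real.pi_pos) h1
  have e1 := intervalIntegral.integral_Iic_sub_Iic (hI L₁) (hI L₂)
  have e2 := intervalIntegral.integral_Ioi_sub_Ioi' (right_integrable hf ν hν ζ L₁)
    (right_integrable hf ν hν ζ L₂)
  simp only [Complex.ofReal_zero, zero_mul, add_zero] at r
  simp only [Fc]
  linear_combination r - e1 + e2

lemma Fext_eq {b A B : ℝ} {f : ℂ → ℂ} (hf : Cls b A B f) (ν : ℕ) (hν : b < ν)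
    (ζ : ℂ) (hζ : ζ ∈ strip) (L φ : ℝ) (h1 : |φ| < Real.pi) (h3 : |ζ.im - φ| < Real.pi / 2) :
    Fext f ν ζ = Fc f ν L φ ζ := by
  rw [Fext, Fc_angle hf ν hν ζ 0 ζ.im φ hζ h1 (by simpa using Real.pi_pos) h3,
    Fc_shift hf ν hν ζ 0 L φ h1 h3]

lemma Fc_diffAt {b A B : ℝ} {f : ℂ → ℂ} (hf : Cls b A B f) (ν : ℕ) (hν : b < ν)
    (ζ0 : ℂ) (hζ : ζ0 ∈ strip) : DifferentiableAt ℂ (Fc f ν 0 ζ0.im) ζ0 := by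
  have hball : ∀ z ∈ Metric.ball ζ0 1, |z.re - ζ0.re| ≤ 1 ∧ |z.im - ζ0.im| ≤ 1 := by
    intro z hz
    rw [Metric.mem_ball, dist_eq_norm] at hz
    have h1 := Complex.abs_re_le_norm (z - ζ0)
    have h2 := Complex.abs_im_le_norm (z - ζ0)
    simp only [Complex.sub_re, Complex.sub_im] at h1 h2
    exact ⟨by linarith, by linarith⟩
  have hkd : ∀ w z : ℂ, DifferentiableAt ℂ (fun z => Ker ν (z - w) * f w) z := by
    intro w z
    exact (((Ker_diff ν).comp (differentiable_id.sub_const w)).mul_const _) z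
  have hcos1 : 0 < Real.cos 1 := Real.cos_one_pos
  obtain ⟨M, hM⟩ := left_bound hf ν hν ζ0.re _ 0 hcos1
  unfold Fc
  refine DifferentiableAt.add (DifferentiableAt.sub ?_ (DifferentiableAt.const_mul ?_ _)) ?_
  · refine param_diffAt _ (fun (ζ : ℂ) (y : ℝ) => Ker ν (ζ - (y + ζ0.im * Complex.I)) * f (y + ζ0.im * Complex.I))
      ζ0 1 one_pos (fun y => M * Real.exp (1 * y)) ?_ ?_ ?_ ?_
    · intro z hz
      exact (cont_horiz _ (h_diff hf ν z) ζ0.im hζ).aestronglyMeasurable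
    · exact Eventually.of_forall (fun y z _ => hkd _ z)
    · filter_upwards [ae_restrict_mem measurableSet_Iic] with y hy z hz
      refine hM z ζ0.im y (hball z hz).1 ?_ hζ hy
      rw [← Real.cos_abs (z.im - ζ0.im)]
      exact Real.cos_le_cos_of_nonneg_of_le_pi (abs_nonneg _) (by linarith [Real.pi_gt_three])
        (hball z hz).2
    · exact (expIic_integrable 1 one_pos 0).const_mul M
  · have heq : (fun ζ : ℂ => ∫ s in (0:ℝ)..ζ0.im, Ker ν (ζ - ((0:ℝ) + s * Complex.I)) *
        f ((0:ℝ) + s * Complex.I)) = fun ζ => (if (0:ℝ) ≤ ζ0.im then (1:ℝ) else -1) •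
        ∫ s in Set.uIoc 0 ζ0.im, Ker ν (ζ - ((0:ℝ) + s * Complex.I)) * f ((0:ℝ) + s * Complex.I) := by
      funext ζ
      rw [intervalIntegral.intervalIntegral_eq_integral_uIoc]
    rw [heq]
    have hst : ∀ s ∈ Set.uIoc 0 ζ0.im, |s| < Real.pi := by
      intro s hs
      have hs := Set.uIoc_subset_uIcc hs
      rw [Set.mem_uIcc] at hs
      have hζ : |ζ0.im| < Real.pi := hζ
      have := Real.pi_pos
      rw [abs_lt] at *
      rcases hs with hs | hs <;> constructor <;> linarith
    refine DifferentiableAt.const_smul (f := fun ζ : ℂ => ∫ s in Set.uIoc 0 ζ0.im,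
      Ker ν (ζ - ((0:ℝ) + s * Complex.I)) * f ((0:ℝ) + s * Complex.I)) ?_
      (if (0:ℝ) ≤ ζ0.im then (1:ℝ) else -1)
    refine param_diffAt _ (fun (ζ : ℂ) (s : ℝ) => Ker ν (ζ - ((0:ℝ) + s * Complex.I)) *
      f ((0:ℝ) + s * Complex.I)) ζ0 1 one_pos
      (fun _ => Real.exp (ν * (ζ0.re + 1) + Real.exp (ζ0.re + 1)) * (A * Real.exp (B))) ?_ ?_ ?_ ?_
    · intro z hz
      refine ContinuousOn.aestronglyMeasurable ?_ measurableSet_uIoc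
      exact (cont_vert _ (h_diff hf ν z) 0).mono hst
    · exact Eventually.of_forall (fun y z _ => hkd _ z)
    · filter_upwards [ae_restrict_mem measurableSet_uIoc] with s hs z hz
      rw [norm_mul]
      have h1 := hf.str _ (strip_mem 0 s (hst s hs))
      have h2 := norm_Ker_le ν (z - ((0:ℝ) + s * Complex.I))
      simp at h1 h2
      have h3 := (abs_le.1 (hball z hz).1).2
      have h4 : z.re ≤ ζ0.re + 1 := by linarith
      simp only [Complex.ofReal_zero, zero_add]
      gcongr
      refine h2.trans ?_
      gcongr
    · refine integrableOn_const ?_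
      exact (measure_mono Set.uIoc_subset_uIcc).trans_lt isCompact_uIcc.measure_lt_top |>.ne
  · refine param_diffAt _ (fun (ζ : ℂ) (y : ℝ) => Ker ν (ζ - (y : ℝ)) * f (y : ℝ)) ζ0 1 one_pos
      (fun y => A * Real.exp (ν * (ζ0.re + 1)) * Real.exp (Real.exp (ζ0.re + 1)) *
        Real.exp (-(ν - b) * y)) ?_ ?_ ?_ ?_
    · intro z hz
      exact (((Ker_diff ν).continuous.comp (by fun_prop)).mul (cont_real hf)).aestronglyMeasurable
    · exact Eventually.of_forall (fun y z _ => hkd _ z)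
    · filter_upwards [ae_restrict_mem measurableSet_Ioi] with y hy z hz
      have h := right_bound hf ν 0 y z (le_of_lt hy)
      have h3 := (abs_le.1 (hball z hz).1).2
      have h4 : z.re ≤ ζ0.re + 1 := by linarith
      have hA := hf.hA
      refine h.trans ?_
      rw [sub_zero]
      gcongr
    · exact (integrableOn_exp_mul_Ioi (a := -(ν - b)) (by linarith) 0).const_mul _

lemma Fext_diff {b A B : ℝ} {f : ℂ → ℂ} (hf : Cls b A B f) (ν : ℕ) (hν : b < ν) :
    DifferentiableOn ℂ (Fext f ν) strip := by
  intro ζ0 hζ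
  refine DifferentiableAt.differentiableWithinAt ?_
  refine (Fc_diffAt hf ν hν ζ0 hζ).congr_of_eventuallyEq ?_
  have h1 : ∀ᶠ z in 𝓝 ζ0, z ∈ strip := isOpen_strip.mem_nhds hζ
  have h2 : ∀ᶠ z in 𝓝 ζ0, |z.im - ζ0.im| < Real.pi / 2 := by
    have : Tendsto (fun z : ℂ => |z.im - ζ0.im|) (𝓝 ζ0) (𝓝 0) := by
      have hc : Continuous (fun z : ℂ => |z.im - ζ0.im|) := by fun_prop
      simpa using hc.tendsto ζ0
    exact this.eventually_lt_const (by positivity)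
  filter_upwards [h1, h2] with z hz1 hz2
  exact Fext_eq hf ν hν z hz1 0 ζ0.im hζ hz2

lemma left_integrable {b A B : ℝ} {f : ℂ → ℂ} (hf : Cls b A B f) (ν : ℕ) (hν : b < ν)
    (ζ : ℂ) (L φ : ℝ) (h1 : |φ| < Real.pi) (h3 : |ζ.im - φ| < Real.pi / 2) :
    IntegrableOn (fun y : ℝ => Ker ν (ζ - (y + φ * Complex.I)) *
      f (y + φ * Complex.I)) (Set.Iic L) := by
  have hc0 : 0 < Real.cos (ζ.im - φ) := by
    apply Real.cos_pos_of_mem_Ioo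
    rw [abs_lt] at h3
    exact ⟨by linarith, h3.2⟩
  obtain ⟨M, hM⟩ := left_bound hf ν hν ζ.re _ L hc0
  exact halfstrip_integrable _ (h_diff hf ν ζ) φ L M 1 h1 one_pos (fun y hy =>
    hM ζ φ y (by simp) le_rfl h1 hy)

lemma conv_integrable {b A B : ℝ} {f : ℂ → ℂ} (hf : Cls b A B f) (ν : ℕ) (hν : b < ν)
    (x : ℝ) : Integrable (fun y : ℝ => Ker ν ((x : ℂ) - (y : ℝ)) * f (y : ℝ)) := by
  have h1 := left_integrable hf ν hν x 0 0 (by simpa using Real.pi_pos)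
    (by simpa using Real.pi_pos)
  have h2 := right_integrable hf ν hν x 0
  simp only [Complex.ofReal_zero, zero_mul, add_zero] at h1
  have := h1.union h2
  rwa [Set.Iic_union_Ioi, integrableOn_univ] at this

lemma Fext_real {b A B : ℝ} {f : ℂ → ℂ} (hf : Cls b A B f) (ν : ℕ) (hν : b < ν)
    (x : ℝ) : Fext f ν x = ∫ y : ℝ, Ker ν ((x : ℂ) - (y : ℝ)) * f (y : ℝ) := by
  have h := conv_integrable hf ν hν x
  rw [← intervalIntegral.integral_Iic_add_Ioi (b := 0) h.integrableOn h.integrableOn]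
  simp [Fext, Fc]

/-- Real bound. -/
lemma Fext_real_bound {b A B : ℝ} {f : ℂ → ℂ} (hf : Cls b A B f) (ν : ℕ) (hν : b < ν)
    (x : ℝ) : ‖Fext f ν x‖ ≤ A * Real.Gamma (ν - b) * Real.exp (b * x) := by
  rw [Fext_real hf ν hν]
  have hg := gumbel_integrable (ν - b) (by linarith)
  have hg' : Integrable (fun y : ℝ => Real.exp ((ν - b) * (x - y) - Real.exp (x - y))) :=
    hg.comp_sub_left x
  have hi : ∫ y : ℝ, Real.exp ((ν - b) * (x - y) - Real.exp (x - y)) = Real.Gamma (ν - b) := by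
    rw [integral_sub_left_eq_self (fun u : ℝ => Real.exp ((ν - b) * u - Real.exp u)) volume x]
    exact gumbel_integral _ (by linarith)
  calc _ ≤ ∫ y : ℝ, A * Real.exp (b * x) *
        Real.exp ((ν - b) * (x - y) - Real.exp (x - y)) := by
        refine norm_integral_le_of_norm_le (hg'.const_mul _) (Eventually.of_forall fun y => ?_)
        rw [norm_mul, norm_Ker]
        have := hf.real y
        simp only [Complex.sub_re, Complex.ofReal_re, Complex.sub_im, Complex.ofReal_im, sub_self,
          Real.cos_zero, mul_one]
        calc _ ≤ Real.exp (ν * (x - y) - Real.exp (x - y)) * (A * Real.exp (b * y)) := by gcongr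
          _ = _ := by
            have : Real.exp (ν * (x - y) - Real.exp (x - y)) * Real.exp (b * y) =
              Real.exp (b * x) * Real.exp ((ν - b) * (x - y) - Real.exp (x - y)) := by
              rw [← Real.exp_add, ← Real.exp_add]; congr 1; ring
            linear_combination A * this
    _ = _ := by rw [integral_const_mul, hi]; ring

lemma left_part_bound {b A B : ℝ} {f : ℂ → ℂ} (hf : Cls b A B f) (ν : ℕ) (hν : b < ν)
    (ζ : ℂ) (hζ : ζ ∈ strip) (L : ℝ) :
    ‖∫ y in Set.Iic L, Ker ν (ζ - (y + ζ.im * Complex.I)) * f (y + ζ.im * Complex.I)‖ ≤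
      A * Real.exp (b * ζ.re) * Real.exp (B * Real.exp L) * Real.Gamma (ν - b) := by
  set x := ζ.re with hx
  have hg := gumbel_integrable (ν - b) (by linarith)
  have hg' : Integrable (fun y : ℝ => Real.exp ((ν - b) * (x - y) - Real.exp (x - y))) :=
    hg.comp_sub_left x
  have hi : ∫ y : ℝ, Real.exp ((ν - b) * (x - y) - Real.exp (x - y)) = Real.Gamma (ν - b) := by
    rw [integral_sub_left_eq_self (fun u : ℝ => Real.exp ((ν - b) * u - Real.exp u)) volume x]
    exact gumbel_integral _ (by linarith)
  have hA := hf.hA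
  have hB := hf.hB
  calc _ ≤ ∫ y in Set.Iic L, A * Real.exp (b * x) * Real.exp (B * Real.exp L) *
        Real.exp ((ν - b) * (x - y) - Real.exp (x - y)) := by
        refine norm_integral_le_of_norm_le (hg'.const_mul _).integrableOn ?_
        filter_upwards [ae_restrict_mem measurableSet_Iic] with y hy
        rw [norm_mul, norm_Ker]
        have := hf.str _ (strip_mem y ζ.im hζ)
        simp only [Complex.sub_re, Complex.add_re, Complex.ofReal_re, Complex.mul_re, Complex.I_re,
          mul_zero, Complex.ofReal_im, Complex.I_im, mul_one, sub_self, add_zero, Complex.sub_im,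
          Complex.add_im, Complex.mul_im, zero_add, Real.cos_zero] at this ⊢
        rw [← hx]
        have hy' : y ≤ L := hy
        calc _ ≤ Real.exp (ν * (x - y) - Real.exp (x - y)) *
              (A * Real.exp (b * y) * Real.exp (B * Real.exp L)) := by
              gcongr
              exact this.trans (by gcongr)
          _ = _ := by
            have : Real.exp (ν * (x - y) - Real.exp (x - y)) * Real.exp (b * y) =
              Real.exp (b * x) * Real.exp ((ν - b) * (x - y) - Real.exp (x - y)) := by
              rw [← Real.exp_add, ← Real.exp_add]; congr 1; ring
            linear_combination A * Real.exp (B * Real.exp L) * this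
    _ ≤ ∫ y : ℝ, A * Real.exp (b * x) * Real.exp (B * Real.exp L) *
        Real.exp ((ν - b) * (x - y) - Real.exp (x - y)) := by
        refine setIntegral_le_integral (hg'.const_mul _) (Eventually.of_forall fun y => ?_)
        positivity
    _ = _ := by rw [integral_const_mul, hi]

lemma vert_part_bound {b A B : ℝ} {f : ℂ → ℂ} (hf : Cls b A B f) (ν : ℕ)
    (ζ : ℂ) (hζ : ζ ∈ strip) (lam : ℝ) :
    ‖∫ s in (0:ℝ)..ζ.im, Ker ν (ζ - ((ζ.re + lam : ℝ) + s * Complex.I)) *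
      f ((ζ.re + lam : ℝ) + s * Complex.I)‖ ≤
      A * Real.exp (b * ζ.re) * Real.exp (B * Real.exp (ζ.re + lam)) *
        (Real.pi * Real.exp (-(ν - b) * lam + Real.exp (-lam))) := by
  have hζ' : |ζ.im| < Real.pi := hζ
  have hA := hf.hA
  have hB := hf.hB
  have h := intervalIntegral.norm_integral_le_of_norm_le_const (a := 0) (b := ζ.im)
    (f := fun s : ℝ => Ker ν (ζ - ((ζ.re + lam : ℝ) + s * Complex.I)) *
      f ((ζ.re + lam : ℝ) + s * Complex.I))
    (C := A * Real.exp (b * ζ.re) * Real.exp (B * Real.exp (ζ.re + lam)) *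
        Real.exp (-(ν - b) * lam + Real.exp (-lam))) (fun s hs => by
      have hs := Set.uIoc_subset_uIcc hs
      have hst : |s| < Real.pi := by
        rw [Set.mem_uIcc] at hs
        have := Real.pi_pos
        rw [abs_lt] at *
        rcases hs with hs | hs <;> constructor <;> linarith
      rw [norm_mul]
      have h1 := hf.str _ (strip_mem (ζ.re + lam) s hst)
      have h2 := norm_Ker_le ν (ζ - ((ζ.re + lam : ℝ) + s * Complex.I))
      simp only [Complex.sub_re, Complex.add_re, Complex.ofReal_re, Complex.mul_re, Complex.I_re,
          mul_zero, Complex.ofReal_im, Complex.I_im, mul_one, sub_self, add_zero] at h1 h2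
      have e : ζ.re - (ζ.re + lam) = - lam := by ring
      rw [e] at h2
      calc _ ≤ Real.exp (ν * (-lam) + Real.exp (-lam)) *
            (A * Real.exp (b * (ζ.re + lam)) * Real.exp (B * Real.exp (ζ.re + lam))) := by
            gcongr
        _ = _ := by
          have : Real.exp (ν * (-lam) + Real.exp (-lam)) * Real.exp (b * (ζ.re + lam)) =
             Real.exp (b * ζ.re) * Real.exp (-(ν - b) * lam + Real.exp (-lam)) := by
            rw [← Real.exp_add, ← Real.exp_add]; congr 1; ring
          linear_combination A * Real.exp (B * Real.exp (ζ.re + lam)) * this)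
  refine h.trans ?_
  rw [sub_zero]
  calc _ ≤ A * Real.exp (b * ζ.re) * Real.exp (B * Real.exp (ζ.re + lam)) *
        Real.exp (-(ν - b) * lam + Real.exp (-lam)) * Real.pi := by gcongr
    _ = _ := by ring

lemma right_part_bound {b A B : ℝ} {f : ℂ → ℂ} (hf : Cls b A B f) (ν : ℕ) (hν : b < ν)
    (ζ : ℂ) (lam : ℝ) :
    ‖∫ y in Set.Ioi (ζ.re + lam), Ker ν (ζ - (y : ℝ)) * f (y : ℝ)‖ ≤
      A * Real.exp (b * ζ.re) *
        (Real.exp (-(ν - b) * lam + Real.exp (-lam)) / (ν - b)) := by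
  have hi := (integrableOn_exp_mul_Ioi (a := -(ν - b)) (by linarith) (ζ.re + lam))
  calc _ ≤ ∫ y in Set.Ioi (ζ.re + lam), A * Real.exp (ν * ζ.re) *
        Real.exp (Real.exp (ζ.re - (ζ.re + lam))) * Real.exp (-(ν - b) * y) := by
        refine norm_integral_le_of_norm_le (hi.const_mul _) ?_
        filter_upwards [ae_restrict_mem measurableSet_Ioi] with y hy
        exact right_bound hf ν _ y ζ (le_of_lt hy)
    _ = _ := by
        rw [integral_const_mul, integral_exp_mul_Ioi (by linarith)]
        have : Real.exp (ν * ζ.re) * Real.exp (Real.exp (ζ.re - (ζ.re + lam))) *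
            Real.exp (-(ν - b) * (ζ.re + lam)) =
            Real.exp (b * ζ.re) * Real.exp (-(ν - b) * lam + Real.exp (-lam)) := by
          rw [← Real.exp_add, ← Real.exp_add, ← Real.exp_add]; congr 1; ring_nf
        have h0 : (ν : ℝ) - b ≠ 0 := by linarith
        have h1 : -((ν : ℝ) - b) ≠ 0 := neg_ne_zero.2 h0
        rw [neg_div_neg_eq]
        linear_combination (A / (ν - b)) * this

lemma Fext_strip_bound {b A B : ℝ} {f : ℂ → ℂ} (hf : Cls b A B f) (ν : ℕ) (hν : b < ν)
    (ζ : ℂ) (hζ : ζ ∈ strip) (lam : ℝ) :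
    ‖Fext f ν ζ‖ ≤ A * Real.exp (b * ζ.re) * Real.exp (B * Real.exp (ζ.re + lam)) *
      (Real.Gamma (ν - b) + (Real.pi + 1 / (ν - b)) *
        Real.exp (-(ν - b) * lam + Real.exp (-lam))) := by
  rw [Fext_eq hf ν hν ζ hζ (ζ.re + lam) ζ.im hζ (by simpa using Real.pi_pos)]
  have h1 := left_part_bound hf ν hν ζ hζ (ζ.re + lam)
  have h2 := vert_part_bound hf ν ζ hζ lam
  have h3 := right_part_bound hf ν hν ζ lam
  have hA := hf.hA
  have hB := hf.hB
  unfold Fc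
  refine (norm_add_le _ _).trans ?_
  refine (add_le_add_left (norm_sub_le _ _) _).trans ?_
  rw [norm_mul, Complex.norm_I, one_mul]
  have h4 : A * Real.exp (b * ζ.re) *
        (Real.exp (-(ν - b) * lam + Real.exp (-lam)) / (ν - b)) ≤
      A * Real.exp (b * ζ.re) * Real.exp (B * Real.exp (ζ.re + lam)) *
        (Real.exp (-(ν - b) * lam + Real.exp (-lam)) / (ν - b)) := by
    have : 1 ≤ Real.exp (B * Real.exp (ζ.re + lam)) := Real.one_le_exp (by positivity)
    have h0 : 0 < (ν : ℝ) - b := by linarith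
    have : A * Real.exp (b * ζ.re) * 1 ≤
      A * Real.exp (b * ζ.re) * Real.exp (B * Real.exp (ζ.re + lam)) := by gcongr
    rw [mul_one] at this
    gcongr
  calc _ ≤ _ := add_le_add (add_le_add h1 h2) (h3.trans h4)
    _ = _ := by ring

lemma Cls_Fext {b A B : ℝ} {f : ℂ → ℂ} (hf : Cls b A B f) (ν : ℕ) (hν : b < ν) :
    ∃ A' B', Cls b A' B' (Fext f ν) := by
  have h0 : 0 < (ν : ℝ) - b := by linarith
  have hG := Real.Gamma_pos_of_pos h0
  have hA := hf.hA
  have hB := hf.hB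
  refine ⟨A * (Real.Gamma (ν - b) + (Real.pi + 1 / (ν - b)) *
        Real.exp (-(ν - b) * 0 + Real.exp (-0))), B, by positivity, hB, Fext_diff hf ν hν, ?_, ?_⟩
  · intro y
    refine (Fext_real_bound hf ν hν y).trans ?_
    gcongr
    have : 0 ≤ (Real.pi + 1 / (ν - b)) * Real.exp (-(ν - b) * 0 + Real.exp (-0)) := by positivity
    linarith
  · intro w hw
    refine (Fext_strip_bound hf ν hν w hw 0).trans (le_of_eq ?_)
    rw [add_zero]; ring

/-- Rescaled convolution. -/
def Sc (f : ℂ → ℂ) (ν : ℕ) (ζ : ℂ) : ℂ :=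
  Fext f ν (ζ + (Real.log ν : ℝ)) / (Real.Gamma ν : ℝ)

lemma far_aux (v c : ℝ) (hc0 : 0 < c) (hcv : c ≤ |v - 1|) :
    1 + v ≤ (2 / c ^ 2 + 1 / c) * (v - 1) ^ 2 := by
  rw [← sq_abs (v - 1)]
  set w := |v - 1| with hw
  have h3 : 1 + v ≤ 2 + w := by linarith [le_abs_self (v - 1)]
  have h4 : 1 ≤ w / c := (one_le_div hc0).2 hcv
  have h5 : (2 / c ^ 2 + 1 / c) * w ^ 2 = 2 * (w / c) ^ 2 + w * (w / c) := by
    field_simp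
  rw [h5]
  have h0 : 0 ≤ w := abs_nonneg _
  have h6 : 1 ≤ (w / c) ^ 2 := one_le_pow₀ h4
  have h7 : w * 1 ≤ w * (w / c) := mul_le_mul_of_nonneg_left h4 h0
  linarith

set_option maxHeartbeats 800000 in
lemma equi_bound (b A B : ℝ) (hb : -1 ≤ b) (hA : 0 ≤ A) (hB : 0 ≤ B) (ζ : ℂ) (hζ : ζ ∈ strip)
    (η : ℝ) (hη : 0 < η) :
    ∃ C, 0 ≤ C ∧ ∀ f, Cls b A B f → ∀ y : ℝ,
      ‖Set.indicator (Set.Iic (ζ.re + Real.log 8)) (fun y : ℝ => f (y + ζ.im * Complex.I)) y - f ζ‖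
        ≤ η + C * (Real.exp (ζ.re - y) - 1) ^ 2 := by
  have hζ' : |ζ.im| < Real.pi := hζ
  set X := ζ.re with hX
  set ρ := Real.pi - |ζ.im| with hρ
  have hρ0 : 0 < ρ := by rw [hρ]; linarith
  set K0 := A * Real.exp (|b| * (|X| + ρ)) * Real.exp (B * Real.exp (X + ρ)) with hK0
  have hK00 : 0 ≤ K0 := by positivity
  have hball : Metric.ball ζ ρ ⊆ strip := by
    intro w hw
    rw [Metric.mem_ball, dist_eq_norm] at hw
    have h2 := Complex.abs_im_le_norm (w - ζ)
    simp only [Complex.sub_im] at h2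
    have h3 := abs_sub_abs_le_abs_sub w.im ζ.im
    show |w.im| < Real.pi
    rw [hρ] at hw
    linarith
  have hK : ∀ f, Cls b A B f → ∀ w ∈ Metric.ball ζ ρ, ‖f w‖ ≤ K0 := by
    intro f hf w hw
    refine (hf.str w (hball hw)).trans ?_
    rw [Metric.mem_ball, dist_eq_norm] at hw
    have h2 := Complex.abs_re_le_norm (w - ζ)
    simp only [Complex.sub_re] at h2
    have h4 := abs_sub_abs_le_abs_sub w.re X
    have h5 := (abs_le.1 (h2.trans hw.le)).2
    have h6 : b * w.re ≤ |b| * (|X| + ρ) := by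
      refine (le_abs_self _).trans ?_
      rw [abs_mul]
      gcongr
      rw [← hX] at h2
      linarith
    rw [hK0]
    gcongr
    linarith
  set δ := min (min 1 (ρ/2)) (η * ρ / (2 * K0 + 1)) with hδ
  have hδ0 : 0 < δ := by rw [hδ]; positivity
  set c := 1 - Real.exp (-δ) with hc
  have hc0 : 0 < c := by
    have : Real.exp (-δ) < 1 := by rw [Real.exp_lt_one_iff]; linarith
    rw [hc]; linarith
  set C0 := A * Real.exp (B * (8 * Real.exp X)) * Real.exp (b * X) * (8:ℝ) ^ |b| + K0 with hC0
  refine ⟨C0 * (2 / c ^ 2 + 1 / c), by positivity, ?_⟩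
  intro f hf y
  have hlog8 : 1 < Real.log 8 := by
    rw [Real.lt_log_iff_exp_lt (by norm_num)]
    linarith [Real.exp_one_lt_d9]
  have hwζ : (y + ζ.im * Complex.I : ℂ) - ζ = ((y - X : ℝ) : ℂ) := by
    apply Complex.ext <;> simp [hX]
  by_cases hy : |y - X| < δ
  · have h1 : y ∈ Set.Iic (X + Real.log 8) := by
      have := (abs_lt.1 hy).2
      have : δ ≤ 1 := (min_le_left _ _).trans (min_le_left _ _)
      show y ≤ _
      linarith
    rw [Set.indicator_of_mem h1]
    have hd : dist (y + ζ.im * Complex.I : ℂ) ζ < δ := by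
      rw [dist_eq_norm, hwζ, Complex.norm_real]; exact hy
    have hδρ : δ ≤ ρ / 2 := (min_le_left _ _).trans (min_le_right _ _)
    have hm : Set.MapsTo f (Metric.ball ζ ρ) (Metric.ball (f ζ) (2 * K0 + 1)) := by
      intro w hw
      rw [Metric.mem_ball, dist_eq_norm]
      have := norm_sub_le (f w) (f ζ)
      have := hK f hf w hw
      have := hK f hf ζ (Metric.mem_ball_self hρ0)
      linarith
    have := Complex.dist_le_div_mul_dist_of_mapsTo_ball (hf.diff.mono hball)
      (hm.mono_right Metric.ball_subset_closedBall)
      (z := (y + ζ.im * Complex.I : ℂ)) (by rw [Metric.mem_ball]; linarith)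
    rw [dist_eq_norm] at this
    refine this.trans ?_
    have h3 : δ ≤ η * ρ / (2 * K0 + 1) := min_le_right _ _
    have : (2 * K0 + 1) / ρ * dist (y + ζ.im * Complex.I : ℂ) ζ ≤
        (2 * K0 + 1) / ρ * (η * ρ / (2 * K0 + 1)) := by
      gcongr; exact hd.le.trans h3
    have e : (2 * K0 + 1) / ρ * (η * ρ / (2 * K0 + 1)) = η := by field_simp
    rw [e] at this
    have : 0 ≤ C0 * (2 / c ^ 2 + 1 / c) * (Real.exp (X - y) - 1) ^ 2 := by positivity
    linarith
  · push Not at hy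
    set v := Real.exp (X - y) with hv
    have hv0 : 0 < v := Real.exp_pos _
    have hcv : c ≤ |v - 1| := by
      rcases le_total y X with h | h
      · rw [abs_of_nonpos (by linarith)] at hy
        have h1 : δ + 1 ≤ v := by
          have := Real.add_one_le_exp (X - y)
          linarith
        have h2 := Real.add_one_le_exp (-δ)
        rw [abs_of_nonneg (by linarith)]
        linarith
      · rw [abs_of_nonneg (by linarith)] at hy
        have h1 : v ≤ Real.exp (-δ) := Real.exp_le_exp.2 (by linarith)
        rw [abs_of_nonpos (by linarith [Real.exp_lt_one_iff.2 (show -δ < 0 by linarith)])]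
        linarith
    have hbig : ‖Set.indicator (Set.Iic (X + Real.log 8)) (fun y : ℝ => f (y + ζ.im * Complex.I)) y
        - f ζ‖ ≤ C0 * (1 + v) := by
      have hKζ := hK f hf ζ (Metric.mem_ball_self hρ0)
      have h8 : 1 ≤ (8:ℝ) ^ |b| := Real.one_le_rpow (by norm_num) (abs_nonneg _)
      have h1 : ‖Set.indicator (Set.Iic (X + Real.log 8))
          (fun y : ℝ => f (y + ζ.im * Complex.I)) y‖ ≤
          A * Real.exp (B * (8 * Real.exp X)) * Real.exp (b * X) * (8:ℝ) ^ |b| * (1 + v) := by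
        by_cases hyL : y ∈ Set.Iic (X + Real.log 8)
        · rw [Set.indicator_of_mem hyL]
          have hyL' : y ≤ X + Real.log 8 := hyL
          have h2 := hf.str _ (strip_mem y ζ.im hζ')
          simp only [Complex.add_re, Complex.ofReal_re, Complex.mul_re, Complex.I_re,
            mul_zero, Complex.ofReal_im, Complex.I_im, mul_one, sub_self, add_zero] at h2
          refine h2.trans ?_
          have h3 : Real.exp y ≤ 8 * Real.exp X := by
            have := Real.exp_le_exp.2 hyL'
            rw [Real.exp_add, Real.exp_log (by norm_num)] at this
            linarith
          have h4 : Real.exp (b * y) ≤ Real.exp (b * X) * ((8:ℝ) ^ |b| * (1 + v)) := by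
            have e1 : Real.exp (b * y) = Real.exp (b * X) * Real.exp (b * (y - X)) := by
              rw [← Real.exp_add]; congr 1; ring
            rw [e1]
            gcongr
            rcases le_total X y with h | h
            · have h5 : Real.exp (b * (y - X)) ≤ (8:ℝ) ^ |b| := by
                rw [Real.rpow_def_of_pos (by norm_num)]
                apply Real.exp_le_exp.2
                rw [mul_comm]
                have := le_abs_self b
                have h6 := abs_nonneg b
                nlinarith
              nlinarith
            · have h5 : Real.exp (b * (y - X)) ≤ 1 + v := by
                rw [hv]
                rcases le_total 0 b with hb0 | hb0
                · have : Real.exp (b * (y - X)) ≤ 1 := by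
                    rw [Real.exp_le_one_iff]; nlinarith
                  linarith
                · have : Real.exp (b * (y - X)) ≤ Real.exp (X - y) := by
                    apply Real.exp_le_exp.2; nlinarith
                  linarith
              nlinarith
          calc _ ≤ A * (Real.exp (b * X) * ((8:ℝ) ^ |b| * (1 + v))) *
                Real.exp (B * (8 * Real.exp X)) := by gcongr
            _ = _ := by ring
        · rw [Set.indicator_of_notMem hyL, norm_zero]; positivity
      refine (norm_sub_le _ _).trans ?_
      have : ‖f ζ‖ ≤ K0 * (1 + v) := by nlinarith
      rw [hC0]; linarith
    refine hbig.trans ?_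
    rw [mul_assoc]
    refine (mul_le_mul_of_nonneg_left (far_aux v c hc0 hcv) (by positivity)).trans ?_
    linarith

/-- tail quantity -/
def tl (b : ℝ) (ν : ℕ) : ℝ := Real.exp (b * Real.log ν) *
  Real.exp (-(ν - b) * (Real.log 8 - Real.log ν) + Real.exp (-(Real.log 8 - Real.log ν))) /
    Real.Gamma ν

/-- gamma ratio -/
def rt (b : ℝ) (ν : ℕ) : ℝ := Real.exp (b * Real.log ν) * Real.Gamma (ν - b) / Real.Gamma ν

lemma tl_nonneg (b : ℝ) (ν : ℕ) : 0 ≤ tl b ν := by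
  have := Real.Gamma_nonneg_of_nonneg (Nat.cast_nonneg ν : (0:ℝ) ≤ ν)
  unfold tl; positivity

lemma tl_le (b : ℝ) (ν : ℕ) (hν : 1 ≤ ν) :
    tl b ν ≤ Real.exp (b * Real.log 8) * (ν * Real.exp (-(1/2) * ν)) := by
  have hν0 : (0:ℝ) < ν := by exact_mod_cast hν
  have hG : Real.Gamma ν * ν = (ν.factorial : ℝ) := by
    rw [mul_comm, ← Real.Gamma_add_one hν0.ne', Real.Gamma_nat_eq_factorial]
  have hGp := Real.Gamma_pos_of_pos hν0
  have h1 : Real.exp (-(Real.log 8 - Real.log ν)) = ν / 8 := by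
    rw [neg_sub, Real.exp_sub, Real.exp_log hν0, Real.exp_log (by norm_num)]
  have h2 := Real.pow_div_factorial_le_exp (ν : ℝ) hν0.le ν
  rw [div_le_iff₀ (by positivity)] at h2
  have h3 : (ν : ℝ) ^ ν = Real.exp (ν * Real.log ν) := by
    rw [Real.exp_nat_mul, Real.exp_log hν0]
  have hl8 : (2:ℝ) < Real.log 8 := by
    have : Real.log 8 = 3 * Real.log 2 := by
      rw [show (8:ℝ) = 2 ^ 3 by norm_num, Real.log_pow]; norm_num
    rw [this]; linarith [Real.log_two_gt_d9]
  rw [tl, h1, div_le_iff₀ hGp]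
  calc _ = Real.exp (b * Real.log 8) * (Real.exp (-ν * Real.log 8 + ν / 8) * (ν:ℝ) ^ ν) := by
        rw [h3, ← Real.exp_add, ← Real.exp_add, ← Real.exp_add]; congr 1; ring
    _ ≤ Real.exp (b * Real.log 8) * (Real.exp (-ν * Real.log 8 + ν / 8) *
        (Real.exp ν * ν.factorial)) := by gcongr
    _ = Real.exp (b * Real.log 8) * (ν.factorial * Real.exp (-ν * Real.log 8 + ν / 8 + ν)) := by
        rw [Real.exp_add (_ + _)]; ring
    _ ≤ Real.exp (b * Real.log 8) * (ν.factorial * Real.exp (-(1/2) * ν)) := by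
        gcongr
        nlinarith
    _ = _ := by rw [← hG]; ring

lemma tl_tendsto (b : ℝ) : Tendsto (tl b) atTop (𝓝 0) := by
  have h1 : Tendsto (fun x : ℝ => x ^ 1 * Real.exp (-(1/2) * x)) atTop (𝓝 0) := by
    have := Real.tendsto_pow_mul_exp_neg_atTop_nhds_zero 1
    have h2 := (this.comp (tendsto_id.const_mul_atTop (show (0:ℝ) < 1/2 by norm_num))).const_mul 2
    rw [mul_zero] at h2
    refine h2.congr (fun x => ?_)
    simp only [Function.comp, id]
    ring_nf
  have h2 := (h1.comp tendsto_natCast_atTop_atTop).const_mul (Real.exp (b * Real.log 8))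
  rw [mul_zero] at h2
  refine squeeze_zero' (Eventually.of_forall (tl_nonneg b)) ?_ h2
  filter_upwards [eventually_ge_atTop 1] with ν hν
  simpa [Function.comp] using tl_le b ν hν

lemma rt_le (ν0 ν : ℕ) (hν : 2 * ν0 + 1 ≤ ν) : rt (ν0 - 1/4) ν ≤ 2 ^ ν0 := by
  obtain ⟨n, rfl⟩ : ∃ n, ν = n + ν0 := ⟨ν - ν0, by omega⟩
  have hn : ν0 + 1 ≤ n := by omega
  have hn0 : (0:ℝ) < n := by exact_mod_cast (by omega : 0 < n)
  have hnu : (ν0 : ℝ) + 1 ≤ n := by exact_mod_cast hn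
  have hν0 : (0:ℝ) < ((n + ν0 : ℕ) : ℝ) := by exact_mod_cast (by omega : 0 < n + ν0)
  have hGn := Real.Gamma_pos_of_pos hn0
  have h1 : Real.Gamma (((n + ν0 : ℕ) : ℝ) - (ν0 - 1/4)) ≤ Real.Gamma n * (n:ℝ) ^ (1/4 : ℝ) := by
    have := Real.Gamma_mul_add_mul_le_rpow_Gamma_mul_rpow_Gamma (s := n) (t := n + 1) (a := 3/4)
      (b := 1/4) hn0 (by linarith) (by norm_num) (by norm_num) (by norm_num)
    have e : (3/4 : ℝ) * n + 1/4 * (n + 1) = ((n + ν0 : ℕ) : ℝ) - (ν0 - 1/4) := by push_cast; ring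
    rw [e] at this
    refine this.trans (le_of_eq ?_)
    rw [Real.Gamma_add_one hn0.ne', Real.mul_rpow hn0.le hGn.le,
      mul_comm ((n:ℝ) ^ (1/4 : ℝ)), ← mul_assoc, ← Real.rpow_add hGn]
    norm_num
  have h2 : Real.exp ((ν0 - 1/4) * Real.log ((n + ν0 : ℕ) : ℝ)) =
      ((n + ν0 : ℕ) : ℝ) ^ ν0 / ((n + ν0 : ℕ) : ℝ) ^ (1/4 : ℝ) := by
    rw [← Real.rpow_natCast, ← Real.rpow_sub hν0, Real.rpow_def_of_pos hν0, mul_comm]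
  have h3 : ∀ k : ℕ, k ≤ ν0 → Real.Gamma n * ((n + ν0 : ℕ) : ℝ) ^ k ≤
      2 ^ k * Real.Gamma ((n + k : ℕ) : ℝ) := by
    intro k
    induction k with
    | zero => intro _; simp
    | succ k ih =>
      intro hk
      have := ih (by omega)
      have hk0 : (0:ℝ) < ((n + k : ℕ) : ℝ) := by exact_mod_cast (by omega : 0 < n + k)
      have e : ((n + (k + 1) : ℕ) : ℝ) = ((n + k : ℕ) : ℝ) + 1 := by push_cast; ring
      have h5 : ((n + ν0 : ℕ) : ℝ) ≤ 2 * ((n + k : ℕ) : ℝ) := by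
        exact_mod_cast (by omega : n + ν0 ≤ 2 * (n + k))
      have := Real.Gamma_pos_of_pos hk0
      rw [e, Real.Gamma_add_one hk0.ne', pow_succ, pow_succ]
      calc _ = (Real.Gamma n * ((n + ν0 : ℕ) : ℝ) ^ k) * ((n + ν0 : ℕ) : ℝ) := by ring
        _ ≤ (2 ^ k * Real.Gamma ((n + k : ℕ) : ℝ)) * (2 * ((n + k : ℕ) : ℝ)) := by gcongr
        _ = _ := by ring
  have h4 := h3 ν0 le_rfl
  have hGν := Real.Gamma_pos_of_pos hν0
  rw [rt, div_le_iff₀ hGν, h2]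
  refine le_trans ?_ h4
  have h6 : (n : ℝ) ^ (1/4 : ℝ) ≤ ((n + ν0 : ℕ) : ℝ) ^ (1/4 : ℝ) := by
    apply Real.rpow_le_rpow hn0.le _ (by norm_num)
    push_cast; linarith [(Nat.cast_nonneg ν0 : (0:ℝ) ≤ ν0)]
  have h7 : 0 < ((n + ν0 : ℕ) : ℝ) ^ (1/4 : ℝ) := Real.rpow_pos_of_pos hν0 _
  calc _ ≤ ((n + ν0 : ℕ) : ℝ) ^ ν0 / ((n + ν0 : ℕ) : ℝ) ^ (1/4 : ℝ) *
        (Real.Gamma n * ((n + ν0 : ℕ) : ℝ) ^ (1/4 : ℝ)) := by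
        gcongr
        exact h1.trans (by gcongr)
    _ = _ := by field_simp

lemma shift_mem (ζ : ℂ) (hζ : ζ ∈ strip) (a : ℝ) : ζ + (a : ℝ) ∈ strip := by
  show |(ζ + (a : ℝ)).im| < Real.pi
  have h : |ζ.im| < Real.pi := hζ
  simpa using h

lemma Cls_Sc {b A B : ℝ} {f : ℂ → ℂ} (hf : Cls b A B f) (ν : ℕ) (hν : b < ν) (hν1 : 1 ≤ ν) :
    Cls b (A * (rt b ν + (Real.pi + 1 / (ν - b)) * tl b ν)) (8 * B) (Sc f ν) := by
  have h0 : 0 < (ν : ℝ) - b := by linarith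
  have hν0 : (0:ℝ) < ν := by exact_mod_cast hν1
  have hGp := Real.Gamma_pos_of_pos hν0
  have hG := Real.Gamma_pos_of_pos h0
  have hA := hf.hA
  have hB := hf.hB
  have htl := tl_nonneg b ν
  have hrt : 0 ≤ rt b ν := by unfold rt; positivity
  refine ⟨by positivity, by positivity, ?_, ?_, ?_⟩
  · refine DifferentiableOn.div_const ?_ _
    refine (Fext_diff hf ν hν).comp (by fun_prop) (fun ζ hζ => shift_mem ζ hζ _)
  · intro y
    have h1 := Fext_real_bound hf ν hν (y + Real.log ν)
    rw [Sc, norm_div, Complex.norm_real, Real.norm_of_nonneg hGp.le, div_le_iff₀ hGp,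
      ← Complex.ofReal_add]
    refine h1.trans ?_
    have : 0 ≤ (Real.pi + 1 / (ν - b)) * tl b ν := by positivity
    calc _ = A * rt b ν * Real.exp (b * y) * Real.Gamma ν := by
          rw [rt, mul_add, Real.exp_add]; field_simp
      _ ≤ _ := by gcongr; linarith
  · intro w hw
    have h1 := Fext_strip_bound hf ν hν (w + (Real.log ν : ℝ)) (shift_mem w hw _)
      (Real.log 8 - Real.log ν)
    rw [Sc, norm_div, Complex.norm_real, Real.norm_of_nonneg hGp.le, div_le_iff₀ hGp]
    refine h1.trans (le_of_eq ?_)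
    simp only [Complex.add_re, Complex.ofReal_re]
    rw [show w.re + Real.log ν + (Real.log 8 - Real.log ν) = w.re + Real.log 8 by ring,
      Real.exp_add w.re, Real.exp_log (by norm_num : (0:ℝ) < 8), tl, rt, mul_add b, Real.exp_add]
    field_simp

/-- Uniform class for rescaled convolutions. -/
lemma Cls_Sc_unif (ν0 : ℕ) (A B : ℝ) (hA : 0 ≤ A) : ∀ᶠ ν : ℕ in atTop, ∀ f, Cls (ν0 - 1/4) A B f →
    Cls (ν0 - 1/4) (A * (2 ^ ν0 + (Real.pi + 1))) (8 * B) (Sc f ν) := by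
  filter_upwards [eventually_ge_atTop (2 * ν0 + 1),
    (tl_tendsto (ν0 - 1/4)).eventually_le_const one_pos] with ν hν ht f hf
  have hν' : (2 * (ν0 : ℝ) + 1) ≤ ν := by exact_mod_cast hν
  have h0 := (Nat.cast_nonneg ν0 : (0:ℝ) ≤ ν0)
  have hc := Cls_Sc hf ν (by linarith) (by omega)
  have h1 : (1:ℝ) / (ν - (ν0 - 1/4)) ≤ 1 := by
    rw [div_le_one (by linarith)]; linarith
  have hle : A * (rt (ν0 - 1/4) ν + (Real.pi + 1 / (ν - (ν0 - 1/4))) * tl (ν0 - 1/4) ν) ≤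
      A * (2 ^ ν0 + (Real.pi + 1)) := by
    have h2 := rt_le ν0 ν hν
    have h3 := tl_nonneg (ν0 - 1/4) ν
    have h4 := Real.pi_pos
    have : (Real.pi + 1 / (ν - (ν0 - 1/4))) * tl (ν0 - 1/4) ν ≤ (Real.pi + 1) * 1 := by
      gcongr
    gcongr
    linarith
  refine ⟨by positivity, hc.hB, hc.diff, fun y => (hc.real y).trans (by gcongr),
    fun w hw => (hc.str w hw).trans (by gcongr)⟩

lemma moment_integrable (ν : ℕ) (hν : 1 ≤ ν) (η C X : ℝ) :
    Integrable (fun y : ℝ => Real.exp (ν * (X + Real.log ν - y) - Real.exp (X + Real.log ν - y)) *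
      (η + C * (Real.exp (X - y) - 1) ^ 2)) ∧
    ∫ y : ℝ, Real.exp (ν * (X + Real.log ν - y) - Real.exp (X + Real.log ν - y)) *
      (η + C * (Real.exp (X - y) - 1) ^ 2) = Real.Gamma ν * (η + C / ν) := by
  have hν0 : (0:ℝ) < ν := by exact_mod_cast hν
  have i0 := gumbel_integrable ν hν0
  have i1 := gumbel_integrable (ν + 1) (by linarith)
  have i2 := gumbel_integrable (ν + 2) (by linarith)
  have e : (fun y : ℝ => Real.exp (ν * (X + Real.log ν - y) - Real.exp (X + Real.log ν - y)) *
      (η + C * (Real.exp (X - y) - 1) ^ 2)) = fun y => (fun u : ℝ =>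
      (η + C) * Real.exp (ν * u - Real.exp u) - (2 * C / ν) * Real.exp ((ν + 1) * u - Real.exp u)
      + (C / ν ^ 2) * Real.exp ((ν + 2) * u - Real.exp u)) (X + Real.log ν - y) := by
    funext y
    simp only
    set u := X + Real.log ν - y with hu
    have h1 : Real.exp (X - y) = Real.exp u / ν := by
      rw [hu, show X + Real.log ν - y = (X - y) + Real.log ν by ring, Real.exp_add,
        Real.exp_log hν0]; field_simp
    have h2 : Real.exp ((ν + 1) * u - Real.exp u) = Real.exp (ν * u - Real.exp u) * Real.exp u := by
      rw [← Real.exp_add]; congr 1; ring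
    have h3 : Real.exp ((ν + 2) * u - Real.exp u) =
        Real.exp (ν * u - Real.exp u) * Real.exp u ^ 2 := by
      rw [← Real.exp_nat_mul, ← Real.exp_add]; congr 1; push_cast; ring
    rw [h1, h2, h3]
    field_simp
    ring
  have iu : Integrable (fun u : ℝ =>
      (η + C) * Real.exp (ν * u - Real.exp u) - (2 * C / ν) * Real.exp ((ν + 1) * u - Real.exp u)
      + (C / ν ^ 2) * Real.exp ((ν + 2) * u - Real.exp u)) :=
    ((i0.const_mul _).sub (i1.const_mul _)).add (i2.const_mul _)
  rw [e]
  refine ⟨iu.comp_sub_left _, ?_⟩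
  rw [integral_sub_left_eq_self (fun u : ℝ =>
      (η + C) * Real.exp (ν * u - Real.exp u) - (2 * C / ν) * Real.exp ((ν + 1) * u - Real.exp u)
      + (C / ν ^ 2) * Real.exp ((ν + 2) * u - Real.exp u)) volume]
  have i01 : Integrable (fun u : ℝ => (η + C) * Real.exp (ν * u - Real.exp u) -
      (2 * C / ν) * Real.exp ((ν + 1) * u - Real.exp u)) := (i0.const_mul _).sub (i1.const_mul _)
  rw [integral_add i01 (i2.const_mul _),
    integral_sub (i0.const_mul _) (i1.const_mul _), integral_const_mul, integral_const_mul,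
    integral_const_mul, gumbel_integral _ hν0, gumbel_integral _ (by linarith),
    gumbel_integral _ (by linarith), show (ν : ℝ) + 2 = ν + 1 + 1 by ring,
    Real.Gamma_add_one (show (ν:ℝ) + 1 ≠ 0 by linarith), Real.Gamma_add_one hν0.ne']
  field_simp
  ring

lemma Sc_close {b A B : ℝ} (hb : -1 ≤ b) (hA : 0 ≤ A) (hB : 0 ≤ B) (ζ : ℂ) (hζ : ζ ∈ strip)
    (ε : ℝ) (hε : 0 < ε) :
    ∀ᶠ ν : ℕ in atTop, ∀ f, Cls b A B f → ‖Sc f ν ζ - f ζ‖ ≤ ε := by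
  obtain ⟨C, hC, hclose⟩ := equi_bound b A B hb hA hB ζ hζ (ε / 2) (by positivity)
  set K := A * Real.exp (b * ζ.re) * Real.exp (B * (8 * Real.exp ζ.re)) with hK
  have hK0 : 0 ≤ K := by positivity
  have hlim : Tendsto (fun ν : ℕ => ε / 2 + C / ν + K * (Real.pi + 1) * tl b ν) atTop
      (𝓝 (ε / 2 + 0 + K * (Real.pi + 1) * 0)) :=
    (tendsto_const_nhds.add (tendsto_const_nhds.div_atTop tendsto_natCast_atTop_atTop)).add
      ((tl_tendsto b).const_mul _)
  filter_upwards [hlim.eventually_le_const (show ε / 2 + 0 + K * (Real.pi + 1) * 0 < ε by linarith),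
    eventually_ge_atTop 1,
    (tendsto_natCast_atTop_atTop (R := ℝ)).eventually_ge_atTop (b + 1)] with ν h1 hν1 hνb f hf
  refine le_trans ?_ h1
  have hνb' : b < ν := by linarith
  have h0 : 0 < (ν : ℝ) - b := by linarith
  have hν0 : (0:ℝ) < ν := by exact_mod_cast hν1
  have hGp := Real.Gamma_pos_of_pos hν0
  set θ := ζ.im with hθ
  set X := ζ.re with hX
  set ζ' := ζ + (Real.log ν : ℝ) with hζ'
  have him : ζ'.im = θ := by rw [hζ', Complex.add_im, Complex.ofReal_im, add_zero]
  have hre : ζ'.re = X + Real.log ν := by rw [hζ', Complex.add_re, Complex.ofReal_re]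
  set lam := Real.log 8 - Real.log ν with hlam
  have hL : ζ'.re + lam = X + Real.log 8 := by rw [hre, hlam]; ring
  have hs' : ζ' ∈ strip := shift_mem ζ hζ _
  have hF := Fext_eq hf ν hνb' ζ' hs' (ζ'.re + lam) ζ'.im hs' (by simpa using Real.pi_pos)
  have b2 := vert_part_bound hf ν ζ' hs' lam
  have b3 := right_part_bound hf ν hνb' ζ' lam
  have hexpL : Real.exp (X + Real.log 8) = 8 * Real.exp X := by
    rw [Real.exp_add, Real.exp_log (by norm_num)]; ring
  -- main part
  have b1 : ‖(∫ y in Set.Iic (ζ'.re + lam), Ker ν (ζ' - (y + ζ'.im * Complex.I)) *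
      f (y + ζ'.im * Complex.I)) - (Real.Gamma ν : ℝ) * f ζ‖ ≤ Real.Gamma ν * (ε / 2 + C / ν) := by
    rw [hL, him]
    obtain ⟨mi, mv⟩ := moment_integrable ν hν1 (ε/2) C X
    have hker : ∀ y : ℝ, Ker ν (ζ' - (y + θ * Complex.I)) =
        ((Real.exp (ν * (X + Real.log ν - y) - Real.exp (X + Real.log ν - y)) : ℝ) : ℂ) := by
      intro y
      have : ζ' - (y + θ * Complex.I) = ((X + Real.log ν - y : ℝ) : ℂ) := by
        apply Complex.ext
        · simp only [Complex.sub_re, Complex.add_re, hre, Complex.mul_re, Complex.ofReal_re, Complex.ofReal_im, Complex.I_re, Complex.I_im]; ring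
        · simp only [Complex.sub_im, Complex.add_im, him, Complex.mul_im, Complex.ofReal_re, Complex.ofReal_im, Complex.I_re, Complex.I_im]; ring
      rw [this, Ker]; push_cast; rfl
    have g1 := gumbel_integrable ν hν0
    have g1' : Integrable (fun y : ℝ => Real.exp (ν * (X + Real.log ν - y) -
        Real.exp (X + Real.log ν - y))) := g1.comp_sub_left (X + Real.log ν)
    have g2 : ∫ y : ℝ, Real.exp (ν * (X + Real.log ν - y) -
        Real.exp (X + Real.log ν - y)) = Real.Gamma ν := by
      rw [integral_sub_left_eq_self (fun u : ℝ => Real.exp (ν * u - Real.exp u)) volume]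
      exact gumbel_integral _ hν0
    have i1 := left_integrable hf ν hνb' ζ' (X + Real.log 8) θ (him ▸ hs')
      (by rw [him]; simpa using Real.pi_pos)
    have e1 : (Real.Gamma ν : ℝ) * f ζ = ∫ y : ℝ, Ker ν (ζ' - (y + θ * Complex.I)) * f ζ := by
      simp only [hker]
      rw [integral_mul_const, integral_complex_ofReal, g2]
    have i2 : Integrable (fun y : ℝ => Ker ν (ζ' - (y + θ * Complex.I)) * f ζ) := by
      simp only [hker]
      exact g1'.ofReal.mul_const _
    rw [e1, ← integral_indicator measurableSet_Iic,
      ← integral_sub (i1.integrable_indicator measurableSet_Iic) i2, ← mv]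
    refine norm_integral_le_of_norm_le mi (Eventually.of_forall fun y => ?_)
    have e2 : Set.indicator (Set.Iic (X + Real.log 8)) (fun y : ℝ =>
        Ker ν (ζ' - (y + θ * Complex.I)) * f (y + θ * Complex.I)) y -
        Ker ν (ζ' - (y + θ * Complex.I)) * f ζ = Ker ν (ζ' - (y + θ * Complex.I)) *
        (Set.indicator (Set.Iic (X + Real.log 8)) (fun y : ℝ => f (y + θ * Complex.I)) y - f ζ) := by
      by_cases hy : y ∈ Set.Iic (X + Real.log 8)
      · rw [Set.indicator_of_mem hy, Set.indicator_of_mem hy]; ring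
      · rw [Set.indicator_of_notMem hy, Set.indicator_of_notMem hy]; ring
    rw [e2, norm_mul, hker, Complex.norm_real, Real.norm_of_nonneg (Real.exp_pos _).le]
    gcongr
    exact hclose f hf y
  have e3 : Sc f ν ζ - f ζ = (Fc f ν (ζ'.re + lam) ζ'.im ζ' - (Real.Gamma ν : ℝ) * f ζ) /
      (Real.Gamma ν : ℝ) := by
    rw [Sc, ← hζ', hF]
    have : ((Real.Gamma ν : ℝ) : ℂ) ≠ 0 := by exact_mod_cast hGp.ne'
    field_simp
  rw [e3, norm_div, Complex.norm_real, Real.norm_of_nonneg hGp.le, div_le_iff₀ hGp]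
  have e4 : Fc f ν (ζ'.re + lam) ζ'.im ζ' - (Real.Gamma ν : ℝ) * f ζ =
    ((∫ y in Set.Iic (ζ'.re + lam), Ker ν (ζ' - (y + ζ'.im * Complex.I)) *
      f (y + ζ'.im * Complex.I)) - (Real.Gamma ν : ℝ) * f ζ) -
      Complex.I * (∫ s in (0:ℝ)..ζ'.im, Ker ν (ζ' - ((ζ'.re + lam : ℝ) + s * Complex.I)) *
      f ((ζ'.re + lam : ℝ) + s * Complex.I)) +
      ∫ y in Set.Ioi (ζ'.re + lam), Ker ν (ζ' - (y : ℝ)) * f (y : ℝ) := by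
    rw [Fc]; ring
  rw [e4]
  refine (norm_add_le _ _).trans ((add_le_add_left (norm_sub_le _ _) _).trans ?_)
  rw [norm_mul, Complex.norm_I, one_mul]
  refine (add_le_add (add_le_add b1 b2) b3).trans ?_
  have hexp : A * Real.exp (b * ζ'.re) * Real.exp (B * Real.exp (ζ'.re + lam)) *
      Real.exp (-(ν - b) * lam + Real.exp (-lam)) = K * (tl b ν * Real.Gamma ν) := by
    rw [hL, hexpL, hre, tl, hK, mul_add b, Real.exp_add, ← hlam]
    field_simp
  have hge : A * Real.exp (b * ζ'.re) * Real.exp (-(ν - b) * lam + Real.exp (-lam)) ≤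
      K * (tl b ν * Real.Gamma ν) := by
    rw [← hexp]
    have : 1 ≤ Real.exp (B * Real.exp (ζ'.re + lam)) := Real.one_le_exp (by positivity)
    have h5 : A * Real.exp (b * ζ'.re) * 1 ≤
      A * Real.exp (b * ζ'.re) * Real.exp (B * Real.exp (ζ'.re + lam)) := by gcongr
    rw [mul_one] at h5
    gcongr
  have h6 : A * Real.exp (b * ζ'.re) * (Real.exp (-(ν - b) * lam + Real.exp (-lam)) / (ν - b)) ≤
      K * (tl b ν * Real.Gamma ν) := by
    refine le_trans ?_ hge
    gcongr
    exact div_le_self (Real.exp_pos _).le (by linarith)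
  have h7 : A * Real.exp (b * ζ'.re) * Real.exp (B * Real.exp (ζ'.re + lam)) *
      (Real.pi * Real.exp (-(ν - b) * lam + Real.exp (-lam))) = 
      Real.pi * (K * (tl b ν * Real.Gamma ν)) := by rw [← hexp]; ring
  rw [h7]
  calc _ ≤ Real.Gamma ν * (ε / 2 + C / ν) + Real.pi * (K * (tl b ν * Real.Gamma ν)) + 
      K * (tl b ν * Real.Gamma ν) := by linarith
    _ = _ := by ring

/-- Bessel-Clifford function. -/
def bc (ν : ℕ) (q : ℝ) : ℝ := ∑' k : ℕ, (-1 : ℝ) ^ k * q ^ k / (k.factorial * (ν + k).factorial)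

lemma one_le_fact (n : ℕ) : (1:ℝ) ≤ n.factorial := by exact_mod_cast Nat.factorial_pos n

lemma bc_term_le (ν k : ℕ) (q : ℝ) :
    ‖(-1 : ℝ) ^ k * q ^ k / (k.factorial * (ν + k).factorial)‖ ≤ |q| ^ k / k.factorial := by
  rw [norm_div, norm_mul, norm_pow, norm_neg, norm_one, one_pow, one_mul, norm_pow,
    Real.norm_eq_abs, norm_mul, Real.norm_of_nonneg (by positivity),
    Real.norm_of_nonneg (by positivity)]
  have := one_le_fact (ν + k)
  gcongr
  nlinarith [one_le_fact k]

lemma bc_summable (ν : ℕ) (q : ℝ) :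
    Summable (fun k : ℕ => (-1 : ℝ) ^ k * q ^ k / (k.factorial * (ν + k).factorial)) :=
  Summable.of_norm_bounded (Real.summable_pow_div_factorial |q|) (fun k => bc_term_le ν k q)

lemma bc_hasDerivAt (ν : ℕ) (q : ℝ) : HasDerivAt (bc ν) (-bc (ν + 1) q) q := by
  set R := |q| + 1 with hR
  have hR0 : 0 < R := by positivity
  have hu : Summable (fun k : ℕ => (k : ℝ) * R ^ (k - 1) / k.factorial) := by
    rw [← summable_nat_add_iff 1]
    refine (Real.summable_pow_div_factorial R).congr (fun k => ?_)
    rw [Nat.factorial_succ]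
    push_cast
    have : (k:ℝ) + 1 ≠ 0 := by positivity
    field_simp
  have key := hasDerivAt_tsum_of_isPreconnected (𝕜 := ℝ) (F := ℝ)
    (g := fun k q => (-1 : ℝ) ^ k * q ^ k / (k.factorial * (ν + k).factorial))
    (g' := fun k q => (-1 : ℝ) ^ k * (k * q ^ (k - 1)) / (k.factorial * (ν + k).factorial))
    (y₀ := 0) (y := q) hu (t := Metric.ball 0 R) Metric.isOpen_ball
    (convex_ball 0 R).isPreconnected
    (fun k y _ => ((hasDerivAt_pow k y).const_mul _).div_const _)
    (fun k y hy => by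
      rw [norm_div, norm_mul, norm_pow, norm_neg, norm_one, one_pow, one_mul, norm_mul, norm_pow,
        norm_mul, Real.norm_natCast, Real.norm_natCast, Real.norm_natCast]
      have := one_le_fact (ν + k)
      have hy' : ‖y‖ ≤ R := by simpa using (Metric.mem_ball.1 hy).le
      gcongr
      nlinarith [one_le_fact k]) (Metric.mem_ball_self hR0) (bc_summable ν 0)
    (by rw [Metric.mem_ball, dist_zero_right, Real.norm_eq_abs, hR]; linarith)
  have e : ∑' k : ℕ, (-1 : ℝ) ^ k * (k * q ^ (k - 1)) / (k.factorial * (ν + k).factorial) =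
      - bc (ν + 1) q := by
    have hs : Summable (fun k : ℕ => (-1 : ℝ) ^ k * (k * q ^ (k - 1)) /
        (k.factorial * (ν + k).factorial)) := by
      rw [← summable_nat_add_iff 1]
      refine (bc_summable (ν + 1) q).neg.congr (fun k => ?_)
      rw [Nat.factorial_succ, pow_succ, show ν + (k + 1) = ν + 1 + k by ring]
      push_cast
      have : (k:ℝ) + 1 ≠ 0 := by positivity
      field_simp
    rw [hs.tsum_eq_zero_add]
    simp only [Nat.cast_zero, zero_mul, mul_zero, zero_div, zero_add]
    rw [bc, ← tsum_neg]
    refine tsum_congr (fun k => ?_)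
    rw [Nat.factorial_succ, pow_succ, show ν + (k + 1) = ν + 1 + k by ring]
    push_cast
    have : (k:ℝ) + 1 ≠ 0 := by positivity
    field_simp
  rw [e] at key
  exact key

lemma bc_ode (ν : ℕ) (q : ℝ) : q * bc (ν + 2) q = (ν + 1) * bc (ν + 1) q - bc ν q := by
  have h1 : q * bc (ν + 2) q = ∑' k : ℕ, (-1 : ℝ) ^ (k + 1) * (-(k + 1)) * q ^ (k + 1) /
      ((k + 1).factorial * (ν + 1 + (k + 1)).factorial) := by
    rw [bc, ← tsum_mul_left]
    refine tsum_congr (fun k => ?_)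
    rw [Nat.factorial_succ, show ν + 1 + (k + 1) = ν + 2 + k by ring]
    push_cast
    have : (k:ℝ) + 1 ≠ 0 := by positivity
    field_simp
    ring
  have hs : Summable (fun k : ℕ => (-1 : ℝ) ^ k * (-(k:ℝ)) * q ^ k /
      (k.factorial * (ν + 1 + k).factorial)) := by
    rw [← summable_nat_add_iff 1]
    refine ((bc_summable (ν + 2) q).mul_left q).congr (fun k => ?_)
    rw [Nat.factorial_succ, show ν + 1 + (k + 1) = ν + 2 + k by ring]
    push_cast
    have : (k:ℝ) + 1 ≠ 0 := by positivity
    field_simp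
    ring
  have h2 : q * bc (ν + 2) q = ∑' k : ℕ, (-1 : ℝ) ^ k * (-(k:ℝ)) * q ^ k /
      (k.factorial * (ν + 1 + k).factorial) := by
    rw [hs.tsum_eq_zero_add, h1]
    simp
  rw [h2, bc, bc, ← tsum_mul_left, ← ((bc_summable (ν + 1) q).mul_left _).tsum_sub (bc_summable ν q)]
  refine tsum_congr (fun k => ?_)
  rw [show ν + 1 + k = (ν + k) + 1 by ring, Nat.factorial_succ]
  push_cast
  have : (ν:ℝ) + k + 1 ≠ 0 := by positivity
  field_simp
  ring

/-- Decay of the Bessel-Clifford function. -/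
lemma bc_decay (ν : ℕ) : ∃ C, 0 ≤ C ∧ ∀ q : ℝ, 1 ≤ q → |bc ν q| ≤ C * q ^ (-((ν:ℝ) / 2 + 1 / 4)) := by
  set α : ℝ := ν + 1/2 with hα
  set κ : ℝ := α * (α - 1) with hκ
  set F : ℝ → ℝ := fun x => x ^ α * bc ν (x ^ 2) with hF
  set D : ℝ → ℝ := fun x => x ^ α * (α / x * bc ν (x ^ 2) - 2 * x * bc (ν + 1) (x ^ 2)) with hD
  have hbc : ∀ n (x : ℝ), HasDerivAt (fun x => bc n (x ^ 2)) (-bc (n + 1) (x ^ 2) * (2 * x)) x := by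
    intro n x
    have := (bc_hasDerivAt n (x ^ 2)).comp x (hasDerivAt_pow 2 x)
    refine this.congr_deriv ?_
    simp
  have hpw : ∀ x : ℝ, 0 < x → HasDerivAt (fun x : ℝ => x ^ α) (α * (x ^ α / x)) x := by
    intro x hx
    have := Real.hasDerivAt_rpow_const (p := α) (Or.inl hx.ne')
    rwa [Real.rpow_sub_one hx.ne'] at this
  have hFd : ∀ x : ℝ, 0 < x → HasDerivAt F (D x) x := by
    intro x hx
    have := (hpw x hx).mul (hbc ν x)
    refine this.congr_deriv ?_
    simp only [hD]
    field_simp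
    ring
  have hDd : ∀ x : ℝ, 0 < x → HasDerivAt D ((κ / x ^ 2 - 4) * F x) x := by
    intro x hx
    have h1 := ((((hasDerivAt_id x).inv hx.ne').const_mul α).mul (hbc ν x)).sub
      (((hasDerivAt_id x).const_mul 2).mul (hbc (ν + 1) x))
    have := (hpw x hx).mul h1
    refine this.congr_deriv ?_
    have ode := bc_ode ν (x ^ 2)
    simp only [hF, hκ, id, Pi.mul_apply, Pi.sub_apply, Pi.inv_apply]
    have e : bc (ν + 1 + 1) (x ^ 2) = ((ν + 1) * bc (ν + 1) (x ^ 2) - bc ν (x ^ 2)) / x ^ 2 := by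
      rw [← ode]; field_simp
    rw [e, hα]
    field_simp
    ring
  set E : ℝ → ℝ := fun x => ((D x) ^ 2 + 4 * (F x) ^ 2) * Real.exp (|κ| / 2 * x⁻¹) with hE
  have hEd : ∀ x : ℝ, 0 < x → HasDerivAt E
      ((2 * (κ / x ^ 2) * (F x * D x) - |κ| / (2 * x ^ 2) * ((D x) ^ 2 + 4 * (F x) ^ 2)) *
        Real.exp (|κ| / 2 * x⁻¹)) x := by
    intro x hx
    have h1 := (((hDd x hx).pow 2).add (((hFd x hx).pow 2).const_mul 4)).mul
      ((((hasDerivAt_id x).inv hx.ne').const_mul (|κ| / 2)).exp)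
    refine h1.congr_deriv ?_
    simp only [id, Pi.add_apply, Pi.pow_apply, Pi.inv_apply]
    field_simp
    ring
  have hanti : AntitoneOn E (Set.Ici 1) := by
    refine antitoneOn_of_deriv_nonpos (convex_Ici 1) ?_ ?_ ?_
    · intro x hx
      have hx' : (1:ℝ) ≤ x := hx
      exact (hEd x (by linarith)).continuousAt.continuousWithinAt
    · intro x hx
      rw [interior_Ici] at hx
      have hx' : (1:ℝ) < x := hx
      exact (hEd x (by linarith)).differentiableAt.differentiableWithinAt
    · intro x hx
      rw [interior_Ici] at hx
      have hx' : (1:ℝ) < x := hx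
      rw [(hEd x (by linarith)).deriv]
      refine mul_nonpos_of_nonpos_of_nonneg ?_ (Real.exp_pos _).le
      have e : 2 * (κ / x ^ 2) * (F x * D x) - |κ| / (2 * x ^ 2) * ((D x) ^ 2 + 4 * (F x) ^ 2) =
        (κ * (4 * (F x * D x)) - |κ| * ((D x) ^ 2 + 4 * (F x) ^ 2)) / (2 * x ^ 2) := by
        field_simp
        ring
      rw [e]
      refine div_nonpos_of_nonpos_of_nonneg ?_ (by positivity)
      have h1 : |4 * (F x * D x)| ≤ (D x) ^ 2 + 4 * (F x) ^ 2 := by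
        rw [abs_le]; constructor <;> nlinarith [sq_nonneg (D x - 2 * F x), sq_nonneg (D x + 2 * F x)]
      have h2 : κ * (4 * (F x * D x)) ≤ |κ| * |4 * (F x * D x)| := by
        rw [← abs_mul]; exact le_abs_self _
      have h3 := mul_le_mul_of_nonneg_left h1 (abs_nonneg κ)
      linarith
  have hE1 : 0 ≤ E 1 := by simp only [hE]; positivity
  refine ⟨Real.sqrt (E 1), Real.sqrt_nonneg _, ?_⟩
  intro q hq
  set x := Real.sqrt q with hx
  have hq0 : 0 < q := by linarith
  have hx1 : 1 ≤ x := by rw [hx]; exact Real.one_le_sqrt.2 hq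
  have hxq : x ^ 2 = q := Real.sq_sqrt hq0.le
  have h1 := hanti (Set.mem_Ici.2 le_rfl) (Set.mem_Ici.2 hx1) hx1
  have h2 : (F x) ^ 2 ≤ E x := by
    simp only [hE]
    have : 1 ≤ Real.exp (|κ| / 2 * x⁻¹) := Real.one_le_exp (by positivity)
    nlinarith [sq_nonneg (D x), sq_nonneg (F x), mul_nonneg (sq_nonneg (D x)) (sub_nonneg.2 this), mul_nonneg (sq_nonneg (F x)) (sub_nonneg.2 this)]
  have h3 : |F x| ≤ Real.sqrt (E 1) := Real.abs_le_sqrt (h2.trans h1)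
  have h4 : x ^ α = q ^ ((ν:ℝ) / 2 + 1 / 4) := by
    rw [hx, Real.sqrt_eq_rpow, ← Real.rpow_mul hq0.le]; congr 1; rw [hα]; ring
  have h5 : 0 < q ^ ((ν:ℝ) / 2 + 1 / 4) := Real.rpow_pos_of_pos hq0 _
  rw [Real.rpow_neg hq0.le, ← div_eq_mul_inv, le_div_iff₀ h5]
  simp only [hF] at h3
  rw [hxq, h4, abs_mul, abs_of_pos h5] at h3
  linarith

lemma gamma_nat (ν k : ℕ) : Real.Gamma ((ν:ℝ) + k + 1) = ((ν + k).factorial : ℝ) := by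
  rw [← Real.Gamma_nat_eq_factorial]; push_cast; rfl

lemma g0C_term (ν k : ℕ) (w : ℂ) : (-1 : ℂ) ^ k * w ^ (ν + k) /
    ((Nat.factorial k : ℂ) * (Real.Gamma ((ν : ℝ) + k + 1) : ℂ)) =
    w ^ ν * ((-1 : ℂ) ^ k * w ^ k / ((k.factorial : ℂ) * ((ν + k).factorial : ℂ))) := by
  rw [gamma_nat]; push_cast; rw [pow_add]; ring

lemma g0C_ofReal (ν : ℕ) (q : ℝ) : g0C ν (q : ℂ) = ((q ^ ν * bc ν q : ℝ) : ℂ) := by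
  rw [g0C, Complex.ofReal_mul, bc, Complex.ofReal_tsum, Complex.ofReal_pow, ← tsum_mul_left]
  refine tsum_congr (fun k => ?_)
  rw [g0C_term]; push_cast; rfl

lemma g0C_term_le (ν k : ℕ) (w : ℂ) : ‖(-1 : ℂ) ^ k * w ^ (ν + k) /
    ((Nat.factorial k : ℂ) * (Real.Gamma ((ν : ℝ) + k + 1) : ℂ))‖ ≤
    ‖w‖ ^ ν * (‖w‖ ^ k / k.factorial) := by
  rw [g0C_term, norm_mul, norm_pow, norm_div, norm_mul, norm_pow, norm_neg, norm_one, one_pow,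
    one_mul, norm_pow, norm_mul, Complex.norm_natCast, Complex.norm_natCast]
  have := one_le_fact (ν + k)
  gcongr
  nlinarith [one_le_fact k]

lemma g0C_norm_le (ν : ℕ) (w : ℂ) : ‖g0C ν w‖ ≤ ‖w‖ ^ ν * Real.exp ‖w‖ := by
  have hs := ((Real.summable_pow_div_factorial ‖w‖).mul_left (‖w‖ ^ ν))
  refine (tsum_of_norm_bounded hs.hasSum (g0C_term_le ν · w)).trans (le_of_eq ?_)
  rw [tsum_mul_left, Real.exp_eq_exp_ℝ, NormedSpace.exp_eq_tsum_div]

lemma g0C_diff (ν : ℕ) : Differentiable ℂ (g0C ν) := by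
  intro w
  set R := ‖w‖ + 1 with hR
  have hs := ((Real.summable_pow_div_factorial R).mul_left (R ^ ν))
  have := Complex.differentiableOn_tsum_of_summable_norm (U := Metric.ball (0:ℂ) R) (F := fun (k : ℕ) (w : ℂ) => (-1 : ℂ) ^ k * w ^ (ν + k) /
    ((Nat.factorial k : ℂ) * (Real.Gamma ((ν : ℝ) + k + 1) : ℂ))) hs
    (fun k => (Differentiable.differentiableOn (by fun_prop))) Metric.isOpen_ball (by
      intro k z hz
      refine (g0C_term_le ν k z).trans ?_
      have : ‖z‖ ≤ R := by simpa using (Metric.mem_ball.1 hz).le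
      gcongr)
  refine this.differentiableAt (Metric.isOpen_ball.mem_nhds ?_)
  rw [Metric.mem_ball, dist_zero_right, hR]; linarith

lemma Cls_g0 (ν : ℕ) (b : ℝ) (h1 : (ν:ℝ) / 2 - 1 / 4 ≤ b) (h2 : b ≤ ν) :
    ∃ A B, Cls b A B (fun ζ => g0C ν (Complex.exp ζ)) := by
  obtain ⟨C, hC, hd⟩ := bc_decay ν
  refine ⟨C + Real.exp 1, 1 + (ν - b), ?_⟩
  have hA : 1 ≤ C + Real.exp 1 := by
    have := Real.add_one_le_exp (1:ℝ); linarith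
  refine ⟨by linarith, by linarith, ?_, ?_, ?_⟩
  · exact ((g0C_diff ν).comp Complex.differentiable_exp).differentiableOn
  · intro y
    rcases le_total y 0 with hy | hy
    · have h := g0C_norm_le ν (Complex.exp y)
      refine h.trans ?_
      rw [Complex.norm_exp, Complex.ofReal_re, ← Real.exp_nat_mul]
      have e1 : Real.exp (Real.exp y) ≤ C + Real.exp 1 := by
        have : Real.exp y ≤ 1 := Real.exp_le_one_iff.2 hy
        have := Real.exp_le_exp.2 this
        linarith
      have e2 : Real.exp (ν * y) ≤ Real.exp (b * y) := by
        rw [Real.exp_le_exp]; nlinarith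
      rw [mul_comm]
      gcongr
    · have e : Complex.exp (y:ℂ) = ((Real.exp y : ℝ) : ℂ) := by simp
      rw [e, g0C_ofReal, Complex.norm_real, norm_mul, norm_pow, Real.norm_eq_abs, Real.norm_eq_abs,
        Real.abs_exp]
      have h := hd (Real.exp y) (Real.one_le_exp hy)
      have e3 : Real.exp y ^ (-((ν:ℝ) / 2 + 1 / 4)) = Real.exp (-((ν:ℝ) / 2 + 1 / 4) * y) := by
        rw [← Real.exp_mul, mul_comm]
      rw [e3] at h
      calc Real.exp y ^ ν * |bc ν (Real.exp y)|
          ≤ Real.exp (ν * y) * (C * Real.exp (-((ν:ℝ) / 2 + 1 / 4) * y)) := by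
            rw [← Real.exp_nat_mul]; gcongr
        _ = C * Real.exp (((ν:ℝ) / 2 - 1 / 4) * y) := by
            rw [mul_left_comm, ← Real.exp_add]; ring_nf
        _ ≤ _ := by
            have : 0 < Real.exp 1 := Real.exp_pos _
            gcongr
            linarith
  · intro w hw
    refine (g0C_norm_le ν _).trans ?_
    rw [Complex.norm_exp, ← Real.exp_nat_mul, ← Real.exp_add, mul_assoc, ← Real.exp_add]
    refine le_trans ?_ (le_mul_of_one_le_left (Real.exp_pos _).le hA)
    rw [Real.exp_le_exp]
    have h0 : w.re ≤ Real.exp w.re := by have := Real.add_one_le_exp w.re; linarith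
    nlinarith

/-- The integrand of the multiple integral. -/
def Jf (ν0 : ℕ) {p : ℕ} (ν : Fin p → ℕ) (z : ℝ) (t : Fin p → ℝ) : ℂ :=
  (((∏ l, (t l) ^ ((ν l : ℝ) - 1) * Real.exp (-t l)) : ℝ) : ℂ) *
        g0C ν0 ((z : ℂ) / ((∏ l, t l : ℝ) : ℂ))

lemma Jf_insert (ν0 : ℕ) {p : ℕ} (ν : Fin (p+1) → ℕ) (i : Fin (p+1)) (z s : ℝ) (t : Fin p → ℝ) :
    Jf ν0 ν z (i.insertNth s t) = ((s ^ ((ν i : ℝ) - 1) * Real.exp (-s) : ℝ) : ℂ) *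
      Jf ν0 (fun j => ν (i.succAbove j)) (z / s) t := by
  simp only [Jf]
  rw [Fin.prod_univ_succAbove _ i, Fin.prod_univ_succAbove _ i]
  simp only [Fin.insertNth_apply_same, Fin.insertNth_apply_succAbove]
  rw [Complex.ofReal_mul, mul_assoc, Complex.ofReal_mul s, Complex.ofReal_div, div_div]

lemma g0C_meas (ν0 : ℕ) : Measurable (g0C ν0) := (g0C_diff ν0).continuous.measurable

lemma Jf_meas (ν0 : ℕ) {p : ℕ} (ν : Fin p → ℕ) :
    Measurable (fun q : ℝ × (Fin p → ℝ) => Jf ν0 ν q.1 q.2) := by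
  unfold Jf
  have := g0C_meas ν0
  fun_prop

lemma posOrth_pre (p : ℕ) (i : Fin (p+1)) :
    posOrth (p+1) = (MeasurableEquiv.piFinSuccAbove (fun _ => ℝ) i) ⁻¹' (Set.Ioi 0 ×ˢ posOrth p) := by
  ext t
  simp only [posOrth, Set.mem_setOf_eq, Set.mem_preimage, Set.mem_prod, Set.mem_Ioi,
    MeasurableEquiv.piFinSuccAbove_apply]
  rw [Fin.forall_iff_succAbove i]
  rfl

/-- The product form of the integrand. -/
def Jp (ν0 : ℕ) {p : ℕ} (ν : Fin (p+1) → ℕ) (i : Fin (p+1)) (z : ℝ) (q : ℝ × (Fin p → ℝ)) : ℂ :=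
  ((q.1 ^ ((ν i : ℝ) - 1) * Real.exp (-q.1) : ℝ) : ℂ) *
      Jf ν0 (fun j => ν (i.succAbove j)) (z / q.1) q.2

lemma Jp_meas (ν0 : ℕ) {p : ℕ} (ν : Fin (p+1) → ℕ) (i : Fin (p+1)) (z : ℝ) :
    Measurable (Jp ν0 ν i z) := by
  unfold Jp
  refine Measurable.mul (by fun_prop) ?_
  exact (Jf_meas ν0 (fun j => ν (i.succAbove j))).comp (by fun_prop : Measurable fun q : ℝ × (Fin p → ℝ) => (z / q.1, q.2))

lemma Jp_eq (ν0 : ℕ) {p : ℕ} (ν : Fin (p+1) → ℕ) (i : Fin (p+1)) (z : ℝ) :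
    Jf ν0 ν z = Jp ν0 ν i z ∘ (MeasurableEquiv.piFinSuccAbove (fun _ => ℝ) i) := by
  funext t
  have : t = i.insertNth (t i) (fun j => t (i.succAbove j)) := by
    exact (Fin.insertNth_self_removeNth i t).symm
  rw [Function.comp_apply, MeasurableEquiv.piFinSuccAbove_apply]
  conv_lhs => rw [this]
  rw [Jf_insert]
  rfl

lemma Jf_int_iff (ν0 : ℕ) {p : ℕ} (ν : Fin (p+1) → ℕ) (i : Fin (p+1)) (z : ℝ) :
    IntegrableOn (Jf ν0 ν z) (posOrth (p+1)) ↔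
      IntegrableOn (Jp ν0 ν i z) (Set.Ioi 0 ×ˢ posOrth p) := by
  rw [posOrth_pre p i, Jp_eq ν0 ν i z]
  exact (volume_preserving_piFinSuccAbove (fun _ => ℝ) i).integrableOn_comp_preimage
    (MeasurableEquiv.measurableEmbedding _)

lemma Jf_int_eq (ν0 : ℕ) {p : ℕ} (ν : Fin (p+1) → ℕ) (i : Fin (p+1)) (z : ℝ) :
    ∫ t in posOrth (p+1), Jf ν0 ν z t = ∫ q in Set.Ioi 0 ×ˢ posOrth p, Jp ν0 ν i z q := by
  rw [posOrth_pre p i, Jp_eq ν0 ν i z]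
  exact (volume_preserving_piFinSuccAbove (fun _ => ℝ) i).setIntegral_preimage_emb
    (MeasurableEquiv.measurableEmbedding _) _ _

lemma Jf_int_norm_eq (ν0 : ℕ) {p : ℕ} (ν : Fin (p+1) → ℕ) (i : Fin (p+1)) (z : ℝ) :
    ∫ t in posOrth (p+1), ‖Jf ν0 ν z t‖ = ∫ q in Set.Ioi 0 ×ˢ posOrth p, ‖Jp ν0 ν i z q‖ := by
  rw [posOrth_pre p i, Jp_eq ν0 ν i z]
  exact (volume_preserving_piFinSuccAbove (fun _ => ℝ) i).setIntegral_preimage_emb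
    (MeasurableEquiv.measurableEmbedding _) (fun q => ‖Jp ν0 ν i z q‖) _

lemma prod_restr (p : ℕ) : (volume : Measure (ℝ × (Fin p → ℝ))).restrict (Set.Ioi 0 ×ˢ posOrth p) =
    (volume.restrict (Set.Ioi 0)).prod (volume.restrict (posOrth p)) :=
  (Measure.prod_restrict _ _).symm

lemma Jstep_le (C b z : ℝ) (n : ℕ) (hz : 0 < z) (s N : ℝ) (hs : 0 < s) (hN : N ≤ C * (z / s) ^ b) :
    (s ^ ((n:ℝ) - 1) * Real.exp (-s)) * N ≤
      C * z ^ b * (Real.exp (-s) * s ^ (((n:ℝ) - b) - 1)) := by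
  have h0 : 0 ≤ s ^ ((n:ℝ) - 1) * Real.exp (-s) := by positivity
  refine (mul_le_mul_of_nonneg_left hN h0).trans (le_of_eq ?_)
  rw [Real.div_rpow hz.le hs.le, show ((n:ℝ) - b) - 1 = ((n:ℝ) - 1) - b by ring, Real.rpow_sub hs ((n:ℝ)-1) b]
  field_simp

lemma Jf_step (ν0 : ℕ) {p : ℕ} (ν : Fin (p+1) → ℕ) (i : Fin (p+1)) (b C : ℝ) (hb : b < ν i)
    (hC : 0 ≤ C)
    (h : ∀ z : ℝ, 0 < z → IntegrableOn (Jf ν0 (fun j => ν (i.succAbove j)) z) (posOrth p) ∧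
      ∫ t in posOrth p, ‖Jf ν0 (fun j => ν (i.succAbove j)) z t‖ ≤ C * z ^ b) :
    ∀ z : ℝ, 0 < z → IntegrableOn (Jf ν0 ν z) (posOrth (p+1)) ∧
      ∫ t in posOrth (p+1), ‖Jf ν0 ν z t‖ ≤ C * Real.Gamma (ν i - b) * z ^ b := by
  intro z hz
  have hg := (Real.GammaIntegral_convergent (s := ν i - b) (by linarith)).const_mul (C * z ^ b)
  have hsec : ∀ s : ℝ, 0 < s → ∫ t in posOrth p, ‖Jp ν0 ν i z (s, t)‖ =
      (s ^ ((ν i:ℝ) - 1) * Real.exp (-s)) *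
        ∫ t in posOrth p, ‖Jf ν0 (fun j => ν (i.succAbove j)) (z / s) t‖ := by
    intro s hs
    rw [← integral_const_mul]
    refine integral_congr_ae (Eventually.of_forall fun t => ?_)
    simp only [Jp]
    rw [norm_mul, Complex.norm_real, Real.norm_of_nonneg (by positivity)]
  have hintg : Integrable (Jp ν0 ν i z) ((volume.restrict (Set.Ioi 0)).prod (volume.restrict (posOrth p))) := by
    rw [integrable_prod_iff (Jp_meas ν0 ν i z).aestronglyMeasurable]
    constructor
    · refine (ae_restrict_iff' measurableSet_Ioi).2 (Eventually.of_forall fun s hs => ?_)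
      exact (h (z / s) (div_pos hz hs)).1.const_mul ((s ^ ((ν i : ℝ) - 1) * Real.exp (-s) : ℝ) : ℂ)
    · refine hg.mono' (Jp_meas ν0 ν i z).aestronglyMeasurable.norm.integral_prod_right' ?_
      refine (ae_restrict_iff' measurableSet_Ioi).2 (Eventually.of_forall fun s hs => ?_)
      rw [Real.norm_of_nonneg (integral_nonneg fun _ => norm_nonneg _), hsec s hs]
      exact Jstep_le C b z (ν i) hz s _ hs (h (z / s) (div_pos hz hs)).2
  refine ⟨?_, ?_⟩
  · rw [Jf_int_iff ν0 ν i, IntegrableOn, prod_restr]; exact hintg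
  · rw [Jf_int_norm_eq ν0 ν i, prod_restr, integral_prod _ hintg.norm]
    calc ∫ s in Set.Ioi (0:ℝ), ∫ t in posOrth p, ‖Jp ν0 ν i z (s, t)‖
        ≤ ∫ s in Set.Ioi (0:ℝ), C * z ^ b * (Real.exp (-s) * s ^ (((ν i:ℝ) - b) - 1)) := by
          refine setIntegral_mono_on hintg.norm.integral_prod_left hg measurableSet_Ioi ?_
          intro s hs
          rw [hsec s hs]
          exact Jstep_le C b z (ν i) hz s _ hs (h (z / s) (div_pos hz hs)).2
      _ = _ := by
          rw [integral_const_mul, ← Real.Gamma_eq_integral (by linarith)]; ring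

lemma Jf_conv (ν0 : ℕ) {p : ℕ} (ν : Fin (p+1) → ℕ) (i : Fin (p+1)) (x : ℝ) 
    (h : IntegrableOn (Jf ν0 ν (Real.exp x)) (posOrth (p+1))) (G : ℂ → ℂ)
    (hG : ∀ y : ℝ, G y = ∫ t in posOrth p, Jf ν0 (fun j => ν (i.succAbove j)) (Real.exp y) t) :
    ∫ t in posOrth (p+1), Jf ν0 ν (Real.exp x) t = ∫ y : ℝ, Ker (ν i) ((x:ℂ) - (y:ℝ)) * G (y:ℝ) := by
  rw [Jf_int_iff ν0 ν i, IntegrableOn, prod_restr] at h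
  rw [Jf_int_eq ν0 ν i, prod_restr, integral_prod _ h]
  rw [integral_Ioi_exp]
  rw [← integral_sub_left_eq_self (fun y : ℝ => Ker (ν i) ((x:ℂ) - (y:ℝ)) * G (y:ℝ)) volume x]
  refine integral_congr_ae (Eventually.of_forall fun u => ?_)
  simp only
  rw [hG]
  have e0 : Real.exp x / Real.exp u = Real.exp (x - u) := (Real.exp_sub _ _).symm
  simp only [Jp]
  rw [integral_const_mul, e0, ← smul_mul_assoc]
  congr 1
  rw [Complex.real_smul, ← Complex.ofReal_mul, Ker, show ((x:ℂ) - ((x - u : ℝ):ℂ)) = (u:ℂ) by push_cast; ring,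
    ← Complex.ofReal_exp, ← Complex.ofReal_natCast, ← Complex.ofReal_mul, ← Complex.ofReal_sub, ← Complex.ofReal_exp]
  congr 1
  rw [← Real.exp_mul, ← Real.exp_add, ← Real.exp_add]
  congr 1
  ring

/-- The recursively defined holomorphic functions on the strip. -/
def Gt (ν0 : ℕ) (μ : ℕ → ℕ) : ℕ → ℂ → ℂ
  | 0 => fun ζ => g0C ν0 (Complex.exp ζ)
  | p + 1 => Fext (Gt ν0 μ p) (μ p)

lemma posOrth_zero : posOrth 0 = Set.univ := by
  ext t; simp [posOrth]

lemma Gt_main (ν0 : ℕ) (μ : ℕ → ℕ) (b : ℝ) (h1 : (ν0:ℝ) / 2 - 1 / 4 ≤ b) (h2 : b ≤ ν0) (p : ℕ)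
    (hμ : ∀ l < p, b < μ l) :
    (∃ A B, Cls b A B (Gt ν0 μ p)) ∧
    (∃ C, 0 ≤ C ∧ ∀ z : ℝ, 0 < z → IntegrableOn (Jf ν0 (fun j : Fin p => μ j) z) (posOrth p) ∧
      ∫ t in posOrth p, ‖Jf ν0 (fun j : Fin p => μ j) z t‖ ≤ C * z ^ b) ∧
    (∀ x : ℝ, Gt ν0 μ p x = ∫ t in posOrth p, Jf ν0 (fun j : Fin p => μ j) (Real.exp x) t) := by
  induction p with
  | zero =>
    obtain ⟨A, B, hc⟩ := Cls_g0 ν0 b h1 h2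
    have e : ∀ z : ℝ, ∀ t, Jf ν0 (fun j : Fin 0 => μ j) z t = g0C ν0 z := by
      intro z t; simp [Jf]
    have hv : (volume (Set.univ : Set (Fin 0 → ℝ))).toReal = 1 := by
      rw [volume_pi, Measure.pi_of_empty]; simp
    refine ⟨⟨A, B, hc⟩, ⟨A, hc.hA, ?_⟩, ?_⟩
    · intro z hz
      rw [posOrth_zero, Measure.restrict_univ]
      refine ⟨?_, ?_⟩
      · rw [integrableOn_univ]
        refine (integrable_const (g0C ν0 z)).congr (Eventually.of_forall fun t => (e z t).symm)
      · simp only [e]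
        have := hc.real (Real.log z)
        rw [← Complex.ofReal_exp, Real.exp_log hz] at this
        rw [Real.rpow_def_of_pos hz]
        simpa [mul_comm, measureReal_def, hv] using this
    · intro x
      rw [posOrth_zero, Measure.restrict_univ]
      simp [e, Gt, measureReal_def, hv]
  | succ p ih =>
    obtain ⟨⟨A, B, hc⟩, ⟨C, hC, hz⟩, hr⟩ := ih (fun l hl => hμ l (by omega))
    have hp := hμ p (by omega)
    have e : (fun j : Fin p => (fun j : Fin (p+1) => μ j) ((Fin.last p).succAbove j)) = fun j : Fin p => μ j := by
      funext j; simp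
    have hs := Jf_step ν0 (fun j : Fin (p+1) => μ j) (Fin.last p) b C (by simpa using hp) hC
      (by rw [e]; exact hz)
    refine ⟨Cls_Fext hc _ hp, ⟨_, ?_, hs⟩, ?_⟩
    · refine mul_nonneg hC (Real.Gamma_pos_of_pos ?_).le
      simp only [Fin.val_last]; linarith
    · intro x
      have := Jf_conv ν0 (fun j : Fin (p+1) => μ j) (Fin.last p) x (hs _ (Real.exp_pos x)).1 (Gt ν0 μ p)
        (by rw [e]; exact hr)
      rw [this, Gt, Fext_real hc _ hp]
      rfl

lemma strip_identity (F H : ℂ → ℂ) (hF : DifferentiableOn ℂ F strip) (hH : DifferentiableOn ℂ H strip)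
    (h : ∀ x : ℝ, F x = H x) : Set.EqOn F H strip := by
  have hpre : IsPreconnected strip := by
    have : Convex ℝ strip := by
      have e : strip = Complex.imLm ⁻¹' (Set.Ioo (-Real.pi) Real.pi) := by
        ext z; simp [strip, abs_lt]
      rw [e]
      exact (convex_Ioo _ _).linear_preimage Complex.imLm
    exact this.isPreconnected
  have h0 : (0:ℂ) ∈ strip := by simp [strip, Real.pi_pos]
  refine (hF.analyticOnNhd isOpen_strip).eqOn_of_preconnected_of_frequently_eq
    (hH.analyticOnNhd isOpen_strip) hpre h0 ?_
  have ht : Tendsto (fun n : ℕ => (((1 / ((n:ℝ) + 1) : ℝ)) : ℂ)) atTop (𝓝[≠] 0) := by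
    refine tendsto_nhdsWithin_iff.2 ⟨?_, Eventually.of_forall fun n => ?_⟩
    · have := (Complex.continuous_ofReal.tendsto 0).comp (tendsto_one_div_add_atTop_nhds_zero_nat (𝕜 := ℝ))
      rw [Complex.ofReal_zero] at this
      exact this
    · have : (1 / ((n:ℝ) + 1) : ℝ) ≠ 0 := by positivity
      simpa using Complex.ofReal_ne_zero.2 this
  exact ht.frequently (Frequently.of_forall fun n => h _)

lemma exp_mem_slit {ζ : ℂ} (hζ : ζ ∈ strip) : Complex.exp ζ ∈ Complex.slitPlane := by
  have h : |ζ.im| < Real.pi := hζ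
  rw [abs_lt] at h
  rw [Complex.mem_slitPlane_iff_arg]
  refine ⟨?_, Complex.exp_ne_zero _⟩
  rw [Complex.arg_exp, toIocMod_eq_self (Real.two_pi_pos) |>.2]
  · exact h.2.ne
  · constructor <;> linarith [Real.pi_pos]

lemma G2_eq (G2 F : ℂ → ℂ) (hG : DifferentiableOn ℂ G2 Complex.slitPlane)
    (hF : DifferentiableOn ℂ F strip) (h : ∀ x : ℝ, G2 ((Real.exp x : ℝ) : ℂ) = F x) (ζ : ℂ)
    (hζ : ζ ∈ strip) : G2 (Complex.exp ζ) = F ζ := by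
  refine strip_identity (fun ζ => G2 (Complex.exp ζ)) F ?_ hF ?_ hζ
  · exact hG.comp Complex.differentiable_exp.differentiableOn (fun ζ hζ => exp_mem_slit hζ)
  · intro x; rw [← Complex.ofReal_exp]; exact h x

/-- Values on the imaginary axis. -/
lemma G2_I (G2 F : ℂ → ℂ) (hG : DifferentiableOn ℂ G2 Complex.slitPlane)
    (hF : DifferentiableOn ℂ F strip) (h : ∀ x : ℝ, G2 ((Real.exp x : ℝ) : ℂ) = F x) (t : ℝ)
    (ht : 0 < t) : G2 (Complex.I * t) = F (Real.log t + (Real.pi / 2 : ℝ) * Complex.I) ∧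
      G2 (Complex.I * (-t : ℝ)) = F (Real.log t + (-(Real.pi / 2) : ℝ) * Complex.I) := by
  have hp := Real.pi_pos
  have e : Complex.exp (Real.log t : ℝ) = t := by rw [← Complex.ofReal_exp, Real.exp_log ht]
  constructor
  · rw [← G2_eq G2 F hG hF h _ (strip_mem _ _ (by rw [abs_of_pos (by positivity)]; linarith))]
    rw [Complex.exp_add, e]
    push_cast
    rw [Complex.exp_pi_div_two_mul_I]
    ring_nf
  · rw [← G2_eq G2 F hG hF h _ (strip_mem _ _ (by rw [abs_neg, abs_of_pos (by positivity)]; linarith))]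
    rw [Complex.exp_add, e]
    push_cast
    rw [neg_mul, Complex.exp_neg, Complex.exp_pi_div_two_mul_I]
    simp [mul_comm]

lemma pw_norm (n : ℕ) (p : ℂ) (q : ℝ) (hq : 0 < q) :
    ‖(q : ℂ) ^ n * Complex.exp (-(p * q))‖ = q ^ n * Real.exp (-(p.re * q)) := by
  rw [norm_mul, norm_pow, Complex.norm_real, Real.norm_of_nonneg hq.le, Complex.norm_exp]
  simp

lemma pw_integrable (n : ℕ) (σ : ℝ) (hσ : 0 < σ) :
    IntegrableOn (fun q : ℝ => q ^ n * Real.exp (-(σ * q))) (Set.Ioi 0) := by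
  have h := integrableOn_rpow_mul_exp_neg_mul_rpow (s := n) (p := 1) (b := σ)
    (by have : (0:ℝ) ≤ n := by positivity
        linarith) (by norm_num) hσ
  simpa using h

lemma pwc_integrable (n : ℕ) (p : ℂ) (hp : 0 < p.re) :
    IntegrableOn (fun q : ℝ => (q : ℂ) ^ n * Complex.exp (-(p * q))) (Set.Ioi 0) := by
  refine (pw_integrable n p.re hp).mono' (by fun_prop) ?_
  refine (ae_restrict_iff' measurableSet_Ioi).2 (Eventually.of_forall fun q hq => ?_)
  rw [pw_norm n p q hq]

lemma pw_tendsto (n : ℕ) (p : ℂ) (hp : 0 < p.re) :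
    Tendsto (fun q : ℝ => (q : ℂ) ^ n * Complex.exp (-(p * q))) atTop (𝓝 0) := by
  rw [tendsto_zero_iff_norm_tendsto_zero]
  have h := tendsto_rpow_mul_exp_neg_mul_atTop_nhds_zero n p.re hp
  refine h.congr' ?_
  filter_upwards [eventually_gt_atTop 0] with q hq
  rw [pw_norm n p q hq, Real.rpow_natCast, neg_mul]

lemma pwc_integral (n : ℕ) (p : ℂ) (hp : 0 < p.re) :
    ∫ q in Set.Ioi (0:ℝ), (q : ℂ) ^ n * Complex.exp (-(p * q)) = n.factorial / p ^ (n + 1) := by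
  have hp0 : p ≠ 0 := by rintro rfl; simp at hp
  have he : ∀ q : ℝ, HasDerivAt (fun q : ℝ => Complex.exp (-(p * q))) (-p * Complex.exp (-(p * q))) q := by
    intro q
    have h1 : HasDerivAt (fun z : ℂ => Complex.exp (-(p * z))) (-p * Complex.exp (-(p * q))) (q:ℂ) := by
      have := (((hasDerivAt_id (q:ℂ)).const_mul p).neg).cexp
      refine this.congr_deriv ?_
      simp [mul_comm]
    exact h1.comp_ofReal
  induction n with
  | zero =>
    have h := integral_Ioi_of_hasDerivAt_of_tendsto (a := 0) (m := 0) (f := fun q : ℝ => Complex.exp (-(p * q)))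
      (f' := fun q : ℝ => -p * Complex.exp (-(p * q))) (he 0).continuousAt.continuousWithinAt (fun q _ => he q)
      (by simpa [IntegrableOn] using (pwc_integrable 0 p hp).const_mul (-p)) (by simpa using pw_tendsto 0 p hp)
    rw [integral_const_mul] at h
    simp only [pow_zero, one_mul, Nat.factorial_zero, Nat.cast_one, zero_add, pow_one]
    rw [eq_div_iff hp0]
    simp at h
    rw [mul_comm]; exact h
  | succ n ih =>
    have hd : ∀ q : ℝ, HasDerivAt (fun q : ℝ => (q:ℂ) ^ (n+1) * Complex.exp (-(p * q)))
      ((n + 1 : ℂ) * ((q:ℂ) ^ n * Complex.exp (-(p * q))) - p * ((q:ℂ) ^ (n+1) * Complex.exp (-(p * q)))) q := by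
      intro q
      have h1 : HasDerivAt (fun q : ℝ => (q:ℂ) ^ (n+1)) ((n + 1 : ℂ) * (q:ℂ) ^ n) q := by
        have := (hasDerivAt_pow (n+1) (q:ℂ)).comp_ofReal
        simpa using this
      refine (h1.mul (he q)).congr_deriv ?_
      ring
    have i1 := (pwc_integrable n p hp).const_mul (n + 1 : ℂ)
    have i2 := (pwc_integrable (n + 1) p hp).const_mul p
    have h := integral_Ioi_of_hasDerivAt_of_tendsto (a := 0) (m := 0)
      (hd 0).continuousAt.continuousWithinAt (fun q _ => hd q) (i1.sub i2) (pw_tendsto (n+1) p hp)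
    rw [integral_sub i1 i2, integral_const_mul, integral_const_mul, ih] at h
    simp only [Complex.ofReal_zero, ne_eq, Nat.succ_ne_zero, not_false_eq_true, zero_pow, zero_mul, sub_zero] at h
    rw [eq_div_iff (pow_ne_zero _ hp0), Nat.factorial_succ]
    push_cast
    have h' := sub_eq_zero.1 h
    field_simp at h'
    rw [pow_succ, mul_left_comm, mul_comm] 
    rw [h']
    ring

lemma laplace (ν : ℕ) (p : ℂ) (hp : 0 < p.re) :
    ∫ q in Set.Ioi (0:ℝ), Complex.exp (-(p * q)) * g0C ν q = Complex.exp (-p⁻¹) / p ^ (ν + 1) := by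
  have hp0 : p ≠ 0 := by rintro rfl; simp at hp
  set F : ℕ → ℝ → ℂ := fun k q => (-1 : ℂ) ^ k / ((k.factorial : ℂ) * ((ν + k).factorial : ℂ)) *
    ((q:ℂ) ^ (ν + k) * Complex.exp (-(p * q))) with hF
  have h1 : ∀ k, IntegrableOn (F k) (Set.Ioi 0) := fun k => (pwc_integrable (ν + k) p hp).const_mul _
  have h2 : ∀ k, ∫ q in Set.Ioi (0:ℝ), ‖F k q‖ = (1 / p.re) ^ (ν + 1) * ((1 / p.re) ^ k / k.factorial) := by
    intro k
    have e : ∀ q ∈ Set.Ioi (0:ℝ), ‖F k q‖ = 1 / ((k.factorial : ℝ) * ((ν + k).factorial : ℝ)) *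
        (q ^ (((ν + k + 1 : ℕ) : ℝ) - 1) * Real.exp (-(p.re * q))) := by
      intro q hq
      simp only [hF]
      rw [norm_mul, pw_norm _ _ _ hq]
      congr 1
      · simp
      · push_cast
        rw [add_sub_cancel_right, ← Nat.cast_add, Real.rpow_natCast]
    rw [setIntegral_congr_fun measurableSet_Ioi e, integral_const_mul,
      Real.integral_rpow_mul_exp_neg_mul_Ioi (by positivity) hp, Real.rpow_natCast]
    push_cast
    rw [gamma_nat, show ν + k + 1 = ν + 1 + k by ring, pow_add]
    have := one_le_fact (ν + k)
    field_simp
  have hs : Summable fun k => ∫ q in Set.Ioi (0:ℝ), ‖F k q‖ := by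
    simp only [h2]
    exact (Real.summable_pow_div_factorial _).mul_left _
  have h := (hasSum_integral_of_summable_integral_norm h1 hs).tsum_eq
  have e1 : ∀ q : ℝ, ∑' k, F k q = Complex.exp (-(p * q)) * g0C ν q := by
    intro q
    rw [g0C, ← tsum_mul_left]
    refine tsum_congr fun k => ?_
    rw [gamma_nat]
    simp only [hF]
    push_cast
    ring
  simp only [e1] at h
  rw [← h]
  simp only [hF]
  have e2 : ∀ k : ℕ, ∫ q in Set.Ioi (0:ℝ), (-1 : ℂ) ^ k / ((k.factorial : ℂ) * ((ν + k).factorial : ℂ)) *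
    ((q:ℂ) ^ (ν + k) * Complex.exp (-(p * q))) = (1 / p ^ (ν + 1)) * ((-p⁻¹) ^ k / k.factorial) := by
    intro k
    rw [integral_const_mul, pwc_integral _ _ hp]
    have : ((ν + k).factorial : ℂ) ≠ 0 := by exact_mod_cast (Nat.factorial_ne_zero _)
    have : ((k).factorial : ℂ) ≠ 0 := by exact_mod_cast (Nat.factorial_ne_zero _)
    rw [show (-p⁻¹) = (-1) * p⁻¹ by ring, mul_pow, inv_pow, show ν + k + 1 = ν + 1 + k by ring, pow_add]
    field_simp
  simp only [e2]
  rw [tsum_mul_left, Complex.exp_eq_exp_ℂ, NormedSpace.exp_eq_tsum_div]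
  ring

lemma laplace_lb (ν0 : ℕ) (σ : ℝ) (h0 : 0 < σ) (h1 : σ < 1) :
    Real.exp (-1) ≤ σ ^ (((ν0:ℝ) + 1) / 2) *
      ∫ q in Set.Ioi (0:ℝ), Real.exp (-(σ * q)) * ‖g0C ν0 q‖ := by
  set p : ℂ := ⟨σ, Real.sqrt (σ - σ ^ 2)⟩ with hp
  have hp' : 0 < p.re := h0
  have hsq : Complex.normSq p = σ := by
    rw [Complex.normSq_apply, hp]
    simp only
    rw [Real.mul_self_sqrt (by nlinarith)]; ring
  have hn : ‖p‖ = σ ^ ((1:ℝ) / 2) := by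
    rw [← Real.sqrt_eq_rpow, ← hsq, Complex.normSq_eq_norm_sq, Real.sqrt_sq (norm_nonneg _)]
  have h := norm_integral_le_integral_norm (μ := volume.restrict (Set.Ioi (0:ℝ)))
    (fun q : ℝ => Complex.exp (-(p * q)) * g0C ν0 q)
  rw [laplace ν0 p hp', norm_div, norm_pow, hn, Complex.norm_exp] at h
  have e1 : (-p⁻¹).re = -1 := by
    rw [Complex.neg_re, Complex.inv_re, hsq, hp]
    simp [h0.ne']
  have e2 : (σ ^ ((1:ℝ) / 2)) ^ (ν0 + 1) = σ ^ (((ν0:ℝ) + 1) / 2) := by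
    rw [← Real.rpow_natCast, ← Real.rpow_mul h0.le]; congr 1; push_cast; ring
  have e3 : ∀ q : ℝ, ‖Complex.exp (-(p * q)) * g0C ν0 q‖ = Real.exp (-(σ * q)) * ‖g0C ν0 q‖ := by
    intro q
    rw [norm_mul, Complex.norm_exp]
    simp [hp]
  simp only [e3] at h
  rw [e1, e2, div_le_iff₀ (Real.rpow_pos_of_pos h0 _)] at h
  linarith

lemma T1_core (ν ν0 : ℕ) (hν : 2 * ν < ν0) (Z : ℝ) (hZ : 0 < Z) :
    ¬ Integrable (fun v : ℝ => Real.exp (-(ν * v)) * Real.exp (-(Z * Real.exp (-v))) *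
      ‖g0C ν0 (Real.exp v : ℝ)‖) := by
  intro hI
  have hmeas := g0C_meas ν0
  set σ : ℕ → ℝ := fun n => 1 / ((n:ℝ) + 1 + 1) with hσ
  have hσ0 : ∀ n, 0 < σ n := fun n => by simp only [hσ]; positivity
  have hσ1 : ∀ n, σ n < 1 := fun n => by
    simp only [hσ]; rw [div_lt_one (by positivity)]; linarith [(Nat.cast_nonneg n : (0:ℝ) ≤ n)]
  have hσt : Tendsto σ atTop (𝓝 0) := by
    have := (tendsto_add_atTop_iff_nat 1).2 (tendsto_one_div_add_atTop_nhds_zero_nat (𝕜 := ℝ))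
    simpa [hσ] using this
  set F : ℕ → ℝ → ℝ := fun n v => σ n ^ (ν + 1) * (Real.exp v * (Real.exp (-(σ n * Real.exp v)) *
    ‖g0C ν0 (Real.exp v : ℝ)‖)) with hF
  have key : Tendsto (fun n => ∫ v, F n v) atTop (𝓝 (∫ _ : ℝ, (0:ℝ))) := by
    refine tendsto_integral_of_dominated_convergence
      (fun v => ((ν + 1).factorial * Real.exp Z) * (Real.exp (-(ν * v)) * Real.exp (-(Z * Real.exp (-v))) *
      ‖g0C ν0 (Real.exp v : ℝ)‖) + Set.indicator (Set.Iic 0) (fun v => Real.exp 1 * Real.exp v) v) ?_ ?_ ?_ ?_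
    · intro n
      simp only [hF]
      exact (by fun_prop : Measurable _).aestronglyMeasurable
    · refine (hI.const_mul _).add ?_
      refine IntegrableOn.integrable_indicator ?_ measurableSet_Iic
      exact (integrableOn_exp_Iic 0).const_mul _
    · intro n
      refine Eventually.of_forall fun v => ?_
      have hFn : 0 ≤ F n v := by
        simp only [hF]; have := hσ0 n; positivity
      rw [Real.norm_of_nonneg hFn]
      rcases le_or_gt v 0 with hv | hv
      · rw [Set.indicator_of_mem (Set.mem_Iic.2 hv)]
        refine le_trans ?_ (le_add_of_nonneg_left (by positivity))
        simp only [hF]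
        have hg := g0C_norm_le ν0 (Real.exp v : ℝ)
        rw [Complex.norm_real, Real.norm_of_nonneg (Real.exp_pos _).le] at hg
        have hv1 : Real.exp v ≤ 1 := Real.exp_le_one_iff.2 hv
        have a1 : ‖g0C ν0 (Real.exp v : ℝ)‖ ≤ Real.exp 1 := by
          refine hg.trans ?_
          calc _ ≤ 1 * Real.exp 1 := by
                gcongr
                exact pow_le_one₀ (Real.exp_pos _).le hv1
            _ = _ := one_mul _
        have a2 : Real.exp (-(σ n * Real.exp v)) ≤ 1 := by
          rw [Real.exp_le_one_iff]; have := hσ0 n; have := Real.exp_pos v; nlinarith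
        have a3 : σ n ^ (ν + 1) ≤ 1 := pow_le_one₀ (hσ0 n).le (hσ1 n).le
        calc _ ≤ 1 * (Real.exp v * (1 * Real.exp 1)) := by
              gcongr
          _ = _ := by ring
      · rw [Set.indicator_of_notMem (by simpa using hv), add_zero]
        simp only [hF]
        have a1 := Real.pow_div_factorial_le_exp (σ n * Real.exp v) (by have := hσ0 n; positivity) (ν + 1)
        rw [div_le_iff₀ (by positivity), mul_pow] at a1
        have a2 : σ n ^ (ν + 1) * Real.exp (-(σ n * Real.exp v)) * Real.exp v ≤ (ν + 1).factorial * Real.exp (-(ν * v)) := by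
          rw [Real.exp_neg (σ n * Real.exp v), Real.exp_neg (ν * v), ← div_eq_mul_inv, ← div_eq_mul_inv, div_mul_eq_mul_div,
            div_le_div_iff₀ (Real.exp_pos _) (Real.exp_pos _)]
          have : Real.exp v ^ (ν + 1) = Real.exp v * Real.exp (ν * v) := by
            rw [pow_succ, ← Real.exp_nat_mul]; ring
          rw [this] at a1
          linarith
        have a3 : 1 ≤ Real.exp Z * Real.exp (-(Z * Real.exp (-v))) := by
          rw [← Real.exp_add]
          apply Real.one_le_exp
          have : Real.exp (-v) ≤ 1 := Real.exp_le_one_iff.2 (by linarith)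
          nlinarith
        have a4 : 0 ≤ ((ν + 1).factorial : ℝ) * Real.exp (-(ν * v)) := by positivity
        calc _ = (σ n ^ (ν + 1) * Real.exp (-(σ n * Real.exp v)) * Real.exp v) * ‖g0C ν0 (Real.exp v : ℝ)‖ := by ring
          _ ≤ ((ν + 1).factorial * Real.exp (-(ν * v)) * (Real.exp Z * Real.exp (-(Z * Real.exp (-v))))) * ‖g0C ν0 (Real.exp v : ℝ)‖ := by
            refine mul_le_mul_of_nonneg_right ?_ (norm_nonneg _)
            exact a2.trans (le_mul_of_one_le_right a4 a3)
          _ = _ := by ring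
    · refine Eventually.of_forall fun v => ?_
      refine squeeze_zero (g := fun n => σ n * (Real.exp v * ‖g0C ν0 (Real.exp v : ℝ)‖)) (fun n => ?_) (fun n => ?_) ?_
      · simp only [hF]; have := hσ0 n; positivity
      · simp only [hF]
        have a2 : Real.exp (-(σ n * Real.exp v)) ≤ 1 := by
          rw [Real.exp_le_one_iff]; have := hσ0 n; have := Real.exp_pos v; nlinarith
        have a3 : σ n ^ (ν + 1) ≤ σ n := by
          rw [pow_succ]
          exact mul_le_of_le_one_left (hσ0 n).le (pow_le_one₀ (hσ0 n).le (hσ1 n).le)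
        have := hσ0 n
        calc _ ≤ σ n * (Real.exp v * (1 * ‖g0C ν0 (Real.exp v : ℝ)‖)) := by gcongr
          _ = _ := by ring
      · simpa using hσt.mul_const (Real.exp v * ‖g0C ν0 (Real.exp v : ℝ)‖)
  rw [integral_zero] at key
  have hlow : ∀ n, Real.exp (-1) ≤ ∫ v, F n v := by
    intro n
    have e : ∫ v, F n v = σ n ^ (ν + 1) * ∫ q in Set.Ioi (0:ℝ), Real.exp (-(σ n * q)) * ‖g0C ν0 q‖ := by
      rw [integral_Ioi_exp, ← integral_const_mul]
      rfl
    rw [e]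
    refine (laplace_lb ν0 (σ n) (hσ0 n) (hσ1 n)).trans ?_
    refine mul_le_mul_of_nonneg_right ?_ (integral_nonneg fun q => by positivity)
    rw [← Real.rpow_natCast]
    refine Real.rpow_le_rpow_of_exponent_ge (hσ0 n) (hσ1 n).le ?_
    have : (2 * (ν:ℝ) + 1) ≤ ν0 := by exact_mod_cast hν
    push_cast
    linarith
  have := ge_of_tendsto' key hlow
  linarith [Real.exp_pos (-1)]

lemma T1 (ν0 : ℕ) {p : ℕ} (ν : Fin (p+1) → ℕ) (i : Fin (p+1)) (hν : 2 * ν i < ν0) (z : ℝ) (hz : 0 < z) :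
    ¬ IntegrableOn (Jf ν0 ν z) (posOrth (p+1)) := by
  intro h
  rw [Jf_int_iff ν0 ν i, IntegrableOn, prod_restr] at h
  have hopen : IsOpen (posOrth p) := by
    have : posOrth p = ⋂ i, {t : Fin p → ℝ | 0 < t i} := by ext t; simp [posOrth]
    rw [this]
    exact isOpen_iInter_of_finite fun i => isOpen_lt continuous_const (continuous_apply i)
  have hne : (posOrth p).Nonempty := ⟨fun _ => 1, fun _ => one_pos⟩
  have hmu : volume.restrict (posOrth p) ≠ 0 := by
    rw [Ne, Measure.restrict_eq_zero]
    exact (hopen.measure_pos volume hne).ne'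
  have : NeBot (ae (volume.restrict (posOrth p))) := ae_neBot.2 hmu
  obtain ⟨t, ht, htp⟩ := (h.prod_left_ae.and (ae_restrict_mem hopen.measurableSet)).exists
  set P : ℝ := ∏ l, t l with hP
  have hP0 : 0 < P := Finset.prod_pos fun l _ => htp l
  set K : ℝ := ∏ l, (t l) ^ ((ν (i.succAbove l) : ℝ) - 1) * Real.exp (-t l) with hK
  have hK0 : 0 < K := Finset.prod_pos fun l _ => mul_pos (Real.rpow_pos_of_pos (htp l) _) (Real.exp_pos _)
  set Z := z / P with hZ
  have hZ0 : 0 < Z := div_pos hz hP0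
  have h1 : IntegrableOn (fun s : ℝ => Jp ν0 ν i z (s, t)) (Set.Ioi 0) := ht
  have h2 := (((integrableOn_Ioi_exp _).1 h1).norm.comp_sub_left (Real.log Z)).const_mul (1 / (K * Z ^ (ν i)))
  refine T1_core (ν i) ν0 hν Z hZ0 (h2.congr (Eventually.of_forall fun v => ?_))
  have e1 : Real.exp (Real.log Z - v) = Z * Real.exp (-v) := by
    rw [sub_eq_add_neg, Real.exp_add, Real.exp_log hZ0]
  have e2 : z / (Z * Real.exp (-v)) / P = Real.exp v := by
    rw [hZ, Real.exp_neg]; field_simp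
  simp only [Jp, Jf]
  rw [norm_smul, norm_mul, norm_mul, Complex.norm_real, Complex.norm_real, ← hK, ← hP, ← Complex.ofReal_div,
    e1, e2, Real.norm_of_nonneg hK0.le, Real.norm_of_nonneg (by positivity), Real.norm_of_nonneg (by positivity)]
  have e3 : (Z * Real.exp (-v)) * (Z * Real.exp (-v)) ^ ((ν i:ℝ) - 1) = Z ^ (ν i) * Real.exp (-(ν i * v)) := by
    rw [Real.rpow_sub_one (by positivity), Real.rpow_natCast, mul_pow, ← Real.exp_nat_mul]
    field_simp
  have e4 : (0:ℝ) < Z ^ ν i := by positivity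
  calc _ = 1 / (K * Z ^ ν i) * (((Z * Real.exp (-v)) * (Z * Real.exp (-v)) ^ ((ν i:ℝ) - 1)) * Real.exp (-(Z * Real.exp (-v))) * (K * ‖g0C ν0 (Real.exp v : ℝ)‖)) := by ring
    _ = _ := by rw [e3]; field_simp

lemma conv_lemma (f g : ℝ → ℂ) (hf : Integrable f) (hg : Integrable g) :
    ∫ x : ℝ, ∫ y : ℝ, f y * g (x - y) = (∫ y, f y) * ∫ u, g u := by
  have := integral_convolution (μ := volume) (ν := volume) (ContinuousLinearMap.mul ℂ ℂ) hf hg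
  simpa [convolution] using this

lemma exp_norm_real (s y : ℝ) : ‖Complex.exp ((s : ℂ) * y)‖ = Real.exp (s * y) := by
  rw [← Complex.ofReal_mul, Complex.norm_exp, Complex.ofReal_re]

/-- Two-sided integrability. -/
lemma mellin_integrable {b A B b' A' B' : ℝ} {f : ℂ → ℂ} (hf : Cls b A B f) (hf' : Cls b' A' B' f)
    (s : ℝ) (h1 : s + b < 0) (h2 : 0 < s + b') :
    Integrable (fun y : ℝ => Complex.exp (s * y) * f (y : ℝ)) := by
  have hc : Continuous (fun y : ℝ => Complex.exp (s * y) * f (y : ℝ)) :=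
    Continuous.mul (by fun_prop) (cont_real hf)
  have i1 : IntegrableOn (fun y : ℝ => Complex.exp (s * y) * f (y : ℝ)) (Set.Iic 0) := by
    refine ((integrableOn_exp_mul_Iic h2 0).const_mul A').mono' hc.aestronglyMeasurable
      (Eventually.of_forall fun y => ?_)
    rw [norm_mul, exp_norm_real]
    calc _ ≤ Real.exp (s * y) * (A' * Real.exp (b' * y)) := by gcongr; exact hf'.real y
      _ = _ := by rw [mul_left_comm, ← Real.exp_add]; ring_nf
  have i2 : IntegrableOn (fun y : ℝ => Complex.exp (s * y) * f (y : ℝ)) (Set.Ioi 0) := by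
    refine ((integrableOn_exp_mul_Ioi h1 0).const_mul A).mono' hc.aestronglyMeasurable
      (Eventually.of_forall fun y => ?_)
    rw [norm_mul, exp_norm_real]
    calc _ ≤ Real.exp (s * y) * (A * Real.exp (b * y)) := by gcongr; exact hf.real y
      _ = _ := by rw [mul_left_comm, ← Real.exp_add]; ring_nf
  have := i1.union i2
  rwa [Set.Iic_union_Ioi, integrableOn_univ] at this

lemma gumbelC (p : ℝ) (hp : 0 < p) : Integrable (fun u : ℝ => Complex.exp ((p:ℂ) * u - Complex.exp u)) ∧
    ∫ u : ℝ, Complex.exp ((p:ℂ) * u - Complex.exp u) = Complex.Gamma p := by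
  have e : ∀ u : ℝ, Complex.exp ((p:ℂ) * u - Complex.exp u) = ((Real.exp (p * u - Real.exp u) : ℝ) : ℂ) := by
    intro u; push_cast; rfl
  simp only [e]
  refine ⟨(gumbel_integrable p hp).ofReal, ?_⟩
  rw [integral_complex_ofReal, gumbel_integral p hp, Complex.Gamma_ofReal]

lemma mellin_rec {b A B b' A' B' : ℝ} {f : ℂ → ℂ} (hf : Cls b A B f) (hf' : Cls b' A' B' f) (n : ℕ)
    (hb : b < n) (hb' : b' < n)
    (s : ℝ) (h1 : s + b < 0) (h2 : 0 < s + b') :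
    ∫ x : ℝ, Complex.exp (s * x) * Fext f n (x : ℝ) =
      (∫ y : ℝ, Complex.exp (s * y) * f (y : ℝ)) * Complex.Gamma ((n + s : ℝ) : ℂ) := by
  obtain ⟨g1, g2⟩ := gumbelC (n + s) (by linarith)
  rw [← g2, ← conv_lemma _ _ (mellin_integrable hf hf' s h1 h2) g1]
  refine integral_congr_ae (Eventually.of_forall fun x => ?_)
  simp only
  rw [Fext_real hf n hb, ← integral_const_mul]
  refine integral_congr_ae (Eventually.of_forall fun y => ?_)
  simp only [Ker]
  rw [← mul_assoc, ← Complex.exp_add, mul_right_comm, ← Complex.exp_add]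
  congr 2
  push_cast
  ring

lemma mellin_base (ν0 : ℕ) (s : ℝ) (hs : s < 1) (hs' : 0 < ν0 + s)
    (hi : Integrable (fun y : ℝ => Complex.exp (s * y) * g0C ν0 (Complex.exp y))) :
    (∫ y : ℝ, Complex.exp (s * y) * g0C ν0 (Complex.exp y)) * Complex.Gamma ((1 - s : ℝ) : ℂ) =
      Complex.Gamma ((ν0 + s : ℝ) : ℂ) := by
  obtain ⟨g1, g2⟩ := gumbelC (1 - s) (by linarith)
  have g1' := g1.comp_neg
  have g2' := integral_neg_eq_self (fun u : ℝ => Complex.exp (((1 - s : ℝ):ℂ) * u - Complex.exp u)) volume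
  rw [g2] at g2'
  rw [← g2', ← conv_lemma _ _ hi g1']
  rw [← (gumbelC (ν0 + s) hs').2]
  refine integral_congr_ae (Eventually.of_forall fun x => ?_)
  simp only
  have hl := laplace ν0 (Real.exp (-x) : ℝ) (by rw [Complex.ofReal_re]; exact Real.exp_pos (-x))
  rw [integral_Ioi_exp] at hl
  have e : ∀ y : ℝ, Complex.exp (s * y) * g0C ν0 (Complex.exp y) *
      Complex.exp (((1 - s : ℝ):ℂ) * ((-(x - y) : ℝ) : ℂ) - Complex.exp ((-(x - y) : ℝ) : ℂ)) =
      Complex.exp (((s - 1 : ℝ) : ℂ) * x) * (Real.exp y • (Complex.exp (-(((Real.exp (-x) : ℝ) : ℂ) * ((Real.exp y : ℝ) : ℂ))) * g0C ν0 ((Real.exp y : ℝ) : ℂ))) := by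
    intro y
    rw [Complex.real_smul]
    push_cast
    rw [← Complex.exp_add]
    have e1 : Complex.exp (s * y) * g0C ν0 (Complex.exp y) *
      Complex.exp ((1 - s) * -((x:ℂ) - y) - Complex.exp (-((x:ℂ) - y))) =
      (Complex.exp (s * y) * Complex.exp ((1 - s) * -((x:ℂ) - y) - Complex.exp (-((x:ℂ) - y)))) * g0C ν0 (Complex.exp y) := by ring
    have e2 : Complex.exp (((s:ℂ) - 1) * x) * (Complex.exp y * (Complex.exp (-Complex.exp (-(x:ℂ) + y)) * g0C ν0 (Complex.exp y))) =
      (Complex.exp (((s:ℂ) - 1) * x) * Complex.exp y * Complex.exp (-Complex.exp (-(x:ℂ) + y))) * g0C ν0 (Complex.exp y) := by ring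
    rw [e1, e2, ← Complex.exp_add, ← Complex.exp_add, ← Complex.exp_add]
    congr 2
    rw [show -((x:ℂ) - y) = -x + y by ring]
    ring
  simp only [e]
  rw [integral_const_mul, hl]
  push_cast
  rw [← Complex.exp_neg, ← Complex.exp_nat_mul, ← Complex.exp_sub, ← Complex.exp_add]
  congr 1
  push_cast
  rw [neg_neg]
  ring

lemma mellin_Gt (ν0 : ℕ) (μ : ℕ → ℕ) (b b' s : ℝ) (h1 : (ν0:ℝ) / 2 - 1 / 4 ≤ b) (h2 : b ≤ ν0)
    (h1' : (ν0:ℝ) / 2 - 1 / 4 ≤ b') (h2' : b' ≤ ν0) (hs1 : s + b < 0) (hs2 : 0 < s + b')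
    (hs : s < 1) (p : ℕ) (hμ : ∀ l < p, b < μ l) (hμ' : ∀ l < p, b' < μ l) :
    (∫ y : ℝ, Complex.exp (s * y) * Gt ν0 μ p (y : ℝ)) * Complex.Gamma ((1 - s : ℝ) : ℂ) =
      Complex.Gamma ((ν0 + s : ℝ) : ℂ) * ∏ l ∈ Finset.range p, Complex.Gamma ((μ l + s : ℝ) : ℂ) := by
  induction p with
  | zero =>
    obtain ⟨A, B, hc⟩ := Cls_g0 ν0 b h1 h2
    obtain ⟨A', B', hc'⟩ := Cls_g0 ν0 b' h1' h2'
    have := mellin_base ν0 s hs (by linarith) (mellin_integrable hc hc' s hs1 hs2)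
    simpa [Gt] using this
  | succ p ih =>
    obtain ⟨⟨A, B, hc⟩, -⟩ := Gt_main ν0 μ b h1 h2 p (fun l hl => hμ l (by omega))
    obtain ⟨⟨A', B', hc'⟩, -⟩ := Gt_main ν0 μ b' h1' h2' p (fun l hl => hμ' l (by omega))
    have := mellin_rec hc hc' (μ p) (hμ p (by omega)) (hμ' p (by omega)) s hs1 hs2
    rw [Gt, this, Finset.prod_range_succ, ← mul_assoc, ← ih (fun l hl => hμ l (by omega)) (fun l hl => hμ' l (by omega))]
    ring

lemma T2_core (ν0 ν p i : ℕ) (μ : ℕ → ℕ) (hi : i < p) (hμi : μ i = ν) (hmin : ∀ l < p, ν ≤ μ l)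
    (hν : ν < ν0) (hν2 : ν0 ≤ 2 * ν) :
    ¬ IntegrableOn (fun y : ℝ => Real.exp (-(ν * y)) * ‖Gt ν0 μ p (y + (Real.pi / 2 : ℝ) * Complex.I)‖)
      (Set.Iic 0) := by
  intro hI
  have hpi := Real.pi_pos
  have hνr : (ν:ℝ) + 1 ≤ ν0 := by exact_mod_cast hν
  have hνr2 : (ν0:ℝ) ≤ 2 * ν := by exact_mod_cast hν2
  have hν1 : (1:ℝ) ≤ ν := by
    have : 1 ≤ ν := by omega
    exact_mod_cast this
  have hminr : ∀ l < p, (ν:ℝ) ≤ μ l := fun l hl => by exact_mod_cast hmin l hl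
  set F := Gt ν0 μ p with hF
  obtain ⟨⟨A, B, hc⟩, -⟩ := Gt_main ν0 μ (ν - 1/4) (by linarith) (by linarith) p
    (fun l hl => by linarith [hminr l hl])
  rw [← hF] at hc
  have hA := hc.hA
  set K := (∫ y in Set.Iic (0:ℝ), Real.exp (-(ν * y)) * ‖F (y + (Real.pi / 2 : ℝ) * Complex.I)‖) +
    A * Real.exp B * (Real.pi / 2) + A * 8 with hK
  have bound : ∀ ε : ℝ, 0 < ε → ε < 1/8 →
      ‖∫ y : ℝ, Complex.exp (((-ν + ε : ℝ) : ℂ) * y) * F (y : ℝ)‖ ≤ K := by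
    intro ε h0 h1
    set s : ℝ := -ν + ε with hs
    obtain ⟨⟨A', B', hc'⟩, -⟩ := Gt_main ν0 μ (ν - ε/2) (by linarith) (by linarith) p
      (fun l hl => by linarith [hminr l hl])
    rw [← hF] at hc'
    have hA' := hc'.hA
    have hintg := mellin_integrable hc hc' s (by linarith) (by linarith)
    have hsplit := (intervalIntegral.integral_Iic_add_Ioi (b := 0) hintg.integrableOn hintg.integrableOn).symm
    set h : ℂ → ℂ := fun ξ => Complex.exp (s * ξ) * F ξ with hh
    have hhd : DifferentiableOn ℂ h strip := DifferentiableOn.mul (by fun_prop) hc.diff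
    have hnorm : ∀ y φ : ℝ, ‖h (y + φ * Complex.I)‖ = Real.exp (s * y) * ‖F (y + φ * Complex.I)‖ := by
      intro y φ
      simp only [hh]
      rw [norm_mul, Complex.norm_exp]
      congr 2
      simp
    have hpi2 : |Real.pi / 2| < Real.pi := by rw [abs_of_pos (by positivity)]; linarith
    have hmem : ∀ y : ℝ, ∀ φ ∈ Set.uIcc 0 (Real.pi / 2), ((y:ℂ) + φ * Complex.I) ∈ strip := by
      intro y φ hφ
      rw [Set.uIcc_of_le (by positivity)] at hφ
      exact strip_mem _ _ (by rw [abs_of_nonneg hφ.1]; linarith [hφ.2])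
    have hca := halfstrip_cauchy h hhd 0 (Real.pi / 2) 0 (A' * Real.exp B') (ε / 2) (by simpa using hpi) hpi2
      (by linarith) (by
        intro y hy φ hφ
        rw [hnorm]
        have := hc'.str _ (hmem y φ hφ)
        have hre : ((y:ℂ) + φ * Complex.I).re = y := by simp
        rw [hre] at this
        have hB' : Real.exp (B' * Real.exp y) ≤ Real.exp B' := by
          rw [Real.exp_le_exp]
          exact mul_le_of_le_one_right hc'.hB (Real.exp_le_one_iff.2 hy)
        calc _ ≤ Real.exp (s * y) * (A' * Real.exp ((ν - ε / 2) * y) * Real.exp B') := by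
              gcongr
              exact this.trans (by gcongr)
          _ = A' * Real.exp B' * (Real.exp (s * y) * Real.exp ((ν - ε / 2) * y)) := by ring
          _ = _ := by rw [← Real.exp_add, hs]; ring_nf)
    have e1 : ∫ y in Set.Iic (0:ℝ), Complex.exp ((s:ℂ) * y) * F (y : ℝ) =
        (∫ y in Set.Iic (0:ℝ), h (y + (Real.pi / 2 : ℝ) * Complex.I)) -
        Complex.I * ∫ φ in (0:ℝ)..(Real.pi / 2), h ((0:ℝ) + φ * Complex.I) := by
      simp only [Complex.ofReal_zero, zero_mul, add_zero] at hca
      have : ∫ y in Set.Iic (0:ℝ), Complex.exp ((s:ℂ) * y) * F (y : ℝ) = ∫ y in Set.Iic (0:ℝ), h y := rfl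
      rw [this]
      simp only [Complex.ofReal_zero]
      linear_combination hca
    have b1 : ‖∫ y in Set.Iic (0:ℝ), h (y + (Real.pi / 2 : ℝ) * Complex.I)‖ ≤
        ∫ y in Set.Iic (0:ℝ), Real.exp (-(ν * y)) * ‖F (y + (Real.pi / 2 : ℝ) * Complex.I)‖ := by
      refine norm_integral_le_of_norm_le hI ?_
      refine (ae_restrict_iff' measurableSet_Iic).2 (Eventually.of_forall fun y hy => ?_)
      have hy' : y ≤ 0 := hy
      rw [hnorm]
      gcongr
      rw [hs]
      nlinarith
    have b2 : ‖∫ φ in (0:ℝ)..(Real.pi / 2), h ((0:ℝ) + φ * Complex.I)‖ ≤ A * Real.exp B * (Real.pi / 2) := by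
      have := intervalIntegral.norm_integral_le_of_norm_le_const (a := 0) (b := Real.pi / 2) (C := A * Real.exp B)
        (f := fun φ : ℝ => h ((0:ℝ) + φ * Complex.I)) (by
          intro φ hφ
          rw [hnorm]
          have := hc.str _ (hmem 0 φ (Set.uIoc_subset_uIcc hφ))
          simpa using this)
      rwa [sub_zero, abs_of_pos (by positivity)] at this
    have b3 : ‖∫ y in Set.Ioi (0:ℝ), Complex.exp ((s:ℂ) * y) * F (y : ℝ)‖ ≤ A * 8 := by
      have hi8 := (integrableOn_exp_mul_Ioi (a := -(1/8)) (by norm_num) 0).const_mul A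
      have hv : ∫ y in Set.Ioi (0:ℝ), A * Real.exp (-(1/8) * y) = A * 8 := by
        rw [integral_const_mul, integral_exp_mul_Ioi (by norm_num)]
        norm_num
      rw [← hv]
      refine norm_integral_le_of_norm_le hi8 ?_
      refine (ae_restrict_iff' measurableSet_Ioi).2 (Eventually.of_forall fun y hy => ?_)
      have hy' : 0 < y := hy
      rw [norm_mul, exp_norm_real]
      calc _ ≤ Real.exp (s * y) * (A * Real.exp ((ν - 1/4) * y)) := by gcongr; exact hc.real y
        _ = A * Real.exp ((ε - 1/4) * y) := by rw [mul_left_comm, ← Real.exp_add, hs]; ring_nf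
        _ ≤ _ := by
          gcongr
          linarith
    rw [hsplit, e1, hK]
    refine (norm_add_le _ _).trans (add_le_add ((norm_sub_le _ _).trans (add_le_add b1 ?_)) b3)
    rw [norm_mul, Complex.norm_I, one_mul]
    exact b2
  have ident : ∀ ε : ℝ, 0 < ε → ε < 1/8 →
      (∫ y : ℝ, Complex.exp (((-ν + ε : ℝ) : ℂ) * y) * F (y : ℝ)) *
      ((Complex.Gamma ((ν0 + (-ν + ε) : ℝ) : ℂ))⁻¹ * ∏ l ∈ Finset.range p, (Complex.Gamma ((μ l + (-ν + ε) : ℝ) : ℂ))⁻¹)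
      = (Complex.Gamma ((1 - (-ν + ε) : ℝ) : ℂ))⁻¹ := by
    intro ε h0 h1
    have hm := mellin_Gt ν0 μ (ν - 1/4) (ν - ε/2) (-ν + ε) (by linarith) (by linarith) (by linarith) (by linarith)
      (by linarith) (by linarith) (by linarith) p (fun l hl => by linarith [hminr l hl]) (fun l hl => by linarith [hminr l hl])
    have n1 : ∀ x : ℝ, 0 < x → Complex.Gamma (x : ℂ) ≠ 0 := fun x hx => by
      rw [Complex.Gamma_ofReal]; exact Complex.ofReal_ne_zero.2 (Real.Gamma_pos_of_pos hx).ne'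
    have n2 := n1 (ν0 + (-ν + ε)) (by linarith)
    have n3 := n1 (1 - (-ν + ε)) (by linarith)
    have n4 : ∏ l ∈ Finset.range p, Complex.Gamma ((μ l + (-ν + ε) : ℝ) : ℂ) ≠ 0 := by
      refine Finset.prod_ne_zero_iff.2 fun l hl => n1 _ ?_
      linarith [hminr l (Finset.mem_range.1 hl)]
    rw [Finset.prod_inv_distrib, ← mul_inv, ← hm, ← hF, mul_inv]
    have n5 : (∫ y : ℝ, Complex.exp (((-ν + ε : ℝ) : ℂ) * y) * F (y : ℝ)) ≠ 0 := by
      intro h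
      rw [← hF, h, zero_mul] at hm
      exact mul_ne_zero n2 n4 hm.symm
    rw [← mul_assoc, mul_inv_cancel₀ n5, one_mul]
  have cont : ∀ a c : ℝ, Tendsto (fun ε : ℝ => (Complex.Gamma ((a + c * ε : ℝ) : ℂ))⁻¹) (𝓝[>] 0) (𝓝 (Complex.Gamma (a:ℝ))⁻¹) := by
    intro a c
    have h1 : Continuous (fun ε : ℝ => (Complex.Gamma ((a + c * ε : ℝ) : ℂ))⁻¹) :=
      Complex.differentiable_one_div_Gamma.continuous.comp (by fun_prop)
    have := (h1.tendsto 0).mono_left (nhdsWithin_le_nhds (s := Set.Ioi 0))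
    simpa using this
  have t1 : Tendsto (fun ε : ℝ => (Complex.Gamma ((ν0 + (-ν + ε) : ℝ) : ℂ))⁻¹ * ∏ l ∈ Finset.range p, (Complex.Gamma ((μ l + (-ν + ε) : ℝ) : ℂ))⁻¹)
      (𝓝[>] 0) (𝓝 0) := by
    have a1 := cont (ν0 - ν) 1
    have a2 := tendsto_finsetProd (Finset.range p) (fun l _ => cont (μ l - ν) 1)
    have z : ∏ l ∈ Finset.range p, (Complex.Gamma ((μ l - ν : ℝ) : ℂ))⁻¹ = 0 := by
      refine Finset.prod_eq_zero (Finset.mem_range.2 hi) ?_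
      rw [hμi]; simp
    have := a1.mul a2
    rw [z, mul_zero] at this
    refine this.congr fun ε => ?_
    ring_nf
  have t2 := cont (1 + ν) (-1)
  have hev : ∀ᶠ ε : ℝ in 𝓝[>] 0, 0 < ε ∧ ε < 1/8 := Ioo_mem_nhdsGT (by norm_num)
  have t3 : Tendsto (fun ε : ℝ => (Complex.Gamma ((1 + ν + (-1) * ε : ℝ) : ℂ))⁻¹) (𝓝[>] 0) (𝓝 0) := by
    have t1' := t1.norm.const_mul K
    rw [norm_zero, mul_zero] at t1'
    refine squeeze_zero_norm' ?_ t1'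
    filter_upwards [hev] with ε hε
    have := ident ε hε.1 hε.2
    rw [show (1 + ν + (-1) * ε : ℝ) = 1 - (-ν + ε) by ring, ← this, norm_mul]
    gcongr
    exact bound ε hε.1 hε.2
  have := tendsto_nhds_unique t2 t3
  rw [inv_eq_zero, Complex.Gamma_ofReal, Complex.ofReal_eq_zero] at this
  exact (Real.Gamma_pos_of_pos (by linarith)).ne' this

/-- The inner integrand of the critical kernel. -/
def Kin (ν0 : ℕ) (g : ℂ) (G2 : ℂ → ℂ) (τ η u t : ℝ) : ℂ :=
  ((u : ℂ) / (Complex.I * t)) ^ ν0 *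
        Complex.exp (-(τ : ℂ) * u - (u : ℂ) ^ 2 / 2 + (τ : ℂ) * (Complex.I * t) +
          (Complex.I * t) ^ 2 / 2) *
        ((u : ℂ) - Complex.I * t)⁻¹ * g *
        G2 (Complex.I * t * (η : ℂ)) * Complex.I

lemma Kcrit_Kin (r ν0 : ℕ) (ν : Fin r → ℕ) (G2 : ℂ → ℂ) (τ ξ η : ℝ) :
    Kcrit r ν0 ν G2 τ ξ η = (2 * Real.pi * Complex.I)⁻¹ *
      ∫ u in Set.Ioi (0 : ℝ), ∫ t : ℝ, Kin ν0 (G1 r ν0 ν ((u * ξ : ℝ) : ℂ)) G2 τ η u t := rfl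

lemma Kin_norm (ν0 : ℕ) (g : ℂ) (G2 : ℂ → ℂ) (τ η u t : ℝ) (hu : 0 < u) :
    ‖Kin ν0 g G2 τ η u t‖ = (u / |t|) ^ ν0 * Real.exp (-τ * u - u ^ 2 / 2 - t ^ 2 / 2) *
      ‖(u : ℂ) - Complex.I * t‖⁻¹ * ‖g‖ * ‖G2 (Complex.I * t * (η : ℂ))‖ := by
  have e : (-(τ : ℂ) * u - (u : ℂ) ^ 2 / 2 + (τ : ℂ) * (Complex.I * t) +
          (Complex.I * t) ^ 2 / 2).re = -τ * u - u ^ 2 / 2 - t ^ 2 / 2 := by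
    rw [mul_pow, Complex.I_sq, show (-(τ : ℂ) * u - (u : ℂ) ^ 2 / 2 + (τ : ℂ) * (Complex.I * t) +
          (-1) * (t:ℂ) ^ 2 / 2) = ((-τ * u - u ^ 2 / 2 - t ^ 2 / 2 : ℝ) : ℂ) + ((τ * t : ℝ) : ℂ) * Complex.I by
      push_cast; ring]
    rw [Complex.add_re, Complex.ofReal_re, Complex.re_ofReal_mul, Complex.I_re]; ring
  unfold Kin
  simp only [norm_mul, norm_pow, norm_div, norm_inv, Complex.norm_exp, e, Complex.norm_I,
    Complex.norm_real, Real.norm_eq_abs, abs_of_pos hu, one_mul, mul_one]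

lemma inner_zero (ν0 ν : ℕ) (g : ℂ) (G2 F : ℂ → ℂ) (τ η u : ℝ) (hu : 0 < u) (hη : 0 < η)
    (hν : ν + 1 ≤ ν0)
    (hF : ∀ s : ℝ, 0 < s → G2 (Complex.I * s) = F (Real.log s + (Real.pi / 2 : ℝ) * Complex.I))
    (hc : Continuous fun y : ℝ => F (y + (Real.pi / 2 : ℝ) * Complex.I))
    (hN : ¬ IntegrableOn (fun y : ℝ => Real.exp (-(ν * y)) *
      ‖F (y + (Real.pi / 2 : ℝ) * Complex.I)‖) (Set.Iic 0)) :
    ∫ t : ℝ, Kin ν0 g G2 τ η u t = 0 := by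
  by_cases hg : g = 0
  · simp [Kin, hg]
  refine integral_undef fun h => hN ?_
  have h1 := h.comp_mul_left' (R := η⁻¹) (by positivity)
  have h2 := ((integrableOn_Ioi_exp _).1 h1.integrableOn).integrableOn (s := Set.Iic 0)
  set C0 := (u * η) ^ ν0 * Real.exp (-τ * u - u ^ 2 / 2 - (η⁻¹) ^ 2 / 2) * (u + η⁻¹)⁻¹ * ‖g‖ with hC0
  have hC0p : 0 < C0 := by
    have := norm_pos_iff.2 hg
    positivity
  refine ((h2.norm.const_mul C0⁻¹).mono' ?_ ?_)
  · exact ((Real.continuous_exp.comp (by fun_prop)).mul hc.norm).aestronglyMeasurable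
  refine (ae_restrict_iff' measurableSet_Iic).2 (Eventually.of_forall fun y hy => ?_)
  have hy : y ≤ 0 := hy
  have ey : Real.exp y ≤ 1 := by simpa using hy
  have ep := Real.exp_pos y
  rw [norm_smul, Kin_norm _ _ _ _ _ _ _ hu]
  have e1 : Complex.I * ((η⁻¹ * Real.exp y : ℝ) : ℂ) * (η : ℂ) = Complex.I * (Real.exp y : ℝ) := by
    have : (η:ℂ) ≠ 0 := by exact_mod_cast hη.ne'
    push_cast; field_simp
  rw [e1, hF _ ep, Real.log_exp]
  set N := ‖F (y + (Real.pi / 2 : ℝ) * Complex.I)‖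
  have hNn : 0 ≤ N := norm_nonneg _
  have ha : |η⁻¹ * Real.exp y| = η⁻¹ * Real.exp y := abs_of_pos (by positivity)
  have hlt : η⁻¹ * Real.exp y ≤ η⁻¹ := by
    have : 0 < η⁻¹ := by positivity
    nlinarith
  rw [Real.norm_of_nonneg (by positivity), Real.norm_of_nonneg ep.le, ha]
  have b1 : (u + η⁻¹)⁻¹ ≤ ‖(u : ℂ) - Complex.I * ((η⁻¹ * Real.exp y : ℝ) : ℂ)‖⁻¹ := by
    have hne : (u : ℂ) - Complex.I * ((η⁻¹ * Real.exp y : ℝ) : ℂ) ≠ 0 := by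
      intro h0
      have := congrArg Complex.re h0
      rw [mul_comm, Complex.sub_re, Complex.ofReal_re, Complex.re_ofReal_mul, Complex.I_re] at this
      simp at this; exact hu.ne' this
    refine inv_anti₀ (norm_pos_iff.2 hne) ?_
    refine (norm_sub_le _ _).trans ?_
    rw [norm_mul, Complex.norm_I, Complex.norm_real, Complex.norm_real, Real.norm_of_nonneg hu.le,
      Real.norm_of_nonneg (by positivity)]
    linarith
  have b2 : Real.exp (-τ * u - u ^ 2 / 2 - (η⁻¹) ^ 2 / 2) ≤
      Real.exp (-τ * u - u ^ 2 / 2 - (η⁻¹ * Real.exp y) ^ 2 / 2) := by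
    have : (η⁻¹ * Real.exp y) ^ 2 ≤ (η⁻¹) ^ 2 := by gcongr
    exact Real.exp_le_exp.2 (by linarith)
  have b3 : (u * η) ^ ν0 * Real.exp (-(ν * y)) ≤ Real.exp y * (u / (η⁻¹ * Real.exp y)) ^ ν0 := by
    have : u / (η⁻¹ * Real.exp y) = (u * η) * Real.exp (-y) := by
      rw [Real.exp_neg]; field_simp
    rw [this, mul_pow (u * η), ← Real.exp_nat_mul, mul_left_comm, ← Real.exp_add]
    gcongr
    have : (ν:ℝ) + 1 ≤ ν0 := by exact_mod_cast hν
    nlinarith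
  rw [inv_mul_eq_div, le_div_iff₀ hC0p, hC0]
  calc _ = ((u * η) ^ ν0 * Real.exp (-(ν * y))) * Real.exp (-τ * u - u ^ 2 / 2 - (η⁻¹) ^ 2 / 2) *
        (u + η⁻¹)⁻¹ * ‖g‖ * N := by ring
    _ ≤ (Real.exp y * (u / (η⁻¹ * Real.exp y)) ^ ν0) *
        Real.exp (-τ * u - u ^ 2 / 2 - (η⁻¹ * Real.exp y) ^ 2 / 2) *
        ‖(u : ℂ) - Complex.I * ((η⁻¹ * Real.exp y : ℝ) : ℂ)‖⁻¹ * ‖g‖ * N := by gcongr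
    _ = _ := by ring

lemma Kcrit_zero {p : ℕ} (ν0 : ℕ) (ν : Fin p → ℕ) (hν : ∃ l, ν l < ν0) (G2 : ℂ → ℂ)
    (hd : DifferentiableOn ℂ G2 Complex.slitPlane)
    (hv : ∀ z : ℝ, 0 < z → G2 (z : ℂ) = ∫ t in posOrth p, Jf ν0 ν z t) (τ ξ η : ℝ) (hη : 0 < η) :
    Kcrit p ν0 ν G2 τ ξ η = 0 := by
  rw [Kcrit_Kin]
  by_cases h2 : ∃ i, 2 * ν i < ν0
  · obtain ⟨i, hi⟩ := h2
    have hz : ∀ z : ℝ, 0 < z → G2 (z : ℂ) = 0 := by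
      intro z hz
      rw [hv z hz]
      obtain ⟨q, rfl⟩ : ∃ q, p = q + 1 := ⟨p - 1, by have := i.2; omega⟩
      exact integral_undef (T1 ν0 ν i hi z hz)
    have hI := G2_I G2 (fun _ => 0) hd (differentiableOn_const 0) (fun x => hz _ (Real.exp_pos x))
    have : ∀ u : ℝ, ∫ t : ℝ, Kin ν0 (G1 p ν0 ν ((u * ξ : ℝ) : ℂ)) G2 τ η u t = 0 := by
      intro u
      refine integral_eq_zero_of_ae ?_
      have : ∀ᵐ t : ℝ, t ≠ 0 := by simp [ae_iff]
      filter_upwards [this] with t ht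
      have : G2 (Complex.I * t * (η : ℂ)) = 0 := by
        rw [mul_assoc, ← Complex.ofReal_mul]
        rcases lt_or_gt_of_ne ht with h | h
        · have := (hI (-(t * η)) (by nlinarith)).2
          rwa [neg_neg] at this
        · exact (hI (t * η) (by positivity)).1
      simp [Kin, this]
    simp only [this, integral_zero, mul_zero]
  · push Not at h2
    obtain ⟨l0, hl0⟩ := hν
    have : Nonempty (Fin p) := ⟨l0⟩
    obtain ⟨i, hi⟩ := Finite.exists_min ν
    set μ : ℕ → ℕ := fun l => if h : l < p then ν ⟨l, h⟩ else 0 with hμ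
    have hμν : (fun j : Fin p => μ j) = ν := by ext j; simp [hμ]
    have hμl : ∀ l (h : l < p), μ l = ν ⟨l, h⟩ := fun l h => by simp [hμ, h]
    obtain ⟨⟨A, B, hC⟩, -, hx⟩ := Gt_main ν0 μ ((ν0:ℝ) / 2 - 1 / 4) le_rfl
      (by have : (0:ℝ) ≤ ν0 := by positivity
          linarith) p (fun l hl => by
        rw [hμl l hl]
        have : (ν0:ℝ) ≤ 2 * ν ⟨l, hl⟩ := by exact_mod_cast h2 ⟨l, hl⟩
        linarith)
    rw [hμν] at hx
    have hI := G2_I G2 (Gt ν0 μ p) hd hC.diff (fun x => by rw [hv _ (Real.exp_pos x), hx])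
    have hpi : |Real.pi / 2| < Real.pi := by
      rw [abs_of_pos (by positivity)]; linarith [Real.pi_pos]
    have hN := T2_core ν0 (ν i) p i μ i.2 (by rw [hμl _ i.2]) (fun l hl => by
      rw [hμl l hl]; exact hi _) (lt_of_le_of_lt (hi l0) hl0) (h2 i)
    have : ∀ u ∈ Set.Ioi (0:ℝ), ∫ t : ℝ, Kin ν0 (G1 p ν0 ν ((u * ξ : ℝ) : ℂ)) G2 τ η u t = 0 := by
      intro u hu
      exact inner_zero ν0 (ν i) _ G2 (Gt ν0 μ p) τ η u hu hη (lt_of_le_of_lt (hi l0) hl0)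
        (fun s hs => (hI s hs).1) (cont_horiz _ hC.diff _ hpi) hN
    rw [setIntegral_congr_fun measurableSet_Ioi this]
    simp

/-- Iterated rescaled convolutions. -/
def ScIt (f : ℂ → ℂ) (κ : ℕ → ℕ) : ℕ → ℂ → ℂ
  | 0 => f
  | k + 1 => Sc (ScIt f κ k) (κ k)

lemma ScIt_Cls {b A B : ℝ} {f : ℂ → ℂ} (hf : Cls b A B f) (κ : ℕ → ℕ) (k : ℕ)
    (h : ∀ j < k, b < κ j ∧ 1 ≤ κ j) : ∃ A' B', Cls b A' B' (ScIt f κ k) := by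
  induction k with
  | zero => exact ⟨A, B, hf⟩
  | succ k ih =>
    obtain ⟨A', B', h'⟩ := ih fun j hj => h j (by omega)
    exact ⟨_, _, Cls_Sc h' (κ k) (h k (by omega)).1 (h k (by omega)).2⟩

lemma ScIt_Cls_unif (ν0 : ℕ) {A B : ℝ} {f : ℂ → ℂ} (hf : Cls (ν0 - 1/4) A B f) (κ : ℕ → ℕ → ℕ) (k : ℕ)
    (h : ∀ j < k, Tendsto (fun n => κ n j) atTop atTop) :
    ∃ A' B', ∀ᶠ n in atTop, Cls (ν0 - 1/4) A' B' (ScIt f (κ n) k) := by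
  induction k with
  | zero => exact ⟨A, B, Eventually.of_forall fun n => hf⟩
  | succ k ih =>
    obtain ⟨A', B', h'⟩ := ih fun j hj => h j (by omega)
    obtain ⟨n0, hn0⟩ := h'.exists
    refine ⟨A' * (2 ^ ν0 + (Real.pi + 1)), 8 * B', ?_⟩
    · filter_upwards [h', (h k (by omega)).eventually (Cls_Sc_unif ν0 A' B' hn0.hA)] with n h1 h2
      exact h2 _ h1

lemma ScIt_tendsto (ν0 : ℕ) {A B : ℝ} {f : ℂ → ℂ} (hf : Cls (ν0 - 1/4) A B f) (κ : ℕ → ℕ → ℕ) (k : ℕ)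
    (h : ∀ j < k, Tendsto (fun n => κ n j) atTop atTop) (ζ : ℂ) (hζ : ζ ∈ strip) :
    Tendsto (fun n => ScIt f (κ n) k ζ) atTop (𝓝 (f ζ)) := by
  induction k with
  | zero => exact tendsto_const_nhds
  | succ k ih =>
    have ih := ih fun j hj => h j (by omega)
    obtain ⟨A', B', h'⟩ := ScIt_Cls_unif ν0 hf κ k fun j hj => h j (by omega)
    obtain ⟨n0, hn0⟩ := h'.exists
    have : Tendsto (fun n => ScIt f (κ n) (k+1) ζ - ScIt f (κ n) k ζ) atTop (𝓝 0) := by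
      rw [tendsto_zero_iff_norm_tendsto_zero, Metric.tendsto_atTop']
      intro ε hε
      have h0 : (0:ℝ) ≤ ν0 := by positivity
      have := (h k (by omega)).eventually (Sc_close (b := ν0 - 1/4) (by linarith) hn0.hA hn0.hB ζ hζ (ε/2) (by positivity))
      obtain ⟨N, hN⟩ := eventually_atTop.1 (h'.and this)
      refine ⟨N, fun n hn => ?_⟩
      have := (hN n hn.le).2 _ (hN n hn.le).1
      rw [Real.dist_eq, sub_zero, abs_of_nonneg (norm_nonneg _)]
      exact lt_of_le_of_lt this (by linarith)
    simpa using this.add ih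

lemma Gt_congr (ν0 : ℕ) (μ μ' : ℕ → ℕ) (p : ℕ) (h : ∀ l < p, μ l = μ' l) : Gt ν0 μ p = Gt ν0 μ' p := by
  induction p with
  | zero => rfl
  | succ p ih =>
    simp only [Gt]
    rw [ih fun l hl => h l (by omega), h p (by omega)]

lemma ScIt_Gt (ν0 m : ℕ) (μ : ℕ → ℕ) (b : ℝ) (h1 : (ν0:ℝ)/2 - 1/4 ≤ b) (h2 : b ≤ ν0) (k : ℕ)
    (hμ : ∀ l < m + k, b < μ l) (hμ1 : ∀ j < k, 1 ≤ μ (m + j)) (x : ℝ) :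
    Gt ν0 μ (m + k) x = ((∏ j ∈ Finset.range k, Real.Gamma (μ (m + j)) : ℝ) : ℂ) *
      ScIt (Gt ν0 μ m) (fun j => μ (m + j)) k ((x - ∑ j ∈ Finset.range k, Real.log (μ (m + j)) : ℝ) : ℂ) := by
  induction k generalizing x with
  | zero => simp [ScIt]
  | succ k ih =>
    have ih := ih (fun l hl => hμ l (by omega)) (fun j hj => hμ1 j (by omega))
    obtain ⟨⟨A, B, hC⟩, -⟩ := Gt_main ν0 μ b h1 h2 (m+k) (fun l hl => hμ l (by omega))
    obtain ⟨⟨A0, B0, hC0⟩, -⟩ := Gt_main ν0 μ b h1 h2 m (fun l hl => hμ l (by omega))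
    obtain ⟨A1, B1, hC1⟩ := ScIt_Cls hC0 (fun j => μ (m + j)) k
      (fun j hj => ⟨hμ _ (by omega), hμ1 j (by omega)⟩)
    set f := ScIt (Gt ν0 μ m) (fun j => μ (m + j)) k with hf
    set L := ∑ j ∈ Finset.range k, Real.log (μ (m + j)) with hL
    set P := ∏ j ∈ Finset.range k, Real.Gamma (μ (m + j)) with hP
    have hb := hμ (m + k) (by omega)
    have hG : (Real.Gamma (μ (m+k)) : ℂ) ≠ 0 := by
      have : (0:ℝ) < μ (m + k) := by exact_mod_cast hμ1 k (by omega)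
      exact_mod_cast (Real.Gamma_pos_of_pos this).ne'
    have e1 : Gt ν0 μ (m + (k+1)) x = P * Fext f (μ (m+k)) ((x - L : ℝ) : ℂ) := by
      rw [show Gt ν0 μ (m + (k+1)) = Fext (Gt ν0 μ (m+k)) (μ (m+k)) from rfl, Fext_real hC _ hb,
        Fext_real hC1 _ hb, ← integral_const_mul]
      rw [← integral_sub_right_eq_self (fun y : ℝ => (P:ℂ) * (Ker (μ (m+k)) (((x - L : ℝ) : ℂ) - (y : ℝ)) * f (y : ℝ))) L]
      congr 1; ext y
      rw [ih y]
      push_cast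
      rw [show (x:ℂ) - L - (y - L) = x - y by ring]
      ring
    rw [e1, Finset.prod_range_succ, Finset.sum_range_succ, ← hL, ← hP]
    simp only [ScIt, Sc, ← hf]
    rw [← Complex.ofReal_add, show x - (L + Real.log (μ (m+k))) + Real.log (μ (m+k)) = x - L by ring]
    push_cast
    field_simp

lemma sq_bound (k u : ℝ) : k * u - u ^ 2 / 2 ≤ k ^ 2 - u ^ 2 / 4 := by nlinarith [sq_nonneg (u / 2 - k)]

lemma gauss_Ioi (s k : ℝ) (hs : -1 < s) :
    IntegrableOn (fun u : ℝ => u ^ s * Real.exp (k * u - u ^ 2 / 2)) (Set.Ioi 0) := by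
  have h := (integrableOn_rpow_mul_exp_neg_mul_sq (b := 1/4) (by norm_num) hs).const_mul (Real.exp (k ^ 2))
  refine h.mono' ?_ ?_
  · exact (Measurable.aestronglyMeasurable (by fun_prop))
  refine (ae_restrict_iff' measurableSet_Ioi).2 (Eventually.of_forall fun u hu => ?_)
  have hu : 0 < u := hu
  rw [Real.norm_of_nonneg (by positivity), mul_left_comm, ← Real.exp_add]
  gcongr
  linarith [sq_bound k u]

lemma gauss_abs (s k : ℝ) (hs : -1 < s) :
    Integrable (fun u : ℝ => |u| ^ s * Real.exp (k * |u| - u ^ 2 / 2)) := by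
  have h := gauss_Ioi s k hs
  have h1 : IntegrableOn (fun u : ℝ => |u| ^ s * Real.exp (k * |u| - u ^ 2 / 2)) (Set.Ioi 0) := by
    refine h.congr_fun (fun u hu => ?_) measurableSet_Ioi
    simp only [abs_of_pos (show 0 < u from hu)]
  have h2 : IntegrableOn (fun u : ℝ => |u| ^ s * Real.exp (k * |u| - u ^ 2 / 2)) (Set.Iio 0) := by
    have h3 := IntegrableOn.comp_neg_Iio (c := 0) (f := fun u : ℝ => |u| ^ s * Real.exp (k * |u| - u ^ 2 / 2))
      (by simpa only [neg_zero] using h1)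
    simpa using h3
  rw [← integrableOn_univ, ← Set.Iic_union_Ioi (a := (0:ℝ))]
  exact ((integrableOn_Iic_iff_integrableOn_Iio (by simp)).2 h2).union h1

lemma inv_bound (u t : ℝ) (hu : 0 < u) (ht : t ≠ 0) :
    ‖(u : ℂ) - Complex.I * t‖⁻¹ ≤ u ^ (-(1/2) : ℝ) * |t| ^ (-(1/2) : ℝ) := by
  have ht' := abs_pos.2 ht
  rw [← Real.mul_rpow hu.le ht'.le, Real.rpow_neg (by positivity)]
  refine inv_anti₀ (by positivity) ?_
  rw [← Real.sqrt_eq_rpow]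
  refine Real.sqrt_le_iff.2 ⟨norm_nonneg _, ?_⟩
  rw [← Complex.normSq_eq_norm_sq, Complex.normSq_apply]
  have e1 : ((u : ℂ) - Complex.I * t).re = u := by simp
  have e2 : ((u : ℂ) - Complex.I * t).im = -t := by simp
  rw [e1, e2]
  nlinarith [sq_nonneg (u - |t|), sq_abs t]

lemma Kin_bound (ν0 : ℕ) (g v : ℂ) (τ a A B u t : ℝ) (hu : 0 < u) (ht : t ≠ 0)
    (hg : ‖g‖ ≤ Real.exp (a * u))
    (hv : ‖v‖ ≤ A * |t| ^ ((ν0:ℝ) - 1/4) * Real.exp (B * |t|)) :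
    ‖Kin ν0 g (fun _ => v) τ 1 u t‖ ≤ (u ^ ((ν0:ℝ) - 1/2) * Real.exp ((a - τ) * u - u ^ 2 / 2)) *
      (A * (|t| ^ (-(3/4) : ℝ) * Real.exp (B * |t| - t ^ 2 / 2))) := by
  have ht' := abs_pos.2 ht
  rw [Kin_norm _ _ _ _ _ _ _ hu]
  have hi := inv_bound u t hu ht
  calc _ ≤ (u / |t|) ^ ν0 * Real.exp (-τ * u - u ^ 2 / 2 - t ^ 2 / 2) *
      (u ^ (-(1/2) : ℝ) * |t| ^ (-(1/2) : ℝ)) * Real.exp (a * u) *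
        (A * |t| ^ ((ν0:ℝ) - 1/4) * Real.exp (B * |t|)) := by gcongr
    _ = _ := by
      rw [div_pow, ← Real.rpow_natCast u, ← Real.rpow_natCast |t|]
      have e1 : u ^ ((ν0:ℝ) - 1/2) = u ^ (ν0:ℝ) * u ^ (-(1/2) : ℝ) := by
        rw [← Real.rpow_add hu]; ring_nf
      have e2 : |t| ^ (-(3/4) : ℝ) = |t| ^ ((ν0:ℝ) - 1/4) * |t| ^ (-(1/2) : ℝ) / |t| ^ (ν0:ℝ) := by
        rw [← Real.rpow_add ht', ← Real.rpow_sub ht']; ring_nf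
      have e3 : Real.exp ((a - τ) * u - u ^ 2 / 2) * Real.exp (B * |t| - t ^ 2 / 2) =
          Real.exp (-τ * u - u ^ 2 / 2 - t ^ 2 / 2) * Real.exp (a * u) * Real.exp (B * |t|) := by
        rw [← Real.exp_add, ← Real.exp_add, ← Real.exp_add]; ring_nf
      calc _ = (u ^ (ν0:ℝ) * u ^ (-(1/2) : ℝ)) * A * (|t| ^ ((ν0:ℝ) - 1/4) * |t| ^ (-(1/2) : ℝ) / |t| ^ (ν0:ℝ)) *
            (Real.exp (-τ * u - u ^ 2 / 2 - t ^ 2 / 2) * Real.exp (a * u) * Real.exp (B * |t|)) := by ring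
        _ = _ := by rw [← e1, ← e2, ← e3]; ring

lemma Kin_meas (ν0 : ℕ) (g V : ℝ → ℂ) (hg : Measurable g) (hV : Measurable V) (τ : ℝ) :
    Measurable (fun q : ℝ × ℝ => Kin ν0 (g q.1) (fun _ => V q.2) τ 1 q.1 q.2) := by
  unfold Kin
  have h1 : Measurable (fun q : ℝ × ℝ => g q.1) := hg.comp measurable_fst
  have h2 : Measurable (fun q : ℝ × ℝ => V q.2) := hV.comp measurable_snd
  fun_prop

lemma DCT (ν0 : ℕ) (g : ℕ → ℝ → ℂ) (V : ℕ → ℝ → ℂ) (gs Vs : ℝ → ℂ) (τ a A B : ℝ)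
    (hgm : ∀ n, Measurable (g n)) (hVm : ∀ᶠ n in atTop, Measurable (V n))
    (hgb : ∀ᶠ n in atTop, ∀ u, 0 < u → ‖g n u‖ ≤ Real.exp (a * u))
    (hVb : ∀ᶠ n in atTop, ∀ t, t ≠ 0 → ‖V n t‖ ≤ A * |t| ^ ((ν0:ℝ) - 1/4) * Real.exp (B * |t|))
    (hgt : ∀ u, 0 < u → Tendsto (fun n => g n u) atTop (𝓝 (gs u)))
    (hVt : ∀ t, t ≠ 0 → Tendsto (fun n => V n t) atTop (𝓝 (Vs t))) :
    Tendsto (fun n => ∫ u in Set.Ioi (0:ℝ), ∫ t : ℝ, Kin ν0 (g n u) (fun _ => V n t) τ 1 u t) atTop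
      (𝓝 (∫ u in Set.Ioi (0:ℝ), ∫ t : ℝ, Kin ν0 (gs u) (fun _ => Vs t) τ 1 u t)) := by
  have h0 : ∀ᵐ t : ℝ, t ≠ 0 := by simp [ae_iff]
  have hE : Integrable (fun t : ℝ => A * (|t| ^ (-(3/4) : ℝ) * Real.exp (B * |t| - t ^ 2 / 2))) :=
    (gauss_abs (-(3/4)) B (by norm_num)).const_mul A
  have hD : IntegrableOn (fun u : ℝ => u ^ ((ν0:ℝ) - 1/2) * Real.exp ((a - τ) * u - u ^ 2 / 2)) (Set.Ioi 0) :=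
    gauss_Ioi _ _ (by have : (0:ℝ) ≤ ν0 := by positivity
                      linarith)
  refine tendsto_integral_filter_of_dominated_convergence
    (fun u => (u ^ ((ν0:ℝ) - 1/2) * Real.exp ((a - τ) * u - u ^ 2 / 2)) *
      ∫ t : ℝ, A * (|t| ^ (-(3/4) : ℝ) * Real.exp (B * |t| - t ^ 2 / 2))) ?_ ?_ (hD.mul_const _) ?_
  · filter_upwards [hVm] with n hn
    exact ((Kin_meas ν0 (g n) (V n) (hgm n) hn τ).stronglyMeasurable.integral_prod_right).aestronglyMeasurable
  · filter_upwards [hgb, hVb] with n h1 h2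
    refine (ae_restrict_iff' measurableSet_Ioi).2 (Eventually.of_forall fun u hu => ?_)
    rw [← integral_const_mul]
    refine norm_integral_le_of_norm_le (hE.const_mul _) ?_
    filter_upwards [h0] with t ht
    exact Kin_bound ν0 _ _ τ a A B u t hu ht (h1 u hu) (h2 t ht)
  · refine (ae_restrict_iff' measurableSet_Ioi).2 (Eventually.of_forall fun u hu => ?_)
    refine tendsto_integral_filter_of_dominated_convergence
      (fun t => (u ^ ((ν0:ℝ) - 1/2) * Real.exp ((a - τ) * u - u ^ 2 / 2)) *
        (A * (|t| ^ (-(3/4) : ℝ) * Real.exp (B * |t| - t ^ 2 / 2)))) ?_ ?_ (hE.const_mul _) ?_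
    · filter_upwards [hVm] with n hn
      exact ((Kin_meas ν0 (g n) (V n) (hgm n) hn τ).comp measurable_prodMk_left).aestronglyMeasurable
    · filter_upwards [hgb, hVb] with n h1 h2
      filter_upwards [h0] with t ht
      exact Kin_bound ν0 _ _ τ a A B u t hu ht (h1 u hu) (h2 t ht)
    · filter_upwards [h0] with t ht
      unfold Kin
      exact (((tendsto_const_nhds).mul (hgt u hu)).mul (hVt t ht)).mul_const _

/-- The ratio `κ^k κ! / (κ+k)!`. -/
def rr (κ k : ℕ) : ℝ := (κ:ℝ) ^ k * κ.factorial / (κ + k).factorial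

lemma rr_nonneg (κ k : ℕ) : 0 ≤ rr κ k := by unfold rr; positivity

lemma rr_le (κ k : ℕ) : rr κ k ≤ 1 := by
  unfold rr
  rw [div_le_one (by positivity)]
  have h := Nat.factorial_mul_pow_le_factorial (m := κ) (n := k)
  have h2 : κ ^ k ≤ (κ + 1) ^ k := Nat.pow_le_pow_left (by omega) _
  have : κ ^ k * κ.factorial ≤ (κ + k).factorial := by
    calc _ ≤ (κ+1) ^ k * κ.factorial := Nat.mul_le_mul_right _ h2
      _ = _ := by ring
      _ ≤ _ := h
  exact_mod_cast this

lemma rr_tendsto (k : ℕ) : Tendsto (fun κ : ℕ => rr κ k) atTop (𝓝 1) := by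
  induction k with
  | zero =>
    have : (fun κ : ℕ => rr κ 0) = fun _ => 1 := by
      ext κ; simp [rr, Nat.factorial_ne_zero]
    rw [this]; exact tendsto_const_nhds
  | succ k ih =>
    have h := tendsto_natCast_div_add_atTop (𝕜 := ℝ) ((k:ℝ) + 1)
    have := ih.mul h
    rw [one_mul] at this
    refine this.congr fun κ => ?_
    unfold rr
    rw [← add_assoc κ k 1, Nat.factorial_succ, pow_succ]
    have : ((κ + k).factorial : ℝ) ≠ 0 := by positivity
    push_cast
    rw [add_assoc (κ:ℝ) k 1]
    field_simp

lemma prod_rr_mem (K : ℕ) (κ : ℕ → ℕ) (k : ℕ) :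
    0 ≤ ∏ j ∈ Finset.range K, rr (κ j) k ∧ ∏ j ∈ Finset.range K, rr (κ j) k ≤ 1 :=
  ⟨Finset.prod_nonneg fun j _ => rr_nonneg _ _,
    Finset.prod_le_one (fun j _ => rr_nonneg _ _) fun j _ => rr_le _ _⟩

/-- Terms of the series of `G1`. -/
def St (ν0 m : ℕ) (μ : ℕ → ℕ) (w : ℝ) (k : ℕ) : ℂ :=
  (-(w:ℂ)) ^ k / ((Nat.factorial k : ℂ) * (Real.Gamma ((ν0 : ℝ) + 1 + k) : ℂ) *
      ∏ l ∈ Finset.range m, (Real.Gamma ((μ l : ℝ) + 1 + k) : ℂ))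

lemma gamma_ge (ν k : ℕ) : 1 ≤ Real.Gamma ((ν:ℝ) + 1 + k) := by
  rw [show (ν:ℝ) + 1 + k = ν + k + 1 by ring, gamma_nat]
  exact one_le_fact _

lemma St_norm (ν0 m : ℕ) (μ : ℕ → ℕ) (w : ℝ) (k : ℕ) : ‖St ν0 m μ w k‖ ≤ |w| ^ k / k.factorial := by
  have hn : ∀ ν : ℕ, ‖(Real.Gamma ((ν:ℝ) + 1 + k) : ℂ)‖ = Real.Gamma ((ν:ℝ) + 1 + k) := fun ν => by
    rw [Complex.norm_real, Real.norm_of_nonneg (by linarith [gamma_ge ν k])]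
  unfold St
  rw [norm_div, norm_pow, norm_neg, Complex.norm_real, norm_mul, norm_mul, norm_prod, hn,
    Finset.prod_congr rfl fun l _ => hn (μ l), Complex.norm_natCast, Real.norm_eq_abs]
  have h1 := gamma_ge ν0 k
  have h2 : 1 ≤ ∏ l ∈ Finset.range m, Real.Gamma ((μ l : ℝ) + 1 + k) :=
    calc (1:ℝ) = ∏ l ∈ Finset.range m, 1 := by simp
      _ ≤ _ := Finset.prod_le_prod (fun _ _ => zero_le_one) fun l _ => gamma_ge _ _
  have h3 : (0:ℝ) < k.factorial := by positivity
  gcongr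
  nlinarith [one_le_mul_of_one_le_of_one_le h1 h2]

/-- The rescaled series. -/
def gS (ν0 m : ℕ) (μ : ℕ → ℕ) (K : ℕ) (κ : ℕ → ℕ) (w : ℝ) : ℂ :=
  ∑' k, St ν0 m μ w k * ((∏ j ∈ Finset.range K, rr (κ j) k : ℝ) : ℂ)

lemma gS_term (ν0 m : ℕ) (μ : ℕ → ℕ) (K : ℕ) (κ : ℕ → ℕ) (w : ℝ) (k : ℕ) :
    ‖St ν0 m μ w k * ((∏ j ∈ Finset.range K, rr (κ j) k : ℝ) : ℂ)‖ ≤ |w| ^ k / k.factorial := by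
  have h := prod_rr_mem K κ k
  rw [norm_mul, Complex.norm_real, Real.norm_of_nonneg h.1]
  exact (mul_le_of_le_one_right (norm_nonneg _) h.2).trans (St_norm _ _ _ _ _)

lemma gS_summable (ν0 m : ℕ) (μ : ℕ → ℕ) (K : ℕ) (κ : ℕ → ℕ) (w : ℝ) :
    Summable fun k => St ν0 m μ w k * ((∏ j ∈ Finset.range K, rr (κ j) k : ℝ) : ℂ) :=
  Summable.of_norm_bounded (Real.summable_pow_div_factorial |w|) (gS_term ν0 m μ K κ w)

lemma gS_norm (ν0 m : ℕ) (μ : ℕ → ℕ) (K : ℕ) (κ : ℕ → ℕ) (w : ℝ) :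
    ‖gS ν0 m μ K κ w‖ ≤ Real.exp |w| := by
  have h : HasSum (fun k : ℕ => |w| ^ k / k.factorial) (Real.exp |w|) := by
    rw [Real.exp_eq_exp_ℝ]; exact NormedSpace.expSeries_div_hasSum_exp |w|
  exact tsum_of_norm_bounded h (gS_term ν0 m μ K κ w)

lemma gS_meas (ν0 m : ℕ) (μ : ℕ → ℕ) (K : ℕ) (κ : ℕ → ℕ) : Measurable (gS ν0 m μ K κ) := by
  refine measurable_of_tendsto_metrizable (f := fun N w => ∑ k ∈ Finset.range N,
    St ν0 m μ w k * ((∏ j ∈ Finset.range K, rr (κ j) k : ℝ) : ℂ)) (fun N => ?_) ?_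
  · unfold St; fun_prop
  · exact tendsto_pi_nhds.2 fun w => (gS_summable ν0 m μ K κ w).hasSum.tendsto_sum_nat

lemma gS_tendsto (ν0 m : ℕ) (μ : ℕ → ℕ) (K : ℕ) (κ : ℕ → ℕ → ℕ)
    (h : ∀ j < K, Tendsto (fun n => κ n j) atTop atTop) (w : ℝ) :
    Tendsto (fun n => gS ν0 m μ K (κ n) w) atTop (𝓝 (∑' k, St ν0 m μ w k)) := by
  refine tendsto_tsum_of_dominated_convergence (Real.summable_pow_div_factorial |w|) (fun k => ?_)
    (Eventually.of_forall fun n k => gS_term ν0 m μ K (κ n) w k)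
  have h1 : Tendsto (fun n => ∏ j ∈ Finset.range K, rr (κ n j) k) atTop (𝓝 (∏ j ∈ Finset.range K, 1)) :=
    tendsto_finsetProd _ fun j hj => (rr_tendsto k).comp (h j (Finset.mem_range.1 hj))
  rw [Finset.prod_const_one] at h1
  have h2 := ((Complex.continuous_ofReal.tendsto 1).comp h1).const_mul (St ν0 m μ w k)
  simpa using h2

lemma G1_St (ν0 m : ℕ) (ν : Fin m → ℕ) (μ : ℕ → ℕ) (h : ∀ l : Fin m, μ l = ν l) (w : ℝ) :
    G1 m ν0 ν (w : ℂ) = ∑' k, St ν0 m μ w k := by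
  unfold G1 St
  congr 1; ext k
  rw [Finset.prod_range fun l => (Real.Gamma ((μ l : ℝ) + 1 + k) : ℂ)]
  simp only [h]

lemma G1_gS (ν0 m K : ℕ) (μ : ℕ → ℕ) (hμ : ∀ j < K, 1 ≤ μ (m + j)) (w : ℝ) :
    (((∏ j ∈ Finset.range K, (μ (m + j) : ℝ)) : ℝ) : ℂ) *
      ((∏ j ∈ Finset.range K, Real.Gamma (μ (m + j)) : ℝ) : ℂ) *
      ∑' k, St ν0 (m + K) μ ((∏ j ∈ Finset.range K, (μ (m + j) : ℝ)) * w) k =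
    gS ν0 m μ K (fun j => μ (m + j)) w := by
  unfold gS
  rw [← tsum_mul_left]
  congr 1; ext k
  unfold St
  rw [Finset.prod_range_add]
  have hP : ∏ j ∈ Finset.range K, rr (μ (m + j)) k =
      (∏ j ∈ Finset.range K, (μ (m + j) : ℝ)) ^ k * ((∏ j ∈ Finset.range K, (μ (m + j) : ℝ)) *
        (∏ j ∈ Finset.range K, Real.Gamma (μ (m + j)))) /
        ∏ j ∈ Finset.range K, Real.Gamma ((μ (m + j) : ℝ) + 1 + k) := by
    rw [← Finset.prod_pow, ← Finset.prod_mul_distrib, ← Finset.prod_mul_distrib, ← Finset.prod_div_distrib]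
    refine Finset.prod_congr rfl fun j hj => ?_
    have h1 := hμ j (Finset.mem_range.1 hj)
    have h0 : (μ (m + j) : ℝ) ≠ 0 := by
      have : (1:ℝ) ≤ μ (m + j) := by exact_mod_cast h1
      linarith
    rw [← Real.Gamma_add_one h0, Real.Gamma_nat_eq_factorial,
      show (μ (m + j):ℝ) + 1 + k = μ (m + j) + k + 1 by ring, gamma_nat]
    rfl
  rw [hP]
  set c := ∏ j ∈ Finset.range K, (μ (m + j) : ℝ)
  set P := ∏ j ∈ Finset.range K, Real.Gamma (μ (m + j))
  push_cast
  rw [show -((c:ℂ) * w) = c * (-w) by ring, mul_pow]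
  simp only [div_eq_mul_inv, mul_inv]
  ring

/-- Boundary values on the two half-lines of the imaginary axis. -/
def imV (f : ℂ → ℂ) (s : ℝ) : ℂ :=
  if 0 < s then f (Real.log s + (Real.pi / 2 : ℝ) * Complex.I)
  else f (Real.log s + (-(Real.pi / 2) : ℝ) * Complex.I)

lemma hpi2 : |Real.pi / 2| < Real.pi := by
  rw [abs_of_pos (by positivity)]; linarith [Real.pi_pos]

lemma hpi2' : |-(Real.pi / 2)| < Real.pi := by rw [abs_neg]; exact hpi2

lemma imV_meas {b A B : ℝ} {f : ℂ → ℂ} (hf : Cls b A B f) : Measurable (imV f) := by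
  unfold imV
  refine Measurable.ite measurableSet_Ioi ?_ ?_
  · exact (cont_horiz _ hf.diff _ hpi2).measurable.comp Real.measurable_log
  · exact (cont_horiz _ hf.diff _ hpi2').measurable.comp Real.measurable_log

lemma imV_bound {b A B : ℝ} {f : ℂ → ℂ} (hf : Cls b A B f) (s : ℝ) (hs : s ≠ 0) :
    ‖imV f s‖ ≤ A * |s| ^ b * Real.exp (B * |s|) := by
  have key : ∀ φ : ℝ, |φ| < Real.pi → ‖f (Real.log s + φ * Complex.I)‖ ≤
      A * |s| ^ b * Real.exp (B * |s|) := by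
    intro φ hφ
    have h := hf.str _ (strip_mem (Real.log s) φ hφ)
    have e : ((Real.log s : ℝ) + φ * Complex.I : ℂ).re = Real.log s := by
      rw [Complex.add_re, Complex.ofReal_re, Complex.re_ofReal_mul, Complex.I_re]; ring
    rw [e, ← Real.log_abs, Real.exp_log (abs_pos.2 hs)] at h
    rw [Real.rpow_def_of_pos (abs_pos.2 hs), mul_comm (Real.log |s|) b, ← Real.log_abs]
    exact h
  unfold imV
  split_ifs
  · exact key _ hpi2
  · exact key _ hpi2'

lemma slit_mul (c : ℝ) (hc : 0 < c) (z : ℂ) (hz : z ∈ Complex.slitPlane) :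
    z * (c : ℂ) ∈ Complex.slitPlane := by
  rw [mul_comm]
  rcases hz with h | h
  · left; rw [Complex.re_ofReal_mul]; positivity
  · right; rw [Complex.im_ofReal_mul]; exact mul_ne_zero hc.ne' h

lemma G2_scaled (ν0 m K : ℕ) (ν : Fin (m + K) → ℕ) (μ : ℕ → ℕ) (hν : ∀ l : Fin (m + K), μ l = ν l)
    (hμ : ∀ l < m + K, (ν0:ℝ) - 1/4 < μ l) (hμ1 : ∀ j < K, 1 ≤ μ (m + j)) (G2 : ℂ → ℂ)
    (hd : DifferentiableOn ℂ G2 Complex.slitPlane)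
    (hv : ∀ z : ℝ, 0 < z → G2 (z : ℂ) = ∫ t in posOrth (m + K), Jf ν0 ν z t) (s : ℝ) (hs : s ≠ 0) :
    G2 (Complex.I * s * ((∏ j ∈ Finset.range K, (μ (m + j) : ℝ) : ℝ) : ℂ)) =
      ((∏ j ∈ Finset.range K, Real.Gamma (μ (m + j)) : ℝ) : ℂ) *
        imV (ScIt (Gt ν0 μ m) (fun j => μ (m + j)) K) s := by
  have h0 : (0:ℝ) ≤ ν0 := by positivity
  have b1 : (ν0:ℝ)/2 - 1/4 ≤ ν0 - 1/4 := by linarith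
  have b2 : (ν0:ℝ) - 1/4 ≤ ν0 := by linarith
  obtain ⟨⟨A0, B0, hC0⟩, -⟩ := Gt_main ν0 μ _ b1 b2 m (fun l hl => hμ l (by omega))
  obtain ⟨-, -, hx⟩ := Gt_main ν0 μ _ b1 b2 (m + K) hμ
  obtain ⟨A1, B1, hC1⟩ := ScIt_Cls hC0 (fun j => μ (m + j)) K
      (fun j hj => ⟨hμ _ (by omega), hμ1 j hj⟩)
  have hS := ScIt_Gt ν0 m μ _ b1 b2 K hμ hμ1
  set f := ScIt (Gt ν0 μ m) (fun j => μ (m + j)) K with hf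
  set c := ∏ j ∈ Finset.range K, (μ (m + j) : ℝ) with hc
  set P := ∏ j ∈ Finset.range K, Real.Gamma (μ (m + j)) with hP
  have hpos : ∀ j ∈ Finset.range K, (0:ℝ) < μ (m + j) := fun j hj => by
    exact_mod_cast hμ1 j (Finset.mem_range.1 hj)
  have hcp : 0 < c := Finset.prod_pos hpos
  have hlog : Real.log c = ∑ j ∈ Finset.range K, Real.log (μ (m + j)) :=
    Real.log_prod fun j hj => (hpos j hj).ne'
  have hνμ : (fun j : Fin (m + K) => μ j) = ν := funext hν
  rw [hνμ] at hx
  have hI := G2_I (fun z => G2 (z * c)) (fun ζ => P * f ζ)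
    (hd.comp (by fun_prop) fun z hz => slit_mul c hcp z hz) (hC1.diff.const_mul _) (fun x => by
      have e : ((Real.exp x : ℝ) : ℂ) * (c : ℂ) = ((Real.exp (x + Real.log c) : ℝ) : ℂ) := by
        rw [← Complex.ofReal_mul, Real.exp_add, Real.exp_log hcp]
      simp only [e]
      rw [hv _ (Real.exp_pos _), ← hx, hS, ← hlog, add_sub_cancel_right])
  unfold imV
  split_ifs with h
  · exact (hI s h).1
  · have hs' : 0 < -s := by
      rcases lt_or_gt_of_ne hs with h' | h'
      · linarith
      · exact absurd h' h
    have := (hI (-s) hs').2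
    rw [neg_neg, Real.log_neg_eq_log] at this
    exact this

lemma Kscaled (ν0 m K : ℕ) (ν : Fin (m + K) → ℕ) (μ : ℕ → ℕ) (hν : ∀ l : Fin (m + K), μ l = ν l)
    (hμ : ∀ l < m + K, (ν0:ℝ) - 1/4 < μ l) (hμ1 : ∀ j < K, 1 ≤ μ (m + j)) (G2 : ℂ → ℂ)
    (hd : DifferentiableOn ℂ G2 Complex.slitPlane)
    (hv : ∀ z : ℝ, 0 < z → G2 (z : ℂ) = ∫ t in posOrth (m + K), Jf ν0 ν z t) (τ x y : ℝ) (hy : 0 < y)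
    (c : ℝ) (hc : c = ∏ j ∈ Finset.range K, (μ (m + j) : ℝ)) :
    (c : ℂ) * Kcrit (m + K) ν0 ν G2 τ (c * x) (c * y) = (2 * Real.pi * Complex.I)⁻¹ *
      ∫ u in Set.Ioi (0 : ℝ), ∫ t : ℝ, Kin ν0 (gS ν0 m μ K (fun j => μ (m + j)) (u * x))
        (fun _ => imV (ScIt (Gt ν0 μ m) (fun j => μ (m + j)) K) (t * y)) τ 1 u t := by
  rw [Kcrit_Kin, mul_left_comm, ← integral_const_mul]
  congr 1
  congr 1; ext u
  rw [← integral_const_mul]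
  have h0 : ∀ᵐ t : ℝ, t ≠ 0 := by simp [ae_iff]
  refine integral_congr_ae ?_
  filter_upwards [h0] with t ht
  have h1 := G2_scaled ν0 m K ν μ hν hμ hμ1 G2 hd hv (t * y) (mul_ne_zero ht hy.ne')
  have h2 := G1_gS ν0 m K μ hμ1 (u * x)
  rw [← hc] at h1 h2
  rw [← G1_St ν0 (m + K) ν μ hν] at h2
  unfold Kin
  rw [← h2, show u * (c * x) = c * (u * x) by ring,
    show Complex.I * (t:ℂ) * ((c * y : ℝ) : ℂ) = Complex.I * ((t * y : ℝ) : ℂ) * (c : ℂ) by push_cast; ring, h1]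
  ring

lemma prod_filter_big (m K : ℕ) (ν : Fin (m + K) → ℕ) (μ : ℕ → ℕ) (hν : ∀ l : Fin (m + K), μ l = ν l) :
    (∏ l ∈ Finset.univ.filter fun l : Fin (m + K) => m ≤ (l : ℕ), (ν l : ℝ)) =
      ∏ j ∈ Finset.range K, (μ (m + j) : ℝ) := by
  rw [Finset.prod_filter]
  simp only [← hν]
  rw [← Finset.prod_range fun l => if m ≤ l then (μ l : ℝ) else 1, Finset.prod_range_add,
    Finset.prod_eq_one fun l hl => by
      have := Finset.mem_range.1 hl
      rw [if_neg (by omega)]]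
  simp

lemma gS_congr (ν0 m : ℕ) (μ μ' : ℕ → ℕ) (h : ∀ l < m, μ l = μ' l) (K : ℕ) (κ : ℕ → ℕ) :
    gS ν0 m μ K κ = gS ν0 m μ' K κ := by
  ext w
  unfold gS St
  congr 1; ext k
  rw [Finset.prod_congr rfl fun l hl => by rw [h l (Finset.mem_range.1 hl)]]

theorem main_aux (m K ν0 : ℕ) (νs : Fin m → ℕ)
    (νbig : ℕ → Fin (m + K) → ℕ)
    (hfix : ∀ n : ℕ, ∀ l : Fin (m + K), ∀ h : (l : ℕ) < m, νbig n l = νs ⟨l, h⟩)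
    (hpos : ∀ n : ℕ, ∀ l : Fin (m + K), m ≤ (l : ℕ) → 0 < νbig n l)
    (htend : ∀ l : Fin (m + K), m ≤ (l : ℕ) → Tendsto (fun n => νbig n l) atTop atTop)
    (G2big : ℕ → ℂ → ℂ)
    (hG2bd : ∀ n, DifferentiableOn ℂ (G2big n) Complex.slitPlane)
    (hG2bv : ∀ n : ℕ, ∀ z : ℝ, 0 < z → G2big n (z : ℂ) = ∫ t in posOrth (m + K), Jf ν0 (νbig n) z t)
    (G2s : ℂ → ℂ)
    (hG2sd : DifferentiableOn ℂ G2s Complex.slitPlane)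
    (hG2sv : ∀ z : ℝ, 0 < z → G2s (z : ℂ) = ∫ t in posOrth m, Jf ν0 νs z t)
    (τ x y : ℝ) (hx : 0 < x) (hy : 0 < y) :
    Tendsto
      (fun n : ℕ =>
        (((∏ l ∈ Finset.univ.filter fun l : Fin (m + K) => m ≤ (l : ℕ),
            (νbig n l : ℝ)) : ℝ) : ℂ) *
          Kcrit (m + K) ν0 (νbig n) (G2big n) τ
            ((∏ l ∈ Finset.univ.filter fun l : Fin (m + K) => m ≤ (l : ℕ),
              (νbig n l : ℝ)) * x)
            ((∏ l ∈ Finset.univ.filter fun l : Fin (m + K) => m ≤ (l : ℕ),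
              (νbig n l : ℝ)) * y))
      atTop (𝓝 (Kcrit m ν0 νs G2s τ x y)) := by
  by_cases hbad : ∃ l, νs l < ν0
  · rw [Kcrit_zero ν0 νs hbad G2s hG2sd hG2sv τ x y hy]
    refine tendsto_const_nhds.congr fun n => ?_
    obtain ⟨l, hl⟩ := hbad
    have hcp : 0 < ∏ l ∈ Finset.univ.filter fun l : Fin (m + K) => m ≤ (l : ℕ), (νbig n l : ℝ) :=
      Finset.prod_pos fun l hl => by exact_mod_cast hpos n l (Finset.mem_filter.1 hl).2
    rw [Kcrit_zero ν0 (νbig n) ⟨⟨l, by have := l.2; omega⟩, by rw [hfix n _ l.2]; exact hl⟩ (G2big n)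
      (hG2bd n) (hG2bv n) τ _ _ (by positivity), mul_zero]
  push Not at hbad
  set μ : ℕ → ℕ → ℕ := fun n l => if h : l < m + K then νbig n ⟨l, h⟩ else 0 with hμdef
  set μs : ℕ → ℕ := fun l => if h : l < m then νs ⟨l, h⟩ else 0 with hμsdef
  have hμν : ∀ n, ∀ l : Fin (m + K), μ n l = νbig n l := fun n l => by simp [hμdef]
  have hμsν : ∀ l : Fin m, μs l = νs l := fun l => by simp [hμsdef]
  have hμμs : ∀ n, ∀ l < m, μ n l = μs l := fun n l hl => by
    rw [hμν n ⟨l, by omega⟩, hfix n _ hl, hμsν ⟨l, hl⟩]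
  have hμs : ∀ l < m, (ν0:ℝ) - 1/4 < μs l := fun l hl => by
    have : (ν0:ℝ) ≤ μs l := by rw [hμsν ⟨l, hl⟩]; exact_mod_cast hbad _
    linarith
  have hμ1 : ∀ n, ∀ j < K, 1 ≤ μ n (m + j) := fun n j hj => by
    rw [hμν n ⟨m + j, by omega⟩]; exact hpos n _ (by simp)
  have hκ : ∀ j < K, Tendsto (fun n => μ n (m + j)) atTop atTop := fun j hj => by
    refine (htend ⟨m + j, by omega⟩ (by simp)).congr fun n => ?_
    rw [hμν n ⟨m + j, by omega⟩]
  have hev : ∀ᶠ n in atTop, ∀ l < m + K, (ν0:ℝ) - 1/4 < μ n l := by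
    have : ∀ᶠ n in atTop, ∀ j ∈ Finset.range K, ν0 ≤ μ n (m + j) :=
      (Finset.range K).eventually_all.2 fun j hj => (hκ j (Finset.mem_range.1 hj)).eventually_ge_atTop ν0
    filter_upwards [this] with n hn l hl
    by_cases h : l < m
    · rw [hμμs n l h]; exact hμs l h
    · have := hn (l - m) (Finset.mem_range.2 (by omega))
      rw [show m + (l - m) = l by omega] at this
      have : (ν0:ℝ) ≤ μ n l := by exact_mod_cast this
      linarith
  have h0 : (0:ℝ) ≤ ν0 := by positivity
  obtain ⟨⟨A0, B0, hC0⟩, -⟩ := Gt_main ν0 μs ((ν0:ℝ) - 1/4) (by linarith) (by linarith) m hμs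
  obtain ⟨A, B, hC⟩ := ScIt_Cls_unif ν0 hC0 (fun n j => μ n (m + j)) K hκ
  have hlim : Kcrit m ν0 νs G2s τ x y = (2 * Real.pi * Complex.I)⁻¹ *
      ∫ u in Set.Ioi (0 : ℝ), ∫ t : ℝ, Kin ν0 (∑' k, St ν0 m μs (u * x) k)
        (fun _ => imV (Gt ν0 μs m) (t * y)) τ 1 u t := by
    have := Kscaled ν0 m 0 νs μs hμsν hμs (by simp) G2s hG2sd hG2sv τ x y hy 1 (by simp)
    simpa [gS, ScIt] using this
  rw [hlim]
  have hD := DCT ν0 (fun n u => gS ν0 m μs K (fun j => μ n (m + j)) (u * x))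
    (fun n t => imV (ScIt (Gt ν0 μs m) (fun j => μ n (m + j)) K) (t * y))
    (fun u => ∑' k, St ν0 m μs (u * x) k) (fun t => imV (Gt ν0 μs m) (t * y)) τ x
    (A * y ^ ((ν0:ℝ) - 1/4)) (B * y)
    (fun n => (gS_meas ν0 m μs K _).comp (measurable_id.mul_const x))
    (by filter_upwards [hC] with n hn
        exact (imV_meas hn).comp (measurable_id.mul_const y))
    (Eventually.of_forall fun n u hu => by
      refine (gS_norm ν0 m μs K (fun j => μ n (m + j)) (u * x)).trans (le_of_eq ?_)
      rw [abs_of_pos (by positivity), mul_comm u x])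
    (by filter_upwards [hC] with n hn t ht
        have := imV_bound hn (t * y) (mul_ne_zero ht hy.ne')
        rw [abs_mul, abs_of_pos hy, Real.mul_rpow (abs_nonneg _) hy.le] at this
        refine this.trans (le_of_eq ?_)
        rw [show B * (|t| * y) = B * y * |t| by ring]
        ring)
    (fun u _ => gS_tendsto ν0 m μs K (fun n j => μ n (m + j)) hκ (u * x))
    (fun t ht => by
      unfold imV
      split_ifs
      · exact ScIt_tendsto ν0 hC0 (fun n j => μ n (m + j)) K hκ _ (strip_mem _ _ hpi2)
      · exact ScIt_tendsto ν0 hC0 (fun n j => μ n (m + j)) K hκ _ (strip_mem _ _ hpi2'))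
  refine (hD.const_mul _).congr' ?_
  filter_upwards [hev] with n hn
  have hk := Kscaled ν0 m K (νbig n) (μ n) (hμν n) hn (hμ1 n) (G2big n) (hG2bd n) (hG2bv n) τ x y hy
    _ (prod_filter_big m K (νbig n) (μ n) (hμν n))
  rw [gS_congr ν0 m (μ n) μs (hμμs n), Gt_congr ν0 (μ n) μs m (hμμs n)] at hk
  exact hk.symm

/-- **Proposition 5.1** (confluence of critical kernels as `ν_{m+1},…,ν_r → ∞`). -/
theorem prop_5_1 (m r ν0 : ℕ) (hmr : m < r) (νs : Fin m → ℕ)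
    (νbig : ℕ → Fin r → ℕ)
    (hfix : ∀ n : ℕ, ∀ l : Fin r, ∀ h : (l : ℕ) < m, νbig n l = νs ⟨l, h⟩)
    (hpos : ∀ n : ℕ, ∀ l : Fin r, m ≤ (l : ℕ) → 0 < νbig n l)
    (htend : ∀ l : Fin r, m ≤ (l : ℕ) → Tendsto (fun n => νbig n l) atTop atTop)
    (G2big : ℕ → ℂ → ℂ)
    (hG2bd : ∀ n, DifferentiableOn ℂ (G2big n) Complex.slitPlane)
    (hG2bv : ∀ n : ℕ, ∀ z : ℝ, 0 < z → G2big n (z : ℂ) = ∫ t in posOrth r,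
      (((∏ l, (t l) ^ ((νbig n l : ℝ) - 1) * Real.exp (-t l)) : ℝ) : ℂ) *
        g0C ν0 ((z : ℂ) / ((∏ l, t l : ℝ) : ℂ)))
    (G2s : ℂ → ℂ)
    (hG2sd : DifferentiableOn ℂ G2s Complex.slitPlane)
    (hG2sv : ∀ z : ℝ, 0 < z → G2s (z : ℂ) = ∫ t in posOrth m,
      (((∏ l, (t l) ^ ((νs l : ℝ) - 1) * Real.exp (-t l)) : ℝ) : ℂ) *
        g0C ν0 ((z : ℂ) / ((∏ l, t l : ℝ) : ℂ)))
    (τ x y : ℝ) (hx : 0 < x) (hy : 0 < y) :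
    Tendsto
      (fun n : ℕ =>
        (((∏ l ∈ Finset.univ.filter fun l : Fin r => m ≤ (l : ℕ),
            (νbig n l : ℝ)) : ℝ) : ℂ) *
          Kcrit r ν0 (νbig n) (G2big n) τ
            ((∏ l ∈ Finset.univ.filter fun l : Fin r => m ≤ (l : ℕ),
              (νbig n l : ℝ)) * x)
            ((∏ l ∈ Finset.univ.filter fun l : Fin r => m ≤ (l : ℕ),
              (νbig n l : ℝ)) * y))
      atTop (𝓝 (Kcrit m ν0 νs G2s τ x y)) := by
  obtain ⟨K, rfl⟩ : ∃ K, r = m + K := ⟨r - m, by omega⟩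
  exact main_aux m K ν0 νs νbig hfix hpos htend G2big hG2bd hG2bv G2s hG2sd hG2sv τ x y hx hy

end
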